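/- arXiv:0904.0386 — 13 statements merged into one kernel-verified Lean document; each statement's English description precedes it below -/
import Mathlib

section
/- Let A be a symmetric unital Banach *-algebra over ℂ, let D be a *-subalgebra of A containing the unit 1, and let δ : D → A be a linear map satisfying the Leibniz rule δ(ab) = a δ(b) + δ(a) b for all a,b ∈ D and δ(a*) = δ(a)* for all a ∈ D. Assume δ is closed: whenever a_n ∈ D, a_n → a in A and δ(a_n) → b in A, then a ∈ D and δ(a) = b. Then D is inverse-closed in A: if a ∈ D is invertible in A, then a⁻¹ ∈ D; moreover the quotient rule δ(a⁻¹) = −a⁻¹ δ(a) a⁻¹ holds, and ‖a⁻¹‖_A + ‖δ(a⁻¹)‖_A ≤ ‖a⁻¹‖_A² (‖a‖_A + ‖δ(a)‖_A). -/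
/-!
Invert `a` through the positive element `h = star a * a ∈ D`. Symmetry of `A` and invertibility
put the spectrum of `h` in `(0, ‖h‖]`, so for `K > ‖h‖` the element `c = 1 - K⁻¹ • h` of `D` has
spectral radius `< 1`, and Gelfand's formula gives `‖c ^ n‖ ≤ C * r ^ n` with `r < 1`
(`exists_pow_bound`). The Leibniz rule gives `δ (c ^ (n + 1)) = ∑ c ^ i * δ c * c ^ (n - i)`, so
`δ (c ^ n) → 0` as well (`tendsto_leibniz_pow`). The partial sums of the Neumann series of
`(1 - c)⁻¹` therefore converge together with their images under `δ`, and closedness puts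
`(1 - c)⁻¹`, hence `h⁻¹` and `a⁻¹ = h⁻¹ * star a`, in `D`. Applying the Leibniz rule to
`a * a⁻¹ = 1` yields the quotient rule, and the norm estimate follows from it together with
`1 ≤ ‖a⁻¹‖ * ‖a‖`. Continuity of the involution is not needed.
-/

open Filter Topology

noncomputable section

/-- Powers decay geometrically when the spectrum lies in the open unit disc. -/
theorem exists_pow_bound {A : Type*} [NormedRing A] [NormedAlgebra ℂ A] [CompleteSpace A]
    [Nontrivial A] (c : A) (hc : ∀ z ∈ spectrum ℂ c, ‖z‖ < 1) :
    ∃ r : ℝ, 0 < r ∧ r < 1 ∧ ∃ C : ℝ, 0 < C ∧ ∀ n : ℕ, ‖c ^ n‖ ≤ C * r ^ n := by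
  have hrad : spectralRadius ℂ c < ((1 : NNReal) : ENNReal) :=
    spectrum.spectralRadius_lt_of_forall_lt c fun z hz => by
      have := hc z hz
      exact_mod_cast this
  obtain ⟨r, hr0, hr1⟩ := ENNReal.lt_iff_exists_nnreal_btwn.1 hrad
  have hr1' : r < 1 := by exact_mod_cast hr1
  have hrpos : 0 < r := by
    have : (0 : ENNReal) < r := lt_of_le_of_lt bot_le hr0
    exact_mod_cast this
  have hev := (spectrum.pow_nnnorm_pow_one_div_tendsto_nhds_spectralRadius c).eventually_lt_const hr0
  have hO : (fun n : ℕ => c ^ n) =O[atTop] fun n : ℕ => (r : ℝ) ^ n := by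
    refine Asymptotics.IsBigO.of_bound 1 ?_
    filter_upwards [hev, eventually_gt_atTop 0] with n hn hn0
    have hn' : (0 : ℝ) < n := by exact_mod_cast hn0
    have h1 : ((‖c ^ n‖₊ : ENNReal) ^ (1 / (n : ℝ))) ^ (n : ℝ) ≤ (r : ENNReal) ^ (n : ℝ) :=
      ENNReal.rpow_le_rpow hn.le hn'.le
    rw [← ENNReal.rpow_mul, one_div, inv_mul_cancel₀ hn'.ne', ENNReal.rpow_one,
      ENNReal.rpow_natCast] at h1
    have h2 : ‖c ^ n‖₊ ≤ r ^ n := by exact_mod_cast h1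
    have h3 : ‖c ^ n‖ ≤ (r : ℝ) ^ n := by exact_mod_cast h2
    simpa using h3
  obtain ⟨C, hC, hb⟩ := Asymptotics.bound_of_isBigO_nat_atTop hO
  have hr : (0 : ℝ) < r := by exact_mod_cast hrpos
  refine ⟨r, hr, by exact_mod_cast hr1', C, hC, fun n => ?_⟩
  have := hb (x := n) (pow_pos hr n).ne'
  rwa [Real.norm_of_nonneg (pow_pos hr n).le] at this

section Derivation

variable {A : Type*} [NormedRing A] [NormedAlgebra ℂ A] [StarRing A] [StarModule ℂ A]
  {D : StarSubalgebra ℂ A} {δ : D →ₗ[ℂ] A}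

theorem leibniz_one (hleibniz : ∀ a b : D, δ (a * b) = (a : A) * δ b + δ a * (b : A)) :
    δ 1 = 0 := by
  have h := hleibniz 1 1
  simpa using h

theorem leibniz_pow_succ (hleibniz : ∀ a b : D, δ (a * b) = (a : A) * δ b + δ a * (b : A))
    (c : D) (n : ℕ) :
    δ (c ^ (n + 1)) = ∑ i ∈ Finset.range (n + 1), (c : A) ^ i * δ c * (c : A) ^ (n - i) := by
  induction n with
  | zero => simp
  | succ n ih =>
    rw [pow_succ', hleibniz, ih, Finset.sum_range_succ' _ (n + 1), Finset.mul_sum]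
    congr 1
    · refine Finset.sum_congr rfl fun i _ => ?_
      rw [Nat.add_sub_add_right, pow_succ' (c : A) i]
      simp only [mul_assoc]
    · simp

theorem tendsto_leibniz_pow
    (hleibniz : ∀ a b : D, δ (a * b) = (a : A) * δ b + δ a * (b : A)) (c : D) {r C : ℝ}
    (hr0 : 0 < r) (hr1 : r < 1) (hC : 0 < C) (hb : ∀ n : ℕ, ‖(c : A) ^ n‖ ≤ C * r ^ n) :
    Tendsto (fun n : ℕ => δ (c ^ n)) atTop (𝓝 0) := by
  rw [← tendsto_add_atTop_iff_nat 1]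
  have hbound : ∀ n : ℕ,
      ‖δ (c ^ (n + 1))‖ ≤ C ^ 2 * ‖δ c‖ * ((n : ℝ) * r ^ n + r ^ n) := by
    intro n
    rw [leibniz_pow_succ hleibniz]
    have hterm : ∀ i ∈ Finset.range (n + 1),
        ‖(c : A) ^ i * δ c * (c : A) ^ (n - i)‖ ≤ C ^ 2 * ‖δ c‖ * r ^ n := by
      intro i hi
      have hin : i + (n - i) = n := by
        have := Finset.mem_range.1 hi
        omega
      calc ‖(c : A) ^ i * δ c * (c : A) ^ (n - i)‖
          ≤ ‖(c : A) ^ i‖ * ‖δ c‖ * ‖(c : A) ^ (n - i)‖ :=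
            (norm_mul_le _ _).trans (by gcongr; exact norm_mul_le _ _)
        _ ≤ (C * r ^ i) * ‖δ c‖ * (C * r ^ (n - i)) := by
            gcongr
            · exact hb i
            · exact hb (n - i)
        _ = C ^ 2 * ‖δ c‖ * r ^ (i + (n - i)) := by rw [pow_add]; ring
        _ = C ^ 2 * ‖δ c‖ * r ^ n := by rw [hin]
    refine (norm_sum_le_of_le _ hterm).trans (le_of_eq ?_)
    simp only [Finset.sum_const, Finset.card_range, nsmul_eq_mul, Nat.cast_add, Nat.cast_one]
    ring
  refine squeeze_zero_norm hbound ?_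
  have h := ((tendsto_self_mul_const_pow_of_lt_one hr0.le hr1).add
    (tendsto_pow_atTop_nhds_zero_of_lt_one hr0.le hr1)).const_mul (C ^ 2 * ‖δ c‖)
  simpa using h

/-- Neumann series: an inverse of `1 - c` lies in `D` when the spectrum of `c` lies in the open
unit disc. -/
theorem inverse_one_sub_mem [CompleteSpace A] [Nontrivial A]
    (hleibniz : ∀ a b : D, δ (a * b) = (a : A) * δ b + δ a * (b : A))
    (hclosed : ∀ (u : ℕ → D) (a b : A),
      Tendsto (fun n => ((u n : A))) atTop (𝓝 a) →
      Tendsto (fun n => δ (u n)) atTop (𝓝 b) →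
      ∃ ha : a ∈ D, δ ⟨a, ha⟩ = b)
    (c : D) (hc : ∀ z ∈ spectrum ℂ (c : A), ‖z‖ < 1) (w : A) (hw : (1 - (c : A)) * w = 1) :
    w ∈ D := by
  obtain ⟨r, hr0, hr1, C, hC, hb⟩ := exists_pow_bound (c : A) hc
  have hδ := tendsto_leibniz_pow hleibniz c hr0 hr1 hC hb
  have hpow : Tendsto (fun n : ℕ => (c : A) ^ n) atTop (𝓝 0) := by
    refine squeeze_zero_norm hb ?_
    simpa using (tendsto_pow_atTop_nhds_zero_of_lt_one hr0.le hr1).const_mul C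
  let s : ℕ → D := fun n => ∑ i ∈ Finset.range n, c ^ i
  have hs : ∀ n, s n * (1 - c) = 1 - c ^ n := fun n => geom_sum_mul_neg c n
  have hsA : ∀ n, (s n : A) = (1 - (c : A) ^ n) * w := by
    intro n
    have h : (s n : A) * (1 - (c : A)) = 1 - (c : A) ^ n := by
      exact_mod_cast congrArg (Subtype.val) (hs n)
    rw [← h, mul_assoc, hw, mul_one]
  have hslim : Tendsto (fun n => (s n : A)) atTop (𝓝 w) := by
    simp only [hsA]
    simpa using (hpow.const_sub 1).mul_const w
  -- Apply `δ` to the telescoped geometric sum and solve for `δ (s n)`.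
  have hδs : ∀ n, δ (s n) = (-δ (c ^ n) + (s n : A) * δ c) * w := by
    intro n
    have h := congrArg δ (hs n)
    rw [hleibniz, map_sub, map_sub, leibniz_one hleibniz] at h
    have h' : δ (s n) * (1 - (c : A)) = -δ (c ^ n) + (s n : A) * δ c := by
      have h1 : (((1 - c : D)) : A) = 1 - (c : A) := rfl
      rw [h1] at h
      rw [zero_sub, zero_sub, mul_neg] at h
      rw [← h]
      abel
    rw [← h', mul_assoc, hw, mul_one]
  have hδlim : Tendsto (fun n => δ (s n)) atTop (𝓝 ((-0 + w * δ c) * w)) := by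
    simp only [hδs]
    exact (hδ.neg.add (hslim.mul_const _)).mul_const _
  exact (hclosed s w _ hslim hδlim).1

/-- An element of `D` that is invertible in `A` and has nonnegative spectrum has its inverse
in `D`. -/
theorem inverse_mem_of_spectrum_nonneg [CompleteSpace A] [NormOneClass A]
    (hleibniz : ∀ a b : D, δ (a * b) = (a : A) * δ b + δ a * (b : A))
    (hclosed : ∀ (u : ℕ → D) (a b : A),
      Tendsto (fun n => ((u n : A))) atTop (𝓝 a) →
      Tendsto (fun n => δ (u n)) atTop (𝓝 b) →
      ∃ ha : a ∈ D, δ ⟨a, ha⟩ = b)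
    (h : D) (hspec : spectrum ℂ (h : A) ⊆ {z : ℂ | ∃ x : ℝ, 0 ≤ x ∧ z = (x : ℂ)})
    (k : A) (hk : (h : A) * k = 1) (hk' : k * (h : A) = 1) : k ∈ D := by
  have : Nontrivial A := NormOneClass.nontrivial
  obtain ⟨K, hK⟩ : ∃ K : ℝ, ‖(h : A)‖ < K := exists_gt _
  have hK0 : 0 < K := (norm_nonneg _).trans_lt hK
  have hKc : (K : ℂ) ≠ 0 := by exact_mod_cast hK0.ne'
  have hunit : IsUnit (h : A) := ⟨⟨h, k, hk, hk'⟩, rfl⟩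
  let c : D := 1 - (K : ℂ)⁻¹ • h
  have hcA : (c : A) = 1 - (K : ℂ)⁻¹ • (h : A) := rfl
  have hc : ∀ z ∈ spectrum ℂ (c : A), ‖z‖ < 1 := by
    intro z hz
    -- The spectral mapping `z ↦ K * (1 - z)`, checked directly on resolvents.
    have hz' : (K : ℂ) * (1 - z) ∈ spectrum ℂ (h : A) := by
      rw [spectrum.mem_iff] at hz ⊢
      intro hu
      apply hz
      have he : algebraMap ℂ A z - (c : A)
          = (algebraMap ℂ A (-(K : ℂ)⁻¹)) *
            (algebraMap ℂ A ((K : ℂ) * (1 - z)) - (h : A)) := by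
        rw [hcA, mul_sub, ← map_mul, ← Algebra.smul_def]
        have : -(K : ℂ)⁻¹ * ((K : ℂ) * (1 - z)) = z - 1 := by
          field_simp
          ring
        rw [this, map_sub, map_one, neg_smul]
        abel
      rw [he]
      exact ((IsUnit.mk0 _ (neg_ne_zero.2 (inv_ne_zero hKc))).map (algebraMap ℂ A)).mul hu
    obtain ⟨x, hx0, hx⟩ := hspec hz'
    have hxne : x ≠ 0 := by
      rintro rfl
      rw [hx, Complex.ofReal_zero] at hz'
      exact spectrum.zero_notMem ℂ hunit hz'
    have hxK : x < K := by
      have := spectrum.norm_le_norm_of_mem hz'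
      rw [hx, Complex.norm_real, Real.norm_of_nonneg hx0] at this
      exact this.trans_lt hK
    have hzx : z = ((1 - x / K : ℝ) : ℂ) := by
      push_cast
      rw [← hx]
      field_simp
      ring
    have hxpos : 0 < x / K := div_pos (lt_of_le_of_ne hx0 hxne.symm) hK0
    have hxlt : x / K < 1 := (div_lt_one hK0).2 hxK
    rw [hzx, Complex.norm_real, Real.norm_of_nonneg (by linarith)]
    linarith
  have hw : (1 - (c : A)) * ((K : ℂ) • k) = 1 := by
    rw [hcA, sub_sub_cancel, smul_mul_smul_comm, inv_mul_cancel₀ hKc, hk, one_smul]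
  have hmem := inverse_one_sub_mem hleibniz hclosed c hc _ hw
  have := D.smul_mem hmem (K : ℂ)⁻¹
  rwa [smul_smul, inv_mul_cancel₀ hKc, one_smul] at this

end Derivation

/-- The domain of a closed symmetric derivation (with unit in its domain,
here: defined on a star subalgebra `D`) of a symmetric unital Banach *-algebra is
inverse-closed, the quotient rule holds, and the norm of the inverse is controlled. -/
theorem derivation_domain_inverse_closed
    {A : Type*} [NormedRing A] [NormedAlgebra ℂ A] [CompleteSpace A] [NormOneClass A]
    [StarRing A] [StarModule ℂ A]
    (hsym : ∀ a : A, spectrum ℂ (star a * a) ⊆ {z : ℂ | ∃ x : ℝ, 0 ≤ x ∧ z = (x : ℂ)})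
    (D : StarSubalgebra ℂ A)
    (δ : D →ₗ[ℂ] A)
    (hleibniz : ∀ a b : D, δ (a * b) = (a : A) * δ b + δ a * (b : A))
    (hstar : ∀ a : D, δ (star a) = star (δ a))
    (hclosed : ∀ (u : ℕ → D) (a b : A),
      Tendsto (fun n => ((u n : A))) atTop (𝓝 a) →
      Tendsto (fun n => δ (u n)) atTop (𝓝 b) →
      ∃ ha : a ∈ D, δ ⟨a, ha⟩ = b) :
    ∀ (a : D) (b : A), (a : A) * b = 1 → b * (a : A) = 1 →
      ∃ hb : b ∈ D,
        δ ⟨b, hb⟩ = -(b * δ a * b) ∧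
        ‖b‖ + ‖δ ⟨b, hb⟩‖ ≤ ‖b‖ ^ 2 * (‖(a : A)‖ + ‖δ a‖) := by
  intro a b hab hba
  have hsab : star b * star (a : A) = 1 := by rw [← star_mul, hab, star_one]
  have hsba : star (a : A) * star b = 1 := by rw [← star_mul, hba, star_one]
  have hk : b * star b ∈ D := by
    refine inverse_mem_of_spectrum_nonneg hleibniz hclosed (star a * a) (hsym a) _ ?_ ?_
    · change star (a : A) * (a : A) * (b * star b) = 1
      rw [mul_assoc, ← mul_assoc (a : A), hab, one_mul, hsba]
    · change b * star b * (star (a : A) * (a : A)) = 1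
      rw [mul_assoc, ← mul_assoc (star b), hsab, one_mul, hba]
  have hb : b ∈ D := by
    have h := mul_mem hk (star_mem a.2)
    rwa [mul_assoc, hsab, mul_one] at h
  have hq : δ ⟨b, hb⟩ = -(b * δ a * b) := by
    have h := hleibniz a ⟨b, hb⟩
    have h1 : a * ⟨b, hb⟩ = (1 : D) := Subtype.ext hab
    rw [h1, leibniz_one hleibniz] at h
    have h2 : (a : A) * δ ⟨b, hb⟩ = -(δ a * b) := eq_neg_of_add_eq_zero_left h.symm
    calc δ ⟨b, hb⟩ = b * ((a : A) * δ ⟨b, hb⟩) := by rw [← mul_assoc, hba, one_mul]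
      _ = -(b * δ a * b) := by rw [h2, mul_neg, mul_assoc]
  refine ⟨hb, hq, ?_⟩
  have h1 : 1 ≤ ‖b‖ * ‖(a : A)‖ := by
    have := norm_mul_le b (a : A)
    rwa [hba, norm_one] at this
  have h2 : ‖b‖ ≤ ‖b‖ ^ 2 * ‖(a : A)‖ := by
    have := mul_le_mul_of_nonneg_left h1 (norm_nonneg b)
    linarith
  have h3 : ‖δ ⟨b, hb⟩‖ ≤ ‖b‖ ^ 2 * ‖δ a‖ := by
    rw [hq, norm_neg]
    calc ‖b * δ a * b‖ ≤ ‖b‖ * ‖δ a‖ * ‖b‖ :=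
          (norm_mul_le _ _).trans (by gcongr; exact norm_mul_le _ _)
      _ = ‖b‖ ^ 2 * ‖δ a‖ := by ring
  linarith
end
end

section
/- Let A be a unital complex Banach algebra and Ψ = (ψ_t)_{t∈ℝ^d} a uniformly bounded d-parameter group of algebra automorphisms of A. Define C(A) = { a ∈ A : ‖ψ_t(a) − a‖_A → 0 as t → 0 }. Then C(A) is a closed subalgebra of A (containing 1), and C(A) is inverse-closed in A: if a ∈ C(A) is invertible in A, then a⁻¹ ∈ C(A). -/
/-!
The uniform bound `‖ψ t‖ ≤ M` makes the family `ψ` equicontinuous, and for an equicontinuous family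
the set of points at which it converges to a given continuous function (here, the identity) is
closed. The algebraic closure properties are the continuity of the algebra operations, since each
`ψ t` is a unital algebra homomorphism. For inverses, `ψ t b` is the inverse of `ψ t a` whenever `b`
is the inverse of `a`, and inversion in a complete normed ring is continuous at units, so
`ψ t a → a` implies `ψ t b → b`.
-/

open Filter Topology

noncomputable section

/-- The set of strongly continuous elements of `A` with respect to a family of bounded
operators `ψ` indexed by `ℝ^d`. -/
def stronglyContinuousElements {A : Type*} [NormedRing A] [NormedAlgebra ℂ A] (d : ℕ)
    (ψ : (Fin d → ℝ) → A →L[ℂ] A) : Set A :=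
  {a : A | Tendsto (fun t => ψ t a) (𝓝 0) (𝓝 a)}

/-- For a uniformly bounded `d`-parameter automorphism group `ψ` on a unital
complex Banach algebra `A`, the set `C(A)` of strongly continuous elements is a closed
subalgebra of `A` containing `1`, and it is inverse-closed in `A`. -/
theorem stronglyContinuousElements_closed_subalgebra_inverse_closed
    {A : Type*} [NormedRing A] [NormedAlgebra ℂ A] [CompleteSpace A] [NormOneClass A]
    (d : ℕ) (ψ : (Fin d → ℝ) → A →L[ℂ] A)
    (hmul : ∀ t (a b : A), ψ t (a * b) = ψ t a * ψ t b)
    (hone : ∀ t, ψ t 1 = 1)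
    (hgroup : ∀ s t, (ψ s).comp (ψ t) = ψ (s + t))
    (hzero : ψ 0 = ContinuousLinearMap.id ℂ A)
    (M : ℝ) (hM : ∀ t, ‖ψ t‖ ≤ M) :
    IsClosed (stronglyContinuousElements d ψ) ∧
    (1 : A) ∈ stronglyContinuousElements d ψ ∧
    (∀ a ∈ stronglyContinuousElements d ψ, ∀ b ∈ stronglyContinuousElements d ψ,
      a + b ∈ stronglyContinuousElements d ψ ∧ a * b ∈ stronglyContinuousElements d ψ) ∧
    (∀ (c : ℂ), ∀ a ∈ stronglyContinuousElements d ψ,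
      c • a ∈ stronglyContinuousElements d ψ) ∧
    (∀ a ∈ stronglyContinuousElements d ψ, ∀ b : A,
      a * b = 1 → b * a = 1 → b ∈ stronglyContinuousElements d ψ) := by
  refine ⟨?_, ?_, ?_, ?_, ?_⟩
  · have heq : Equicontinuous fun t => (ψ t : A → A) :=
      ((NormedSpace.equicontinuous_TFAE ψ).out 5 1 :
        (∃ C, ∀ t, ‖ψ t‖ ≤ C) ↔ Equicontinuous fun t => (ψ t : A → A)).mp ⟨M, hM⟩
    exact heq.isClosed_setOfPred_tendsto continuous_id
  · simp [stronglyContinuousElements, hone]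
  · intro a ha b hb
    simp only [stronglyContinuousElements, Set.mem_ofPred_eq, map_add, hmul] at *
    exact ⟨ha.add hb, ha.mul hb⟩
  · intro c a ha
    simp only [stronglyContinuousElements, Set.mem_ofPred_eq, map_smul] at *
    exact ha.const_smul c
  · intro a ha b hab hba
    simp only [stronglyContinuousElements, Set.mem_ofPred_eq] at *
    have hinv : ∀ t, Ring.inverse (ψ t a) = ψ t b := fun t =>
      Ring.inverse_unit ⟨ψ t a, ψ t b, by rw [← hmul, hab, hone], by rw [← hmul, hba, hone]⟩
    let u : Aˣ := ⟨a, b, hab, hba⟩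
    have hcont : Tendsto Ring.inverse (𝓝 a) (𝓝 b) := by
      have h := (NormedRing.inverse_continuousAt u).tendsto
      rwa [Ring.inverse_unit] at h
    simpa only [Function.comp_def, hinv] using hcont.comp ha
end
end

section
/- Let A be a unital complex Banach algebra and Ψ = (ψ_t)_{t∈ℝ^d} a uniformly bounded d-parameter group of algebra automorphisms of A. For 0 < r ≤ 1 define the Hölder–Zygmund space Λ_r(A) = { a ∈ A : |a|_{Λ_r} = sup_{t≠0} |t|^{−r} ‖ψ_{2t}(a) − 2ψ_t(a) + a‖_A < ∞ } with norm ‖a‖_{Λ_r} = ‖a‖_A + |a|_{Λ_r}. Then (i) Λ_r(A) is a subalgebra of A and there is a constant C > 0 such that ‖ab‖_{Λ_r} ≤ C ‖a‖_{Λ_r} ‖b‖_{Λ_r} for all a,b ∈ Λ_r(A); and (ii) Λ_r(A) is inverse-closed in A: if a ∈ Λ_r(A) is invertible in A, then a⁻¹ ∈ Λ_r(A). -/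
/-! Write `Δ_t = ψ_t - 1`, so that the seminorm measures `Δ_t²`. Multiplicativity of `ψ_t` gives the
Leibniz rule `Δ_t²(ab) = 2 Δ_t a Δ_t b + Δ_t²a ψ_{2t}(b) + (2ψ_t(a) - a) Δ_t²b`, in which only
`Δ_t a Δ_t b` is not controlled directly by the second differences. It suffices to bound each first
difference by `C |t|^{r/2}`. Since `r/2 ≤ 1/2 < 1`, such a bound (a weak Marchaud inequality) holds
up to and including `r = 1`: from `2 Δ_t = Δ_{2t} - Δ_t²` it propagates from `2t` to `t` with the
same constant, and for `|t| ≥ 1` it follows from uniform boundedness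
(`norm_sub_le_of_secondDiff`). This gives the algebra property with an explicit
constant (`norm_secondDiff_mul_le`).

For an inverse `b` of `a`, `Δ_t b = -ψ_t(b) Δ_t a b` also has order `|t|^{r/2}`. Regrouping the
Leibniz rule as `0 = Δ_t²(ab) = 2 Δ_t a Δ_t b + Δ_t²a (2ψ_t(b) - b) + ψ_{2t}(a) Δ_t²b` and
multiplying on the left by `ψ_{2t}(b)`, the inverse of `ψ_{2t}(a)`, expresses `Δ_t²b` by terms of
order `|t|^r`. -/

open Filter Topology

noncomputable section

/-- Membership in the Hölder–Zygmund space `Λ_r(A)`: the second-order difference seminorm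
`sup_{t ≠ 0} |t|^{-r} ‖ψ_{2t}(a) - 2ψ_t(a) + a‖` is finite (`|t|` is the 1-norm). -/
def MemHolderZygmund {A : Type*} [NormedRing A] [NormedAlgebra ℂ A] (d : ℕ)
    (ψ : (Fin d → ℝ) → A →L[ℂ] A) (r : ℝ) (a : A) : Prop :=
  ∃ K : ℝ, ∀ t : Fin d → ℝ, t ≠ 0 →
    ‖ψ (t + t) a - 2 • ψ t a + a‖ ≤ K * (∑ j, |t j|) ^ r

/-- The Hölder–Zygmund norm `‖a‖_{Λ_r} = ‖a‖_A + sup_{t ≠ 0} |t|^{-r} ‖ψ_{2t}(a) - 2ψ_t(a) + a‖`. -/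
noncomputable def holderZygmundNorm {A : Type*} [NormedRing A] [NormedAlgebra ℂ A] (d : ℕ)
    (ψ : (Fin d → ℝ) → A →L[ℂ] A) (r : ℝ) (a : A) : ℝ :=
  ‖a‖ + ⨆ t : {t : Fin d → ℝ // t ≠ 0},
    (∑ j, |t.1 j|) ^ (-r) * ‖ψ (t.1 + t.1) a - 2 • ψ t.1 a + a‖

/-- The 1-norm on `Fin d → ℝ`, which carries the sup norm by default. -/
def oneNorm {d : ℕ} (t : Fin d → ℝ) : ℝ := ∑ j, |t j|

theorem oneNorm_pos {d : ℕ} {t : Fin d → ℝ} (ht : t ≠ 0) : 0 < oneNorm t := by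
  obtain ⟨j, hj⟩ := Function.ne_iff.mp ht
  exact Finset.sum_pos' (fun i _ => abs_nonneg _) ⟨j, Finset.mem_univ _, abs_pos.mpr hj⟩

theorem oneNorm_add_self {d : ℕ} (t : Fin d → ℝ) : oneNorm (t + t) = 2 * oneNorm t := by
  unfold oneNorm
  rw [Finset.mul_sum]
  refine Finset.sum_congr rfl fun j _ => ?_
  rw [Pi.add_apply, ← two_mul, abs_mul, abs_two]

theorem oneNorm_rpow_half_mul_self {d : ℕ} {t : Fin d → ℝ} (ht : t ≠ 0) (r : ℝ) :
    oneNorm t ^ (r / 2) * oneNorm t ^ (r / 2) = oneNorm t ^ r := by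
  rw [← Real.rpow_add (oneNorm_pos ht), add_halves]

theorem norm_apply_le_of_norm_le {A : Type*} [NormedRing A] [NormedAlgebra ℂ A] {d : ℕ}
    {ψ : (Fin d → ℝ) → A →L[ℂ] A} {M : ℝ} (hM : ∀ t, ‖ψ t‖ ≤ M) (t : Fin d → ℝ) (a : A) :
    ‖ψ t a‖ ≤ M * ‖a‖ :=
  (ψ t).le_of_opNorm_le (hM t) a

/-- A bound of order `|t|^r` on second differences forces a bound of order `|t|^{r/2}` on first
differences. The exponent is halved in order to stay below `1` when `r = 1`, where a bound of
order `|t|` is false in general. -/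
theorem norm_sub_le_of_secondDiff {A : Type*} [NormedRing A] [NormedAlgebra ℂ A] {d : ℕ}
    {ψ : (Fin d → ℝ) → A →L[ℂ] A} {M : ℝ} (hM : ∀ t, ‖ψ t‖ ≤ M)
    {r : ℝ} (hr0 : 0 < r) (hr1 : r ≤ 1) {a : A} {K : ℝ} (hK : 0 ≤ K)
    (ha : ∀ t : Fin d → ℝ, t ≠ 0 → ‖ψ (t + t) a - 2 • ψ t a + a‖ ≤ K * oneNorm t ^ r)
    (t : Fin d → ℝ) (ht : t ≠ 0) :
    ‖ψ t a - a‖ ≤ ((M + 1) * ‖a‖ + 2 * K) * oneNorm t ^ (r / 2) := by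
  have hM0 : 0 ≤ M := (norm_nonneg _).trans (hM 0)
  have hB : 0 ≤ (M + 1) * ‖a‖ := by positivity
  set C := (M + 1) * ‖a‖ + 2 * K with hC
  have hbase : ∀ t : Fin d → ℝ, 1 ≤ oneNorm t → ‖ψ t a - a‖ ≤ C * oneNorm t ^ (r / 2) := by
    intro t h1
    have h2 : 1 ≤ oneNorm t ^ (r / 2) := Real.one_le_rpow h1 (by linarith)
    have h3 : ‖ψ t a - a‖ ≤ (M + 1) * ‖a‖ := by
      have := norm_sub_le (ψ t a) a
      have := norm_apply_le_of_norm_le hM t a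
      linarith
    nlinarith
  have hind : ∀ n : ℕ, ∀ t : Fin d → ℝ, t ≠ 0 → 1 ≤ 2 ^ n * oneNorm t →
      ‖ψ t a - a‖ ≤ C * oneNorm t ^ (r / 2) := by
    intro n
    induction n with
    | zero => intro t _ h1; exact hbase t (by simpa using h1)
    | succ n ih =>
      intro t ht h1
      rcases le_total 1 (oneNorm t) with h | h
      · exact hbase t h
      have hq := oneNorm_pos ht
      have htt : t + t ≠ 0 := by
        intro h0
        have := oneNorm_add_self t
        rw [h0] at this
        simp [oneNorm] at this
        exact hq.ne' (by simpa [oneNorm] using this)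
      have h2 := ih (t + t) htt (by rw [oneNorm_add_self]; rw [pow_succ] at h1; linarith)
      rw [oneNorm_add_self, Real.mul_rpow (by norm_num) hq.le] at h2
      -- `r / 2 ≤ 1 / 2` and `√2 ≤ 3 / 2`: halving `t` gains a factor `2^{r/2} / 2 ≤ 3 / 4`.
      have h3 : (2 : ℝ) ^ (r / 2) ≤ 3 / 2 := by
        calc (2 : ℝ) ^ (r / 2) ≤ 2 ^ (1 / 2 : ℝ) :=
              Real.rpow_le_rpow_of_exponent_le (by norm_num) (by linarith)
          _ = √2 := (Real.sqrt_eq_rpow 2).symm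
          _ ≤ 3 / 2 := by rw [Real.sqrt_le_left (by norm_num)]; norm_num
      have h4 : oneNorm t ^ r ≤ oneNorm t ^ (r / 2) :=
        Real.rpow_le_rpow_of_exponent_ge hq h (by linarith)
      have h5 : (0 : ℝ) ≤ oneNorm t ^ (r / 2) := by positivity
      have h6 : 2 * ‖ψ t a - a‖ ≤ ‖ψ (t + t) a - a‖ + ‖ψ (t + t) a - 2 • ψ t a + a‖ := by
        have h7 : (2 : ℝ) * ‖ψ t a - a‖ = ‖(2 : ℂ) • (ψ t a - a)‖ := by simp [norm_smul]
        rw [h7]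
        refine le_trans (le_of_eq ?_) (norm_sub_le _ _)
        congr 1
        rw [ofNat_smul_eq_nsmul ℂ 2]
        abel
      have h8 := ha t ht
      have h9 : C * (2 ^ (r / 2) * oneNorm t ^ (r / 2)) ≤ C * (3 / 2 * oneNorm t ^ (r / 2)) := by
        gcongr
      have h10 : K * oneNorm t ^ r ≤ K * oneNorm t ^ (r / 2) := by gcongr
      have h11 : 0 ≤ (M + 1) * ‖a‖ * oneNorm t ^ (r / 2) := by positivity
      rw [hC] at h9 h2 ⊢
      nlinarith
  obtain ⟨n, hn⟩ := pow_unbounded_of_one_lt (oneNorm t)⁻¹ (one_lt_two (α := ℝ))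
  exact hind n t ht ((inv_le_iff_one_le_mul₀ (oneNorm_pos ht)).mp hn.le)

theorem norm_two_nsmul_sub_le {A : Type*} [NormedRing A] [NormedAlgebra ℂ A] {d : ℕ}
    {ψ : (Fin d → ℝ) → A →L[ℂ] A} {M : ℝ} (hM : ∀ t, ‖ψ t‖ ≤ M) (t : Fin d → ℝ) (a : A) :
    ‖2 • ψ t a - a‖ ≤ (2 * M + 1) * ‖a‖ := by
  have h1 := norm_sub_le (2 • ψ t a) a
  have h2 : ‖2 • ψ t a‖ ≤ 2 * ‖ψ t a‖ := by
    rw [two_nsmul, two_mul]; exact norm_add_le _ _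
  have h3 := norm_apply_le_of_norm_le hM t a
  linarith

theorem norm_two_nsmul_mul_le {A : Type*} [NormedRing A] (x y : A) :
    ‖2 • (x * y)‖ ≤ 2 * (‖x‖ * ‖y‖) := by
  rw [two_nsmul, two_mul]
  exact (norm_add_le _ _).trans (add_le_add (norm_mul_le _ _) (norm_mul_le _ _))

/-- The quantitative algebra property, from the Leibniz rule for second differences. -/
theorem norm_secondDiff_mul_le {A : Type*} [NormedRing A] [NormedAlgebra ℂ A] {d : ℕ}
    {ψ : (Fin d → ℝ) → A →L[ℂ] A} (hmul : ∀ t (a b : A), ψ t (a * b) = ψ t a * ψ t b)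
    {M : ℝ} (hM : ∀ t, ‖ψ t‖ ≤ M)
    {r : ℝ} (hr0 : 0 < r) (hr1 : r ≤ 1) {a b : A} {K L : ℝ} (hK : 0 ≤ K) (hL : 0 ≤ L)
    (ha : ∀ t : Fin d → ℝ, t ≠ 0 → ‖ψ (t + t) a - 2 • ψ t a + a‖ ≤ K * oneNorm t ^ r)
    (hb : ∀ t : Fin d → ℝ, t ≠ 0 → ‖ψ (t + t) b - 2 • ψ t b + b‖ ≤ L * oneNorm t ^ r)
    (t : Fin d → ℝ) (ht : t ≠ 0) :
    ‖ψ (t + t) (a * b) - 2 • ψ t (a * b) + a * b‖ ≤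
      (2 * (((M + 1) * ‖a‖ + 2 * K) * ((M + 1) * ‖b‖ + 2 * L)) + K * (M * ‖b‖)
        + (2 * M + 1) * ‖a‖ * L) * oneNorm t ^ r := by
  have hM0 : 0 ≤ M := (norm_nonneg _).trans (hM 0)
  have hq := oneNorm_pos ht
  have h1 := norm_sub_le_of_secondDiff hM hr0 hr1 hK ha t ht
  have h2 := norm_sub_le_of_secondDiff hM hr0 hr1 hL hb t ht
  have leibniz : ψ (t + t) (a * b) - 2 • ψ t (a * b) + a * b =
      2 • ((ψ t a - a) * (ψ t b - b)) + (ψ (t + t) a - 2 • ψ t a + a) * ψ (t + t) b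
        + (2 • ψ t a - a) * (ψ (t + t) b - 2 • ψ t b + b) := by
    rw [hmul, hmul]
    noncomm_ring
  have e1 : ‖2 • ((ψ t a - a) * (ψ t b - b))‖ ≤
      2 * ((((M + 1) * ‖a‖ + 2 * K) * oneNorm t ^ (r / 2))
        * (((M + 1) * ‖b‖ + 2 * L) * oneNorm t ^ (r / 2))) :=
    (norm_two_nsmul_mul_le _ _).trans (by gcongr)
  have e2 : ‖(ψ (t + t) a - 2 • ψ t a + a) * ψ (t + t) b‖ ≤ K * oneNorm t ^ r * (M * ‖b‖) :=
    norm_mul_le_of_le (ha t ht) (norm_apply_le_of_norm_le hM _ _)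
  have e3 : ‖(2 • ψ t a - a) * (ψ (t + t) b - 2 • ψ t b + b)‖ ≤
      (2 * M + 1) * ‖a‖ * (L * oneNorm t ^ r) :=
    norm_mul_le_of_le (norm_two_nsmul_sub_le hM t a) (hb t ht)
  rw [leibniz]
  refine (norm_add₃_le).trans ((add_le_add (add_le_add e1 e2) e3).trans (le_of_eq ?_))
  rw [← oneNorm_rpow_half_mul_self ht r]
  ring

/-- Inverse-closedness, in quantitative form: the Leibniz rule for `a * b = 1` is solved for the
second difference of `b`. -/
theorem norm_secondDiff_inverse_le {A : Type*} [NormedRing A] [NormedAlgebra ℂ A] {d : ℕ}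
    {ψ : (Fin d → ℝ) → A →L[ℂ] A} (hmul : ∀ t (a b : A), ψ t (a * b) = ψ t a * ψ t b)
    (hone : ∀ t, ψ t 1 = 1) {M : ℝ} (hM : ∀ t, ‖ψ t‖ ≤ M)
    {r : ℝ} (hr0 : 0 < r) (hr1 : r ≤ 1) {a b : A} (hab : a * b = 1) (hba : b * a = 1)
    {K : ℝ} (hK : 0 ≤ K)
    (ha : ∀ t : Fin d → ℝ, t ≠ 0 → ‖ψ (t + t) a - 2 • ψ t a + a‖ ≤ K * oneNorm t ^ r)
    (t : Fin d → ℝ) (ht : t ≠ 0) :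
    ‖ψ (t + t) b - 2 • ψ t b + b‖ ≤
      (M * ‖b‖ * (2 * (((M + 1) * ‖a‖ + 2 * K) * (M * ‖b‖ * ((M + 1) * ‖a‖ + 2 * K) * ‖b‖))
        + K * ((2 * M + 1) * ‖b‖))) * oneNorm t ^ r := by
  have hM0 : 0 ≤ M := (norm_nonneg _).trans (hM 0)
  have hq := oneNorm_pos ht
  have h1 := norm_sub_le_of_secondDiff hM hr0 hr1 hK ha t ht
  have hTab : ∀ t, ψ t a * ψ t b = 1 := fun t => by rw [← hmul, hab, hone]
  have hTba : ∀ t, ψ t b * ψ t a = 1 := fun t => by rw [← hmul, hba, hone]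
  have first : ψ t b - b = -(ψ t b * (ψ t a - a) * b) := by
    rw [mul_sub, hTba, sub_mul, mul_assoc, hab]
    simp
  have h2 : ‖ψ t b - b‖ ≤
      M * ‖b‖ * (((M + 1) * ‖a‖ + 2 * K) * oneNorm t ^ (r / 2)) * ‖b‖ := by
    rw [first, norm_neg]
    exact norm_mul_le_of_le (norm_mul_le_of_le (norm_apply_le_of_norm_le hM _ _) h1) le_rfl
  have leibniz : ψ (t + t) a * (ψ (t + t) b - 2 • ψ t b + b) =
      -(2 • ((ψ t a - a) * (ψ t b - b))
        + (ψ (t + t) a - 2 • ψ t a + a) * (2 • ψ t b - b)) := by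
    have key : ψ (t + t) a * (ψ (t + t) b - 2 • ψ t b + b) =
        -(2 • ((ψ t a - a) * (ψ t b - b))
          + (ψ (t + t) a - 2 • ψ t a + a) * (2 • ψ t b - b))
        + (ψ (t + t) a * ψ (t + t) b - 2 • (ψ t a * ψ t b) + a * b) := by
      noncomm_ring
    rw [key, hTab, hTab, hab]
    noncomm_ring
  have second : ψ (t + t) b - 2 • ψ t b + b =
      ψ (t + t) b * -(2 • ((ψ t a - a) * (ψ t b - b))
        + (ψ (t + t) a - 2 • ψ t a + a) * (2 • ψ t b - b)) := by
    rw [← leibniz, ← mul_assoc, hTba, one_mul]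
  have e1 : ‖2 • ((ψ t a - a) * (ψ t b - b))‖ ≤
      2 * ((((M + 1) * ‖a‖ + 2 * K) * oneNorm t ^ (r / 2))
        * (M * ‖b‖ * (((M + 1) * ‖a‖ + 2 * K) * oneNorm t ^ (r / 2)) * ‖b‖)) :=
    (norm_two_nsmul_mul_le _ _).trans (by gcongr)
  have e2 : ‖(ψ (t + t) a - 2 • ψ t a + a) * (2 • ψ t b - b)‖ ≤
      K * oneNorm t ^ r * ((2 * M + 1) * ‖b‖) :=
    norm_mul_le_of_le (ha t ht) (norm_two_nsmul_sub_le hM t b)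
  rw [second]
  refine (norm_mul_le_of_le (norm_apply_le_of_norm_le hM _ _)
    ((norm_neg _).le.trans (norm_add_le_of_le e1 e2))).trans (le_of_eq ?_)
  rw [← oneNorm_rpow_half_mul_self ht r]
  ring

theorem MemHolderZygmund.exists_nonneg {A : Type*} [NormedRing A] [NormedAlgebra ℂ A] {d : ℕ}
    {ψ : (Fin d → ℝ) → A →L[ℂ] A} {r : ℝ} {a : A} (h : MemHolderZygmund d ψ r a) :
    ∃ K : ℝ, 0 ≤ K ∧ ∀ t : Fin d → ℝ, t ≠ 0 →
      ‖ψ (t + t) a - 2 • ψ t a + a‖ ≤ K * oneNorm t ^ r := by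
  obtain ⟨K, hK⟩ := h
  refine ⟨max K 0, le_max_right _ _, fun t ht => (hK t ht).trans ?_⟩
  have := oneNorm_pos ht
  exact mul_le_mul_of_nonneg_right (le_max_left _ _) (Real.rpow_nonneg this.le _)

/-- The seminorm part of `holderZygmundNorm`. -/
def holderZygmundSeminorm {A : Type*} [NormedRing A] [NormedAlgebra ℂ A] {d : ℕ}
    (ψ : (Fin d → ℝ) → A →L[ℂ] A) (r : ℝ) (a : A) : ℝ :=
  ⨆ t : {t : Fin d → ℝ // t ≠ 0},
    oneNorm t.1 ^ (-r) * ‖ψ (t.1 + t.1) a - 2 • ψ t.1 a + a‖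

theorem holderZygmundSeminorm_nonneg {A : Type*} [NormedRing A] [NormedAlgebra ℂ A] {d : ℕ}
    (ψ : (Fin d → ℝ) → A →L[ℂ] A) (r : ℝ) (a : A) : 0 ≤ holderZygmundSeminorm ψ r a :=
  Real.iSup_nonneg fun t =>
    mul_nonneg (Real.rpow_nonneg (oneNorm_pos t.2).le _) (norm_nonneg _)

theorem rpow_neg_mul_le_iff {q x K : ℝ} (hq : 0 < q) (r : ℝ) :
    q ^ (-r) * x ≤ K ↔ x ≤ K * q ^ r := by
  rw [Real.rpow_neg hq.le, inv_mul_le_iff₀ (Real.rpow_pos_of_pos hq r), mul_comm K]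

theorem MemHolderZygmund.le_seminorm {A : Type*} [NormedRing A] [NormedAlgebra ℂ A] {d : ℕ}
    {ψ : (Fin d → ℝ) → A →L[ℂ] A} {r : ℝ} {a : A} (h : MemHolderZygmund d ψ r a)
    (t : Fin d → ℝ) (ht : t ≠ 0) :
    ‖ψ (t + t) a - 2 • ψ t a + a‖ ≤ holderZygmundSeminorm ψ r a * oneNorm t ^ r := by
  obtain ⟨K, hK⟩ := h
  rw [← rpow_neg_mul_le_iff (oneNorm_pos ht)]
  refine le_ciSup (f := fun t : {t : Fin d → ℝ // t ≠ 0} =>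
    oneNorm t.1 ^ (-r) * ‖ψ (t.1 + t.1) a - 2 • ψ t.1 a + a‖) ⟨K, ?_⟩ ⟨t, ht⟩
  rintro _ ⟨s, rfl⟩
  exact (rpow_neg_mul_le_iff (oneNorm_pos s.2) r).mpr (hK s.1 s.2)

/-- For `0 < r ≤ 1` and a uniformly bounded `d`-parameter automorphism group
`ψ` on a unital complex Banach algebra `A`, the Hölder–Zygmund space `Λ_r(A)` is a subalgebra
of `A`, its norm is submultiplicative up to a constant, and `Λ_r(A)` is inverse-closed in `A`. -/
theorem holderZygmund_subalgebra_inverse_closed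
    {A : Type*} [NormedRing A] [NormedAlgebra ℂ A] [CompleteSpace A] [NormOneClass A]
    (d : ℕ) (ψ : (Fin d → ℝ) → A →L[ℂ] A)
    (hmul : ∀ t (a b : A), ψ t (a * b) = ψ t a * ψ t b)
    (hone : ∀ t, ψ t 1 = 1)
    (hgroup : ∀ s t, (ψ s).comp (ψ t) = ψ (s + t))
    (hzero : ψ 0 = ContinuousLinearMap.id ℂ A)
    (M : ℝ) (hM : ∀ t, ‖ψ t‖ ≤ M)
    (r : ℝ) (hr0 : 0 < r) (hr1 : r ≤ 1) :
    (∀ a b : A, MemHolderZygmund d ψ r a → MemHolderZygmund d ψ r b →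
      MemHolderZygmund d ψ r (a * b)) ∧
    (∃ C : ℝ, 0 < C ∧ ∀ a b : A,
      MemHolderZygmund d ψ r a → MemHolderZygmund d ψ r b →
        holderZygmundNorm d ψ r (a * b) ≤
          C * holderZygmundNorm d ψ r a * holderZygmundNorm d ψ r b) ∧
    (∀ a : A, MemHolderZygmund d ψ r a → ∀ b : A,
      a * b = 1 → b * a = 1 → MemHolderZygmund d ψ r b) := by
  refine ⟨fun a b ha hb => ?_, ?_, fun a ha b hab hba => ?_⟩
  · obtain ⟨K, hK, ha⟩ := ha.exists_nonneg
    obtain ⟨L, hL, hb⟩ := hb.exists_nonneg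
    exact ⟨_, norm_secondDiff_mul_le hmul hM hr0 hr1 hK hL ha hb⟩
  · have hM0 : 0 ≤ M := (norm_nonneg _).trans (hM 0)
    refine ⟨1 + 2 * (M + 2) ^ 2 + (3 * M + 1), by positivity, fun a b ha hb => ?_⟩
    have hS := holderZygmundSeminorm_nonneg ψ r a
    have hT := holderZygmundSeminorm_nonneg ψ r b
    have key := norm_secondDiff_mul_le hmul hM hr0 hr1 hS hT ha.le_seminorm hb.le_seminorm
    change ‖a * b‖ + holderZygmundSeminorm ψ r (a * b) ≤
      _ * (‖a‖ + holderZygmundSeminorm ψ r a) * (‖b‖ + holderZygmundSeminorm ψ r b)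
    set S := holderZygmundSeminorm ψ r a
    set T := holderZygmundSeminorm ψ r b
    -- `Real.iSup_le` also covers `d = 0`, where the supremum is over the empty type.
    have hsemi : holderZygmundSeminorm ψ r (a * b) ≤
        2 * (((M + 1) * ‖a‖ + 2 * S) * ((M + 1) * ‖b‖ + 2 * T)) + S * (M * ‖b‖)
          + (2 * M + 1) * ‖a‖ * T :=
      Real.iSup_le (fun t => (rpow_neg_mul_le_iff (oneNorm_pos t.2) r).mpr (key t.1 t.2))
        (by positivity)
    have hx := norm_nonneg a
    have hy := norm_nonneg b
    have h1 : (M + 1) * ‖a‖ + 2 * S ≤ (M + 2) * (‖a‖ + S) := by nlinarith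
    have h2 : (M + 1) * ‖b‖ + 2 * T ≤ (M + 2) * (‖b‖ + T) := by nlinarith
    have h3 : ((M + 1) * ‖a‖ + 2 * S) * ((M + 1) * ‖b‖ + 2 * T) ≤
        ((M + 2) * (‖a‖ + S)) * ((M + 2) * (‖b‖ + T)) := by gcongr
    have h4 : S * (M * ‖b‖) ≤ M * ((‖a‖ + S) * (‖b‖ + T)) := by
      have : S * ‖b‖ ≤ (‖a‖ + S) * (‖b‖ + T) := by gcongr <;> linarith
      calc S * (M * ‖b‖) = M * (S * ‖b‖) := by ring
        _ ≤ _ := by gcongr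
    have h5 : (2 * M + 1) * ‖a‖ * T ≤ (2 * M + 1) * ((‖a‖ + S) * (‖b‖ + T)) := by
      have : ‖a‖ * T ≤ (‖a‖ + S) * (‖b‖ + T) := by gcongr <;> linarith
      rw [mul_assoc]
      gcongr
    have h6 : ‖a * b‖ ≤ (‖a‖ + S) * (‖b‖ + T) :=
      (norm_mul_le a b).trans (by gcongr <;> linarith)
    linarith
  · obtain ⟨K, hK, ha⟩ := ha.exists_nonneg
    exact ⟨_, norm_secondDiff_inverse_le hmul hone hM hr0 hr1 hab hba hK ha⟩
end
end

section
/- Let s > 0, 0 < r ≤ 1, and let A : ℤ^d × ℤ^d → ℂ be a matrix with ‖A‖_{J_s} = sup_{k,l} |A(k,l)| (1+|k−l|)^s < ∞. Then the following are equivalent: (i) sup_{t∈ℝ^d, t≠0} |t|^{−r} sup_{k,l∈ℤ^d} 4 sin²(π (k−l)·t) |A(k,l)| (1+|k−l|)^s < ∞; (ii) sup_{k,l∈ℤ^d} |A(k,l)| (1+|k−l|)^{s+r} < ∞. (That is, the Hölder–Zygmund space Λ_r(J_s) with respect to the modulation group χ_t(A)(k,l) = e^{2πi(k−l)·t} A(k,l)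 equals the Jaffard class J_{s+r}.) -/
/-!
Both directions are pointwise in the frequency `n = k - l`; write `N = ∑ j, |n j|`.

If `A` decays with exponent `s + r`, then `sin² x ≤ |sin x| ≤ |sin x| ^ r ≤ |x| ^ r` (as `r ≤ 1`)
at `x = π (n · t)`, together with `|n · t| ≤ N |t|`, trades the second difference for
`(π N |t|) ^ r`, and `N ^ r` is absorbed by the additional decay.

Conversely, for `n ≠ 0` test the Zygmund condition at `t = sign n / (2 N)`: there `n · t = 1 / 2`,
so the sine equals `1`, while `|t| ≤ d / (2 N) ≤ d / (1 + N)`, which yields the missing factor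
`(1 + N) ^ r`. The diagonal `n = 0` is controlled by the hypothesis that `A` lies in `J_s`.
-/

theorem abs_sum_mul_le_sum_abs_mul_sum_abs {ι : Type*} [Fintype ι] (n t : ι → ℝ) :
    |∑ j, n j * t j| ≤ (∑ j, |n j|) * ∑ j, |t j| := by
  calc |∑ j, n j * t j| ≤ ∑ j, |n j * t j| := Finset.abs_sum_le_sum_abs _ _
    _ ≤ ∑ j, |n j| * ∑ i, |t i| := by
        refine Finset.sum_le_sum fun j _ => ?_
        rw [abs_mul]
        gcongr
        exact Finset.single_le_sum (f := fun i => |t i|) (fun i _ => abs_nonneg _)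
          (Finset.mem_univ j)
    _ = _ := by rw [Finset.sum_mul]

theorem sin_sq_le_abs_rpow {r : ℝ} (hr0 : 0 < r) (hr1 : r ≤ 1) (x : ℝ) :
    Real.sin x ^ 2 ≤ |x| ^ r := by
  have h1 : |Real.sin x| ≤ 1 := Real.abs_sin_le_one x
  have h0 := abs_nonneg (Real.sin x)
  calc Real.sin x ^ 2 = |Real.sin x| ^ 2 := (sq_abs _).symm
    _ ≤ |Real.sin x| := by nlinarith
    _ ≤ |Real.sin x| ^ r := Real.self_le_rpow_of_le_one h0 h1 hr1
    _ ≤ |x| ^ r := Real.rpow_le_rpow h0 Real.abs_sin_le_abs hr0.le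

/-- A dual vector to `n`, of 1-norm at most `d / (1 + |n|)`, at which the phase is `1 / 2`. The
bound uses that a nonzero integer vector has 1-norm at least `1`. -/
theorem exists_sum_mul_eq_half {d : ℕ} (n : Fin d → ℝ) (hn : 1 ≤ ∑ j, |n j|) :
    ∃ t : Fin d → ℝ, t ≠ 0 ∧ ∑ j, n j * t j = 1 / 2 ∧
      ∑ j, |t j| ≤ d / (1 + ∑ j, |n j|) := by
  set N := ∑ j, |n j| with hN
  have hN0 : 0 < N := by linarith
  have hsum : ∑ j, n j * ((SignType.sign (n j) : ℝ) / (2 * N)) = 1 / 2 := by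
    have h : ∀ j, n j * ((SignType.sign (n j) : ℝ) / (2 * N)) = |n j| / (2 * N) := fun j => by
      rw [← mul_div_assoc, self_mul_sign]
    simp_rw [h]
    rw [← Finset.sum_div, ← hN]
    field_simp
  refine ⟨fun j => (SignType.sign (n j) : ℝ) / (2 * N), fun h => ?_, hsum, ?_⟩
  · have h' : ∀ j, (SignType.sign (n j) : ℝ) / (2 * N) = 0 := fun j => congrFun h j
    simp [h'] at hsum
  · calc ∑ j, |(SignType.sign (n j) : ℝ) / (2 * N)| ≤ ∑ _j : Fin d, 1 / (1 + N) := by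
          refine Finset.sum_le_sum fun j _ => ?_
          rw [abs_div, abs_of_pos (by positivity : 0 < 2 * N)]
          have hs : |(SignType.sign (n j) : ℝ)| ≤ 1 := by
            rcases SignType.sign (n j) <;> simp
          exact div_le_div₀ zero_le_one hs (by positivity) (by linarith)
      _ = d / (1 + N) := by simp [div_eq_mul_inv]

theorem one_le_sum_abs_of_ne_zero {d : ℕ} (n : Fin d → ℤ) (hn : n ≠ 0) :
    1 ≤ ∑ j, |(n j : ℝ)| := by
  obtain ⟨i, hi⟩ := Function.ne_iff.mp hn
  have h1 : (1 : ℝ) ≤ |(n i : ℝ)| := by exact_mod_cast Int.one_le_abs hi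
  exact h1.trans (Finset.single_le_sum (f := fun j => |(n j : ℝ)|) (fun _ _ => abs_nonneg _)
    (Finset.mem_univ i))

/-- For a matrix `A` in the Jaffard class `J_s` (with respect to the 1-norm
`|k-l| = ∑_j |k_j - l_j|`) and `0 < r ≤ 1`, membership in the Hölder–Zygmund space
`Λ_r(J_s)` for the modulation group (expressed through second-order differences, whose
`J_s`-norm is `sup_{k,l} 4 sin²(π(k-l)·t) |A(k,l)| (1+|k-l|)^s`) is equivalent to
membership in the Jaffard class `J_{s+r}`. -/
theorem holderZygmund_jaffard_eq_jaffard
    (d : ℕ) (s r : ℝ) (hs : 0 < s) (hr0 : 0 < r) (hr1 : r ≤ 1)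
    (A : (Fin d → ℤ) → (Fin d → ℤ) → ℂ)
    (M : ℝ)
    (hA : ∀ k l : Fin d → ℤ,
      ‖A k l‖ * (1 + ∑ j, |((k j - l j : ℤ) : ℝ)|) ^ s ≤ M) :
    (∃ K : ℝ, ∀ t : Fin d → ℝ, t ≠ 0 → ∀ k l : Fin d → ℤ,
        4 * Real.sin (Real.pi * ∑ j, ((k j - l j : ℤ) : ℝ) * t j) ^ 2 *
          (‖A k l‖ * (1 + ∑ j, |((k j - l j : ℤ) : ℝ)|) ^ s) ≤
        K * (∑ j, |t j|) ^ r) ↔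
    (∃ K : ℝ, ∀ k l : Fin d → ℤ,
        ‖A k l‖ * (1 + ∑ j, |((k j - l j : ℤ) : ℝ)|) ^ (s + r) ≤ K) := by
  constructor
  · rintro ⟨K, hK⟩
    refine ⟨max M (|K| * (d : ℝ) ^ r), fun k l => ?_⟩
    by_cases hn : (fun j => k j - l j) = (0 : Fin d → ℤ)
    · have h0 : ∀ j, k j - l j = 0 := fun j => congrFun hn j
      have := hA k l
      simp only [h0, Int.cast_zero, abs_zero, Finset.sum_const_zero, add_zero,
        Real.one_rpow] at this ⊢
      exact this.trans (le_max_left _ _)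
    · have hN := one_le_sum_abs_of_ne_zero _ hn
      obtain ⟨t, ht, hhalf, hle⟩ := exists_sum_mul_eq_half _ hN
      have h := hK t ht k l
      rw [hhalf, mul_one_div, Real.sin_pi_div_two] at h
      set N := ∑ j, |((k j - l j : ℤ) : ℝ)|
      have hN0 : 0 < 1 + N := by linarith
      have hB : 0 ≤ ‖A k l‖ * (1 + N) ^ s := by positivity
      have ht0 : 0 ≤ ∑ j, |t j| := Finset.sum_nonneg fun _ _ => abs_nonneg _
      have h2 : ‖A k l‖ * (1 + N) ^ s ≤ |K| * ((d : ℝ) ^ r / (1 + N) ^ r) :=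
        calc ‖A k l‖ * (1 + N) ^ s ≤ K * (∑ j, |t j|) ^ r := by linarith
          _ ≤ |K| * (d / (1 + N)) ^ r := by
            gcongr
            exact le_abs_self K
          _ = _ := by rw [Real.div_rpow (by positivity) hN0.le]
      refine le_trans ?_ (le_max_right _ _)
      rw [Real.rpow_add hN0, ← mul_assoc]
      rwa [← mul_div_assoc, le_div_iff₀ (by positivity)] at h2
  · rintro ⟨K, hK⟩
    refine ⟨4 * Real.pi ^ r * K, fun t _ k l => ?_⟩
    have hx := abs_sum_mul_le_sum_abs_mul_sum_abs (fun j => ((k j - l j : ℤ) : ℝ)) t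
    have h := hK k l
    have hsin := sin_sq_le_abs_rpow hr0 hr1 (Real.pi * ∑ j, ((k j - l j : ℤ) : ℝ) * t j)
    have hN : 0 ≤ ∑ j, |((k j - l j : ℤ) : ℝ)| := Finset.sum_nonneg fun _ _ => abs_nonneg _
    have hT : 0 ≤ ∑ j, |t j| := Finset.sum_nonneg fun _ _ => abs_nonneg _
    set N := ∑ j, |((k j - l j : ℤ) : ℝ)|
    set T := ∑ j, |t j|
    set x := ∑ j, ((k j - l j : ℤ) : ℝ) * t j
    have hpi := Real.pi_pos
    have hsin' : Real.sin (Real.pi * x) ^ 2 ≤ Real.pi ^ r * ((1 + N) ^ r * T ^ r) :=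
      calc _ ≤ |Real.pi * x| ^ r := hsin
        _ ≤ (Real.pi * ((1 + N) * T)) ^ r := by
          rw [abs_mul, abs_of_pos hpi]
          gcongr
          exact hx.trans (by gcongr; linarith)
        _ = _ := by
          rw [Real.mul_rpow hpi.le (by positivity), Real.mul_rpow (by positivity) hT]
    rw [Real.rpow_add (by positivity)] at h
    calc _ ≤ 4 * (Real.pi ^ r * ((1 + N) ^ r * T ^ r)) * (‖A k l‖ * (1 + N) ^ s) := by gcongr
      _ = 4 * Real.pi ^ r * (‖A k l‖ * ((1 + N) ^ s * (1 + N) ^ r)) * T ^ r := by ring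
      _ ≤ 4 * Real.pi ^ r * K * T ^ r := by gcongr
end

section
/- Let A be a unital Banach *-algebra over ℂ and (X_n)_{n∈ℕ} an approximation scheme on A. Then for all a, b ∈ A and all n ∈ ℕ, E_{2n}(ab) ≤ 2 ‖a‖_A E_n(b) + 6 ‖b‖_A E_n(a). Consequently, for r > 0 and 1 ≤ p ≤ ∞ there is a constant C > 0 such that ‖ab‖_{E_r^p} ≤ C (‖a‖_{E_r^p} ‖b‖_A + ‖b‖_{E_r^p} ‖a‖_A) for all a,b with finite E_r^p-norm, where ‖a‖_{E_r^p}^p = Σ_{n≥0} E_n(a)^p (n+1)^{rp−1} for p < ∞ and ‖a‖_{E_r^∞} = sup_{n≥0} E_n(a)(n+1)^r. -/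
/-!
Approximate `a` and `b` by `x, y ∈ X n`. Then `x * y ∈ X (2 * n)`, and
`a * b - x * y = (a - x) * y + a * (b - y)`, while `‖y‖` is at most about `2 * ‖b‖` because `0 ∈ X n`
forces `E_n(b) ≤ ‖b‖`. Letting the approximations become optimal yields the pointwise estimate, with
constants `1` and `2` (`infDist_mul_le`).

Errors decrease in `n`, so `E_n(ab) ≤ E_{2⌊n/2⌋}(ab)` is controlled by the errors of `a` and `b` at
`⌊n/2⌋`. The ratio `(n + 1) / (⌊n/2⌋ + 1)` lies in `[1, 2]`, so replacing `n` by `⌊n/2⌋` in a power weight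
costs only a constant (`weight_le`), and each `m` is `⌊n/2⌋` for exactly two `n`
(`hasSum_comp_half`). Together with `(x + y)^p ≤ 2^p (x^p + y^p)` and subadditivity of `t ↦ t^(1/p)`
this gives the norm estimates (`lp_estimate` for finite `p`).
-/

open Filter Topology

noncomputable section

namespace ApproxScheme

/-- The power weight at `n` is at most a constant times the one at `⌊n/2⌋`, whatever the sign of the
exponent. -/
lemma weight_le (s : ℝ) (n : ℕ) :
    ((n : ℝ) + 1) ^ s ≤ 2 ^ |s| * (((n / 2 : ℕ) : ℝ) + 1) ^ s := by
  set m : ℕ := n / 2 with hm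
  have h1 : (m : ℝ) + 1 ≤ (n : ℝ) + 1 := by
    have : m ≤ n := Nat.div_le_self n 2
    exact_mod_cast Nat.add_le_add_right this 1
  have h2 : (n : ℝ) + 1 ≤ 2 * ((m : ℝ) + 1) := by
    have : n + 1 ≤ 2 * (m + 1) := by omega
    exact_mod_cast this
  have hm0 : (0 : ℝ) < (m : ℝ) + 1 := by positivity
  rcases le_total 0 s with hs | hs
  · rw [abs_of_nonneg hs, ← Real.mul_rpow (by norm_num) hm0.le]
    exact Real.rpow_le_rpow (by positivity) h2 hs
  · have h3 : ((n : ℝ) + 1) ^ s ≤ ((m : ℝ) + 1) ^ s := Real.rpow_le_rpow_of_nonpos hm0 h1 hs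
    have h4 : (1 : ℝ) ≤ 2 ^ |s| := Real.one_le_rpow (by norm_num) (abs_nonneg s)
    exact h3.trans (le_mul_of_one_le_left (by positivity) h4)

/-- Every `m` equals `⌊n/2⌋` for exactly two values of `n`. -/
lemma hasSum_comp_half {g : ℕ → ℝ} {S : ℝ} (hg : HasSum g S) :
    HasSum (fun n => g (n / 2)) (S + S) := by
  apply HasSum.even_add_odd
  · simpa using hg
  · have h : ∀ k : ℕ, (2 * k + 1) / 2 = k := fun k => by omega
    simpa [h] using hg

lemma add_rpow_le {x y p : ℝ} (hx : 0 ≤ x) (hy : 0 ≤ y) (hp : 0 ≤ p) :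
    (x + y) ^ p ≤ 2 ^ p * (x ^ p + y ^ p) := by
  wlog h : x ≤ y generalizing x y
  · simpa [add_comm] using this hy hx (le_of_not_ge h)
  calc (x + y) ^ p ≤ (2 * y) ^ p := Real.rpow_le_rpow (by positivity) (by linarith) hp
    _ = 2 ^ p * y ^ p := Real.mul_rpow (by norm_num) hy
    _ ≤ _ := by
      gcongr
      linarith [Real.rpow_nonneg hx p]

/-- The weighted `ℓ^p` estimate, for sequences of reals: `e` plays the errors of a product with factors
of norms `α`, `β` and errors `c`, `d`. -/
lemma lp_estimate {r p : ℝ} (hp : 1 ≤ p) :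
    ∃ C : ℝ, 0 < C ∧ ∀ (e c d : ℕ → ℝ) (α β : ℝ), 0 ≤ α → 0 ≤ β →
      (∀ n, 0 ≤ e n) → (∀ n, 0 ≤ c n) → (∀ n, 0 ≤ d n) →
      (∀ n, e n ≤ 2 * α * d (n / 2) + 6 * β * c (n / 2)) →
      Summable (fun n : ℕ => c n ^ p * ((n : ℝ) + 1) ^ (r * p - 1)) →
      Summable (fun n : ℕ => d n ^ p * ((n : ℝ) + 1) ^ (r * p - 1)) →
      Summable (fun n : ℕ => e n ^ p * ((n : ℝ) + 1) ^ (r * p - 1)) ∧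
      (∑' n : ℕ, e n ^ p * ((n : ℝ) + 1) ^ (r * p - 1)) ^ (1 / p) ≤
        C * ((∑' n : ℕ, c n ^ p * ((n : ℝ) + 1) ^ (r * p - 1)) ^ (1 / p) * β +
          (∑' n : ℕ, d n ^ p * ((n : ℝ) + 1) ^ (r * p - 1)) ^ (1 / p) * α) := by
  have hp0 : 0 < p := by linarith
  have hq0 : 0 ≤ 1 / p := by positivity
  have hq1 : 1 / p ≤ 1 := by rw [div_le_one hp0]; exact hp
  set s := r * p - 1
  -- the weight comparison, the power of a sum, and the double counting, in this order
  set M : ℝ := 2 ^ |s| * 2 ^ p * 2 with hM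
  have hM0 : 0 < M := by positivity
  refine ⟨6 * M ^ (1 / p), by positivity, ?_⟩
  intro e c d α β hα hβ he hc hd hle hsc hsd
  set Sc := ∑' n : ℕ, c n ^ p * ((n : ℝ) + 1) ^ s with hSc
  set Sd := ∑' n : ℕ, d n ^ p * ((n : ℝ) + 1) ^ s with hSd
  have hSc0 : 0 ≤ Sc := tsum_nonneg fun n => by have := hc n; positivity
  have hSd0 : 0 ≤ Sd := tsum_nonneg fun n => by have := hd n; positivity
  set T : ℝ := (2 * α) ^ p * Sd + (6 * β) ^ p * Sc with hT
  have hsum := (hasSum_comp_half (((hsd.hasSum).mul_left ((2 * α) ^ p)).add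
    ((hsc.hasSum).mul_left ((6 * β) ^ p)))).mul_left (2 ^ |s| * 2 ^ p)
  have hterm : ∀ n : ℕ, e n ^ p * ((n : ℝ) + 1) ^ s ≤ 2 ^ |s| * 2 ^ p *
      ((2 * α) ^ p * (d (n / 2) ^ p * (((n / 2 : ℕ) : ℝ) + 1) ^ s) +
        (6 * β) ^ p * (c (n / 2) ^ p * (((n / 2 : ℕ) : ℝ) + 1) ^ s)) := by
    intro n
    have hc' := hc (n / 2)
    have hd' := hd (n / 2)
    have h1 : e n ^ p ≤ 2 ^ p * ((2 * α) ^ p * d (n / 2) ^ p + (6 * β) ^ p * c (n / 2) ^ p) := by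
      rw [← Real.mul_rpow (by positivity) hd', ← Real.mul_rpow (by positivity) hc']
      exact (Real.rpow_le_rpow (he n) (hle n) hp0.le).trans
        (add_rpow_le (by positivity) (by positivity) hp0.le)
    calc _ ≤ (2 ^ p * ((2 * α) ^ p * d (n / 2) ^ p + (6 * β) ^ p * c (n / 2) ^ p)) *
          (2 ^ |s| * (((n / 2 : ℕ) : ℝ) + 1) ^ s) :=
        mul_le_mul h1 (weight_le s n) (by positivity) (by positivity)
      _ = _ := by ring
  have hse : Summable (fun n : ℕ => e n ^ p * ((n : ℝ) + 1) ^ s) :=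
    Summable.of_nonneg_of_le (fun n => by have := he n; positivity) hterm hsum.summable
  refine ⟨hse, ?_⟩
  have htot : ∑' n : ℕ, e n ^ p * ((n : ℝ) + 1) ^ s ≤ M * T := by
    refine (hasSum_le hterm hse.hasSum hsum).trans (le_of_eq ?_)
    simp only [hM, hT, hSc, hSd]
    ring
  have hroot : ∀ x S : ℝ, 0 ≤ x → 0 ≤ S → (x ^ p * S) ^ (1 / p) = x * S ^ (1 / p) := by
    intro x S hx hS
    rw [Real.mul_rpow (by positivity) hS, ← Real.rpow_mul hx, mul_one_div_cancel hp0.ne',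
      Real.rpow_one]
  calc _ ≤ (M * T) ^ (1 / p) :=
        Real.rpow_le_rpow (tsum_nonneg fun n => by have := he n; positivity) htot hq0
    _ = M ^ (1 / p) * T ^ (1 / p) := Real.mul_rpow hM0.le (by positivity)
    _ ≤ M ^ (1 / p) * (2 * α * Sd ^ (1 / p) + 6 * β * Sc ^ (1 / p)) := by
        gcongr
        rw [← hroot _ _ (by positivity) hSd0, ← hroot _ _ (by positivity) hSc0]
        exact Real.rpow_add_le_add_rpow (by positivity) (by positivity) hq0 hq1
    _ ≤ M ^ (1 / p) * (6 * α * Sd ^ (1 / p) + 6 * β * Sc ^ (1 / p)) := by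
        gcongr
        norm_num
    _ = _ := by ring

/-- The pointwise estimate with constants `1` and `2`; `U`, `V` are spaces of approximants and `W`
contains their products. -/
lemma infDist_mul_le {A : Type*} [NormedRing A] [NormedAlgebra ℂ A] (U V W : Submodule ℂ A)
    (h : ∀ x ∈ U, ∀ y ∈ V, x * y ∈ W) (a b : A) :
    Metric.infDist (a * b) (W : Set A) ≤
      ‖a‖ * Metric.infDist b (V : Set A) + 2 * ‖b‖ * Metric.infDist a (U : Set A) := by
  set α := Metric.infDist a (U : Set A)
  set β := Metric.infDist b (V : Set A)
  have hβ : β ≤ ‖b‖ := by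
    simpa using Metric.infDist_le_dist_of_mem (x := b) (V.zero_mem)
  have key : ∀ ε : ℝ, 0 < ε → Metric.infDist (a * b) (W : Set A) ≤
      (α + ε) * (2 * ‖b‖ + ε) + ‖a‖ * (β + ε) := by
    intro ε hε
    obtain ⟨x, hx, hax⟩ := (Metric.infDist_lt_iff (x := a) (r := α + ε)
      (⟨0, U.zero_mem⟩ : (U : Set A).Nonempty)).1 (lt_add_of_pos_right _ hε)
    obtain ⟨y, hy, hby⟩ := (Metric.infDist_lt_iff (x := b) (r := β + ε)
      (⟨0, V.zero_mem⟩ : (V : Set A).Nonempty)).1 (lt_add_of_pos_right _ hε)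
    rw [dist_eq_norm] at hax hby
    have hyn : ‖y‖ ≤ 2 * ‖b‖ + ε := by
      have h1 : ‖y‖ ≤ ‖b‖ + ‖b - y‖ := norm_le_insert b y
      linarith
    calc _ ≤ dist (a * b) (x * y) := Metric.infDist_le_dist_of_mem (h x hx y hy)
      _ = ‖(a - x) * y + a * (b - y)‖ := by rw [dist_eq_norm]; congr 1; noncomm_ring
      _ ≤ ‖a - x‖ * ‖y‖ + ‖a‖ * ‖b - y‖ :=
        (norm_add_le _ _).trans (add_le_add (norm_mul_le _ _) (norm_mul_le _ _))
      _ ≤ _ := by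
        have : 0 ≤ ‖a - x‖ := norm_nonneg _
        gcongr
        exact this.trans hax.le
  have hlim : Tendsto (fun ε : ℝ => (α + ε) * (2 * ‖b‖ + ε) + ‖a‖ * (β + ε)) (𝓝[>] 0)
      (𝓝 ((α + 0) * (2 * ‖b‖ + 0) + ‖a‖ * (β + 0))) :=
    (Continuous.tendsto (by fun_prop) 0).mono_left nhdsWithin_le_nhds
  have := ge_of_tendsto hlim (eventually_mem_nhdsWithin.mono fun ε hε => key ε hε)
  linarith

end ApproxScheme

open ApproxScheme

/-- For an approximation scheme `(X_n)` on a unital Banach *-algebra `A`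
(with `E_n(a) = dist(a, X_n)`): the fundamental estimate
`E_{2n}(ab) ≤ 2‖a‖ E_n(b) + 6‖b‖ E_n(a)` holds, and consequently for `r > 0` and
`1 ≤ p < ∞` (resp. `p = ∞`) the approximation-space norm
`‖a‖_{E_r^p} = (Σ_n E_n(a)^p (n+1)^{rp-1})^{1/p}` (resp. `sup_n E_n(a)(n+1)^r`) satisfies
`‖ab‖_{E_r^p} ≤ C (‖a‖_{E_r^p} ‖b‖_A + ‖b‖_{E_r^p} ‖a‖_A)` on elements of finite norm.
For `p = ∞` the supremum is expressed through arbitrary upper bounds `Ka`, `Kb`. -/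
theorem approximation_error_of_product
    {A : Type*} [NormedRing A] [NormedAlgebra ℂ A] [CompleteSpace A] [NormOneClass A]
    [StarRing A] [StarModule ℂ A]
    (X : ℕ → Submodule ℂ A)
    (hXclosed : ∀ n, IsClosed (X n : Set A))
    (hX0 : X 0 = ⊥)
    (hXmono : ∀ n, X n ≤ X (n + 1))
    (hXmul : ∀ m n, ∀ a ∈ X m, ∀ b ∈ X n, a * b ∈ X (m + n))
    (hXstar : ∀ n, ∀ a ∈ X n, star a ∈ X n)
    (hXone : (1 : A) ∈ X 1) :
    (∀ (a b : A) (n : ℕ),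
      Metric.infDist (a * b) (X (2 * n) : Set A) ≤
        2 * ‖a‖ * Metric.infDist b (X n : Set A) +
          6 * ‖b‖ * Metric.infDist a (X n : Set A)) ∧
    (∀ r p : ℝ, 0 < r → 1 ≤ p →
      ∃ C : ℝ, 0 < C ∧ ∀ a b : A,
        Summable (fun n : ℕ =>
          Metric.infDist a (X n : Set A) ^ p * ((n : ℝ) + 1) ^ (r * p - 1)) →
        Summable (fun n : ℕ =>
          Metric.infDist b (X n : Set A) ^ p * ((n : ℝ) + 1) ^ (r * p - 1)) →
        Summable (fun n : ℕ =>
          Metric.infDist (a * b) (X n : Set A) ^ p * ((n : ℝ) + 1) ^ (r * p - 1)) ∧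
        (∑' n : ℕ, Metric.infDist (a * b) (X n : Set A) ^ p * ((n : ℝ) + 1) ^ (r * p - 1))
            ^ (1 / p) ≤
          C * ((∑' n : ℕ,
                Metric.infDist a (X n : Set A) ^ p * ((n : ℝ) + 1) ^ (r * p - 1)) ^ (1 / p)
                  * ‖b‖ +
               (∑' n : ℕ,
                Metric.infDist b (X n : Set A) ^ p * ((n : ℝ) + 1) ^ (r * p - 1)) ^ (1 / p)
                  * ‖a‖)) ∧
    (∀ r : ℝ, 0 < r →
      ∃ C : ℝ, 0 < C ∧ ∀ a b : A, ∀ Ka Kb : ℝ,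
        (∀ n : ℕ, Metric.infDist a (X n : Set A) * ((n : ℝ) + 1) ^ r ≤ Ka) →
        (∀ n : ℕ, Metric.infDist b (X n : Set A) * ((n : ℝ) + 1) ^ r ≤ Kb) →
        ∀ n : ℕ, Metric.infDist (a * b) (X n : Set A) * ((n : ℝ) + 1) ^ r ≤
          C * (Ka * ‖b‖ + Kb * ‖a‖)) := by
  have hest : ∀ (a b : A) (n : ℕ), Metric.infDist (a * b) (X (2 * n) : Set A) ≤
      2 * ‖a‖ * Metric.infDist b (X n : Set A) + 6 * ‖b‖ * Metric.infDist a (X n : Set A) := by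
    intro a b n
    have h := infDist_mul_le (X n) (X n) (X (2 * n))
      (fun x hx y hy => by rw [two_mul]; exact hXmul n n x hx y hy) a b
    have h1 : 0 ≤ ‖a‖ * Metric.infDist b (X n : Set A) :=
      mul_nonneg (norm_nonneg _) Metric.infDist_nonneg
    have h2 : 0 ≤ ‖b‖ * Metric.infDist a (X n : Set A) :=
      mul_nonneg (norm_nonneg _) Metric.infDist_nonneg
    linarith
  have hhalf : ∀ (a b : A) (n : ℕ), Metric.infDist (a * b) (X n : Set A) ≤
      2 * ‖a‖ * Metric.infDist b (X (n / 2) : Set A) +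
        6 * ‖b‖ * Metric.infDist a (X (n / 2) : Set A) := by
    intro a b n
    have hsub : X (2 * (n / 2)) ≤ X n := monotone_nat_of_le_succ hXmono (Nat.mul_div_le n 2)
    exact (Metric.infDist_le_infDist_of_subset hsub ⟨0, Submodule.zero_mem _⟩).trans
      (hest a b (n / 2))
  refine ⟨hest, ?_, ?_⟩
  · intro r p _ hp
    obtain ⟨C, hC, H⟩ := lp_estimate (r := r) hp
    exact ⟨C, hC, fun a b ha hb => H _ _ _ ‖a‖ ‖b‖ (norm_nonneg _) (norm_nonneg _)
      (fun _ => Metric.infDist_nonneg) (fun _ => Metric.infDist_nonneg)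
      (fun _ => Metric.infDist_nonneg) (hhalf a b) ha hb⟩
  · intro r _
    refine ⟨6 * 2 ^ |r|, by positivity, fun a b Ka Kb ha hb n => ?_⟩
    have hKb : 0 ≤ Kb := le_trans (mul_nonneg Metric.infDist_nonneg (by positivity)) (hb 0)
    have hw := weight_le r n
    have hG := hhalf a b n
    have ha' := mul_le_mul_of_nonneg_left (ha (n / 2)) (norm_nonneg b)
    have hb' := mul_le_mul_of_nonneg_left (hb (n / 2)) (norm_nonneg a)
    have hKb' : 0 ≤ ‖a‖ * Kb := mul_nonneg (norm_nonneg a) hKb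
    calc _ ≤ (2 * ‖a‖ * Metric.infDist b (X (n / 2) : Set A) +
            6 * ‖b‖ * Metric.infDist a (X (n / 2) : Set A)) *
          (2 ^ |r| * (((n / 2 : ℕ) : ℝ) + 1) ^ r) :=
          mul_le_mul hG hw (by positivity) (Metric.infDist_nonneg.trans hG)
      _ = 2 ^ |r| * (2 * (‖a‖ * (Metric.infDist b (X (n / 2) : Set A) *
            (((n / 2 : ℕ) : ℝ) + 1) ^ r)) +
          6 * (‖b‖ * (Metric.infDist a (X (n / 2) : Set A) *
            (((n / 2 : ℕ) : ℝ) + 1) ^ r))) := by ring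
      _ ≤ 2 ^ |r| * (6 * (‖b‖ * Ka) + 6 * (‖a‖ * Kb)) := by
          gcongr ?_ * ?_
          linarith
      _ = _ := by ring
end
end

section
/- Let A be a symmetric unital Banach *-algebra over ℂ, (X_n)_{n∈ℕ} an approximation scheme on A, r > 0 and 1 ≤ p ≤ ∞. Suppose a ∈ A is invertible in A and a belongs to the approximation space E_r^p(A), i.e. Σ_{n≥0} E_n(a)^p (n+1)^{rp−1} < ∞ when p < ∞, respectively sup_{n≥0} E_n(a)(n+1)^r < ∞ when p = ∞. Then a⁻¹ ∈ E_r^p(A), i.e. a⁻¹ satisfies the same finiteness condition. -/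
open Filter Topology

noncomputable section

/-!
The proof rests on one Newton step for the inverse. If `b = a⁻¹` and `x`, `y ∈ X n` approximate `a`
and `b`, then `2 y - y x y ∈ X (3 n)` and `b - (2 y - y x y) = (b - y) a (b - y) + y (x - a) y`, so
`E_{3n}(b) ≤ ‖a‖ E_n(b)² + 4 ‖b‖² E_n(a)` (`infDist_inverse_step`).

Once `E_n(b) → 0` is known, the quadratic term is at most `q E_n(b)` for any prescribed `q > 0` and
large `n`. Replacing `n` by `3 n` changes the weights of the approximation spaces only by a constant
factor, so for small `q` this term can be absorbed, and `b` inherits the decay of `a`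
(`summable_of_third`, `bounded_of_third`).

Symmetry is needed only for `E_n(b) → 0`, that is, for the inverse-closedness of the closed
subalgebra `T = closure (⋃ n, X n)` (`inverse_mem_closure`). Near `a` there are invertible
`x ∈ ⋃ n, X n`. The element `h = star x * x` lies in `T` and its spectrum in `A` is contained in
`(0, ∞)`. Passing to a closed subalgebra can only add bounded components of the complement of the
spectrum, and the component of `0` contains the negative half-line, so `h` is invertible in `T` and
`x⁻¹ = h⁻¹ * star x ∈ T`; inversion being continuous, `b ∈ T`. Only elements of `⋃ n, X n` are
starred here, so the involution need not be continuous.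
-/

/-! ### Real sequences satisfying `f m ≤ Q f (m / 3) + C g (m / 3)` -/

lemma sum_range_div_three (f : ℕ → ℝ) (N : ℕ) :
    ∑ m ∈ Finset.range (3 * N), f (m / 3) = 3 * ∑ n ∈ Finset.range N, f n := by
  induction N with
  | zero => simp
  | succ N ih =>
    have h0 : (3 * N) / 3 = N := by omega
    have h1 : (3 * N + 1) / 3 = N := by omega
    have h2 : (3 * N + 2) / 3 = N := by omega
    rw [show 3 * (N + 1) = 3 * N + 1 + 1 + 1 by ring, Finset.sum_range_succ,
      Finset.sum_range_succ, Finset.sum_range_succ, ih, Finset.sum_range_succ, h0, h1,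
      show 3 * N + 1 + 1 = 3 * N + 2 from rfl, h2]
    ring

/-- Every value of `m / 3` is taken three times, so `Q ≤ 1 / 6` lets half of a partial sum of `f`
absorb the term `Q f (m / 3)`. -/
lemma summable_of_third {f g : ℕ → ℝ} {Q C : ℝ} {M : ℕ} (hf : ∀ n, 0 ≤ f n) (hg : ∀ n, 0 ≤ g n)
    (hQ0 : 0 ≤ Q) (hQ : Q ≤ 1 / 6) (hC : 0 ≤ C)
    (h : ∀ m, M ≤ m → f m ≤ Q * f (m / 3) + C * g (m / 3)) (hs : Summable g) : Summable f := by
  have third : ∀ k : ℕ → ℝ, (∀ n, 0 ≤ k n) → ∀ N,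
      ∑ m ∈ Finset.range N, k (m / 3) ≤ 3 * ∑ n ∈ Finset.range N, k n := by
    intro k hk N
    rw [← sum_range_div_three]
    exact Finset.sum_le_sum_of_subset_of_nonneg
      (Finset.range_mono (by omega)) (fun _ _ _ => hk _)
  refine summable_of_sum_range_le (c := 2 * (∑ i ∈ Finset.range M, f i + 3 * C * ∑' n, g n)) hf ?_
  intro N
  have h1 : ∑ m ∈ Finset.range N, f m ≤ ∑ m ∈ Finset.range N,
      ((if m < M then f m else 0) + (Q * f (m / 3) + C * g (m / 3))) := by
    refine Finset.sum_le_sum fun m _ => ?_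
    split_ifs with hm
    · have := mul_nonneg hQ0 (hf (m / 3))
      have := mul_nonneg hC (hg (m / 3))
      linarith
    · have := h m (by omega)
      linarith
  have h2 : ∑ m ∈ Finset.range N, (if m < M then f m else 0) ≤ ∑ i ∈ Finset.range M, f i := by
    rw [← Finset.sum_filter]
    refine Finset.sum_le_sum_of_subset_of_nonneg (fun i hi => ?_) (fun _ _ _ => hf _)
    simp only [Finset.mem_filter, Finset.mem_range] at hi ⊢
    exact hi.2
  rw [Finset.sum_add_distrib, Finset.sum_add_distrib, ← Finset.mul_sum, ← Finset.mul_sum] at h1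
  have h3 := mul_le_mul_of_nonneg_left (third f hf N) hQ0
  have h4 := mul_le_mul_of_nonneg_left
    ((third g hg N).trans (mul_le_mul_of_nonneg_left
      (hs.sum_le_tsum (Finset.range N) (fun _ _ => hg _)) (by norm_num : (0 : ℝ) ≤ 3))) hC
  have h5 := mul_le_mul_of_nonneg_right hQ (Finset.sum_nonneg fun i (_ : i ∈ Finset.range N) => hf i)
  nlinarith

lemma bounded_of_third {f g : ℕ → ℝ} {Q C K : ℝ} {M : ℕ} (hf : ∀ n, 0 ≤ f n)
    (hg : ∀ n, 0 ≤ g n) (hQ : Q ≤ 1 / 2) (hC : 0 ≤ C)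
    (h : ∀ m, M ≤ m → f m ≤ Q * f (m / 3) + C * g (m / 3)) (hK : ∀ n, g n ≤ K) :
    ∃ B, ∀ n, f n ≤ B := by
  have hK0 : 0 ≤ K := (hg 0).trans (hK 0)
  have hS := Finset.sum_nonneg fun i (_ : i ∈ Finset.range (M + 1)) => hf i
  have hCK := mul_nonneg hC hK0
  refine ⟨∑ i ∈ Finset.range (M + 1), f i + 2 * (C * K), fun n => ?_⟩
  induction n using Nat.strong_induction_on with
  | _ n ih =>
    rcases Nat.lt_or_ge n (M + 1) with hn | hn
    · have := Finset.single_le_sum (f := f) (fun i _ => hf i) (Finset.mem_range.2 hn)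
      linarith
    · have h1 := h n (by omega)
      have h2 := ih (n / 3) (by omega)
      have h3 := mul_le_mul_of_nonneg_left (hK (n / 3)) hC
      have h4 := mul_le_mul_of_nonneg_right hQ (hf (n / 3))
      linarith

lemma weight_le (s : ℝ) (m : ℕ) :
    ((m : ℝ) + 1) ^ s ≤ 3 ^ |s| * (((m / 3 : ℕ) : ℝ) + 1) ^ s := by
  have hu : ((m / 3 : ℕ) : ℝ) + 1 ≤ (m : ℝ) + 1 := by
    exact_mod_cast (by omega : m / 3 + 1 ≤ m + 1)
  have hv : (m : ℝ) + 1 ≤ 3 * (((m / 3 : ℕ) : ℝ) + 1) := by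
    exact_mod_cast (by omega : m + 1 ≤ 3 * (m / 3 + 1))
  rcases le_or_gt 0 s with hs | hs
  · rw [abs_of_nonneg hs, ← Real.mul_rpow (by norm_num) (by positivity)]
    exact Real.rpow_le_rpow (by positivity) hv hs
  · have h1 := Real.rpow_le_rpow_of_nonpos (by positivity) hu hs.le
    have h2 : (1 : ℝ) ≤ 3 ^ |s| := Real.one_le_rpow (by norm_num) (abs_nonneg s)
    exact h1.trans (le_mul_of_one_le_left (by positivity) h2)

lemma add_rpow_le {x y p : ℝ} (hx : 0 ≤ x) (hy : 0 ≤ y) (hp : 1 ≤ p) :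
    (x + y) ^ p ≤ 2 ^ (p - 1) * (x ^ p + y ^ p) := by
  lift x to NNReal using hx
  lift y to NNReal using hy
  exact_mod_cast NNReal.rpow_add_le_mul_rpow_add_rpow x y hp

/-- The `p < ∞` case of the theorem, for abstract error sequences `e` (of `a`) and `d` (of `b`). -/
lemma summable_weighted_of_step {d e : ℕ → ℝ} {C : ℝ} (hd : ∀ n, 0 ≤ d n) (he : ∀ n, 0 ≤ e n)
    (hC : 0 ≤ C) (h : ∀ q > 0, ∃ M, ∀ m, M ≤ m → d m ≤ q * d (m / 3) + C * e (m / 3))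
    {p : ℝ} (hp : 1 ≤ p) (s : ℝ) (hs : Summable fun n : ℕ => e n ^ p * ((n : ℝ) + 1) ^ s) :
    Summable fun n : ℕ => d n ^ p * ((n : ℝ) + 1) ^ s := by
  have hp0 : 0 < p := by linarith
  -- `W` collects the constants that multiply `q ^ p`, and `q` is chosen so that `W * q ^ p = 1 / 6`.
  set W : ℝ := 2 ^ (p - 1) * 3 ^ |s| with hW
  have hWpos : 0 < W := by positivity
  set q : ℝ := (1 / (6 * W)) ^ p⁻¹ with hq
  have hqpos : 0 < q := by positivity
  have hqp : q ^ p = 1 / (6 * W) := by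
    rw [hq, Real.rpow_inv_rpow (by positivity) hp0.ne']
  obtain ⟨M, hM⟩ := h q hqpos
  refine summable_of_third (Q := W * q ^ p) (C := W * C ^ p) (M := M) (fun n => ?_) (fun n => ?_)
    (by positivity) (by rw [hqp]; field_simp; norm_num) (by positivity) (fun m hm => ?_) hs
  · have := hd n
    positivity
  · have := he n
    positivity
  · have hd' := hd (m / 3)
    have he' := he (m / 3)
    calc d m ^ p * ((m : ℝ) + 1) ^ s
        ≤ (2 ^ (p - 1) * ((q * d (m / 3)) ^ p + (C * e (m / 3)) ^ p)) *
          (3 ^ |s| * (((m / 3 : ℕ) : ℝ) + 1) ^ s) := by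
          refine mul_le_mul ?_ (weight_le s m) (by positivity) (by positivity)
          exact (Real.rpow_le_rpow (hd m) (hM m hm) hp0.le).trans
            (add_rpow_le (by positivity) (by positivity) hp)
      _ = _ := by
          rw [Real.mul_rpow hqpos.le hd', Real.mul_rpow hC he', hW]
          ring

/-- The `p = ∞` case of the theorem, for abstract error sequences `e` (of `a`) and `d` (of `b`). -/
lemma bounded_weighted_of_step {d e : ℕ → ℝ} {C : ℝ} (hd : ∀ n, 0 ≤ d n) (he : ∀ n, 0 ≤ e n)
    (hC : 0 ≤ C) (h : ∀ q > 0, ∃ M, ∀ m, M ≤ m → d m ≤ q * d (m / 3) + C * e (m / 3))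
    (s : ℝ) {K : ℝ} (hK : ∀ n : ℕ, e n * ((n : ℝ) + 1) ^ s ≤ K) :
    ∃ B, ∀ n : ℕ, d n * ((n : ℝ) + 1) ^ s ≤ B := by
  set W : ℝ := 3 ^ |s| with hW
  have hWpos : 0 < W := by positivity
  obtain ⟨M, hM⟩ := h (1 / (2 * W)) (by positivity)
  refine bounded_of_third (f := fun n : ℕ => d n * ((n : ℝ) + 1) ^ s) (Q := W * (1 / (2 * W)))
    (C := W * C) (M := M) (fun n => ?_) (fun n => ?_)
    (by field_simp; norm_num) (by positivity) (fun m hm => ?_) hK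
  · have := hd n
    positivity
  · have := he n
    positivity
  · have hd' := hd (m / 3)
    have he' := he (m / 3)
    calc d m * ((m : ℝ) + 1) ^ s
        ≤ (1 / (2 * W) * d (m / 3) + C * e (m / 3)) * (W * (((m / 3 : ℕ) : ℝ) + 1) ^ s) :=
          mul_le_mul (hM m hm) (weight_le s m) (by positivity) (by positivity)
      _ = _ := by ring

lemma exists_lt_of_summable_weighted {e : ℕ → ℝ} {p s : ℝ} (hp : 0 < p)
    (hs : -1 < s) (h : Summable fun n : ℕ => e n ^ p * ((n : ℝ) + 1) ^ s) {ε : ℝ} (hε : 0 < ε) :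
    ∃ n, e n < ε := by
  by_contra! hcon
  have h1 : Summable fun n : ℕ => ε ^ p * ((n : ℝ) + 1) ^ s := by
    refine Summable.of_nonneg_of_le (fun n => by positivity) (fun n => ?_) h
    have := Real.rpow_le_rpow hε.le (hcon n) hp.le
    gcongr
  have h2 : Summable fun n : ℕ => ((n : ℝ) + 1) ^ s :=
    (summable_mul_left_iff (by positivity : ε ^ p ≠ 0)).1 h1
  have h3 : Summable fun n : ℕ => (n : ℝ) ^ s := by
    rw [← summable_nat_add_iff 1]
    simpa using h2
  linarith [Real.summable_nat_rpow.1 h3]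

lemma exists_lt_of_bounded_weighted {e : ℕ → ℝ} {r K : ℝ} (hr : 0 < r)
    (h : ∀ n : ℕ, e n * ((n : ℝ) + 1) ^ r ≤ K) {ε : ℝ} (hε : 0 < ε) : ∃ n, e n < ε := by
  by_contra! hcon
  have ht : Tendsto (fun n : ℕ => ((n : ℝ) + 1) ^ r) atTop atTop :=
    (tendsto_rpow_atTop hr).comp
      (tendsto_atTop_add_const_right _ 1 tendsto_natCast_atTop_atTop)
  obtain ⟨n, hn⟩ := (ht.eventually_gt_atTop (K / ε)).exists
  rw [div_lt_iff₀ hε] at hn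
  have := mul_le_mul_of_nonneg_right (hcon n) (by positivity : 0 ≤ ((n : ℝ) + 1) ^ r)
  linarith [h n]

/-! ### Inverses in the closure of the approximation scheme -/

/-- A closed subalgebra contains the inverse of each of its elements whose spectrum in the ambient
algebra lies on the nonnegative half-line. -/
lemma inverse_mem_of_spectrum_nonneg_s9 {A : Type*} [NormedRing A] [NormedAlgebra ℂ A]
    [CompleteSpace A] (T : Subalgebra ℂ A) (hT : IsClosed (T : Set A)) {h k : A} (hh : h ∈ T)
    (hhk : h * k = 1) (hkh : k * h = 1)
    (hσ : spectrum ℂ h ⊆ {z : ℂ | ∃ x : ℝ, 0 ≤ x ∧ z = (x : ℂ)}) : k ∈ T := by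
  have hunit : IsUnit h := ⟨⟨h, k, hhk, hkh⟩, rfl⟩
  have h0 : (0 : ℂ) ∉ spectrum ℂ h := spectrum.zero_notMem ℂ hunit
  have h0T : (0 : ℂ) ∉ spectrum ℂ (⟨h, hh⟩ : T) := by
    intro hmem
    have : IsClosed (T : Set A) := hT
    have hb := Subalgebra.spectrum_isBounded_connectedComponentIn T ⟨h, hh⟩ hmem
    -- The half-line `(-∞, 0]` lies in the component of `0`, which is therefore unbounded.
    set L : Set ℂ := (fun x : ℝ => (x : ℂ)) '' Set.Iic 0 with hL
    have hLc : IsPreconnected L :=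
      isPreconnected_Iic.image _ Complex.continuous_ofReal.continuousOn
    have hLs : L ⊆ (spectrum ℂ h)ᶜ := by
      rintro _ ⟨x, hx, rfl⟩ hxσ
      obtain ⟨y, hy, hxy⟩ := hσ hxσ
      have hxy' : x = y := Complex.ofReal_injective hxy
      have hx0 : x = 0 := le_antisymm hx (hxy' ▸ hy)
      subst hx0
      exact h0 (by simpa using hxσ)
    have hsub := hLc.subset_connectedComponentIn (x := 0) ⟨0, by simp, by simp⟩ hLs
    obtain ⟨R, hR⟩ := (hb.subset hsub).exists_norm_le
    have := hR _ ⟨-(|R| + 1), by simp only [Set.mem_Iic]; linarith [abs_nonneg R], rfl⟩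
    rw [Complex.norm_real, Real.norm_eq_abs, abs_neg, abs_of_nonneg (by positivity)] at this
    linarith [le_abs_self R]
  obtain ⟨u, hu⟩ := (spectrum.zero_notMem_iff ℂ).1 h0T
  have huk : ((↑u⁻¹ : T) : A) = k := by
    have h1 : h * ((↑u⁻¹ : T) : A) = 1 := by
      have := congrArg (Subtype.val) u.mul_inv
      rw [hu] at this
      simpa using this
    calc ((↑u⁻¹ : T) : A) = k * (h * ((↑u⁻¹ : T) : A)) := by rw [← mul_assoc, hkh, one_mul]
      _ = k := by rw [h1, mul_one]
  rw [← huk]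
  exact Subtype.property _

/-- The subalgebra `⋃ n, X n` of an approximation scheme. -/
def schemeSubalgebra {A : Type*} [Ring A] [Algebra ℂ A] (X : ℕ → Submodule ℂ A)
    (hmono : Monotone X) (hXmul : ∀ m n, ∀ a ∈ X m, ∀ b ∈ X n, a * b ∈ X (m + n))
    (hXone : (1 : A) ∈ X 1) : Subalgebra ℂ A where
  carrier := {x | ∃ n, x ∈ X n}
  mul_mem' := by
    rintro x y ⟨m, hm⟩ ⟨n, hn⟩
    exact ⟨m + n, hXmul m n x hm y hn⟩
  add_mem' := by
    rintro x y ⟨m, hm⟩ ⟨n, hn⟩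
    exact ⟨max m n, (X _).add_mem (hmono (le_max_left m n) hm) (hmono (le_max_right m n) hn)⟩
  algebraMap_mem' := by
    intro c
    refine ⟨1, ?_⟩
    rw [Algebra.algebraMap_eq_smul_one]
    exact (X 1).smul_mem c hXone

lemma inverse_mem_closure {A : Type*} [NormedRing A] [NormedAlgebra ℂ A] [CompleteSpace A]
    [StarRing A]
    (hsym : ∀ a : A, spectrum ℂ (star a * a) ⊆ {z : ℂ | ∃ x : ℝ, 0 ≤ x ∧ z = (x : ℂ)})
    (S : Subalgebra ℂ A) (hstar : ∀ a ∈ S, star a ∈ S) {a b : A} (hab : a * b = 1)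
    (hba : b * a = 1) (ha : a ∈ closure (S : Set A)) : b ∈ closure (S : Set A) := by
  set T := S.topologicalClosure with hT
  have hST : S ≤ T := S.le_topologicalClosure
  let u : Aˣ := ⟨a, b, hab, hba⟩
  have hinv : ∀ x ∈ S, IsUnit x → Ring.inverse x ∈ T := by
    rintro _ hx ⟨v, rfl⟩
    rw [Ring.inverse_unit]
    have hk : (↑v⁻¹ * star (↑v⁻¹ : A)) ∈ T := by
      refine inverse_mem_of_spectrum_nonneg_s9 T S.isClosed_topologicalClosure
        (h := star (v : A) * v) (hST (S.mul_mem (hstar _ hx) hx)) ?_ ?_ (hsym _)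
      · rw [mul_assoc, ← mul_assoc (v : A), v.mul_inv, one_mul, ← star_mul, v.inv_mul, star_one]
      · rw [mul_assoc, ← mul_assoc (star _) (star _), ← star_mul, v.mul_inv, star_one, one_mul,
          v.inv_mul]
    have := T.mul_mem hk (hST (hstar _ hx))
    rwa [mul_assoc, ← star_mul, v.mul_inv, star_one, mul_one] at this
  have hcont : Tendsto Ring.inverse (𝓝[(S : Set A)] a) (𝓝 b) := by
    have h := (NormedRing.inverse_continuousAt u).tendsto
    rw [Ring.inverse_unit] at h
    exact h.mono_left nhdsWithin_le_nhds
  have : (𝓝[(S : Set A)] a).NeBot := mem_closure_iff_nhdsWithin_neBot.1 ha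
  refine S.isClosed_topologicalClosure.mem_of_tendsto hcont ?_
  filter_upwards [self_mem_nhdsWithin, nhdsWithin_le_nhds (Units.isOpen.mem_nhds ⟨u, rfl⟩)]
    with x hx hxu
  exact hinv x hx hxu

/-! ### The Newton step -/

lemma infDist_inverse_step {A : Type*} [NormedRing A] [NormedAlgebra ℂ A]
    (X : ℕ → Submodule ℂ A) (hmono : Monotone X)
    (hXmul : ∀ m n, ∀ a ∈ X m, ∀ b ∈ X n, a * b ∈ X (m + n)) {a b : A} (hab : a * b = 1)
    (hba : b * a = 1) (n : ℕ) :
    Metric.infDist b (X (3 * n) : Set A) ≤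
      ‖a‖ * Metric.infDist b (X n : Set A) ^ 2 +
        (2 * ‖b‖) ^ 2 * Metric.infDist a (X n : Set A) := by
  have hne : (X n : Set A).Nonempty := ⟨0, (X n).zero_mem⟩
  set d := Metric.infDist b (X n : Set A) with hd
  set e := Metric.infDist a (X n : Set A) with he
  have hd0 : 0 ≤ d := Metric.infDist_nonneg
  have he0 : 0 ≤ e := Metric.infDist_nonneg
  have hdb : d ≤ ‖b‖ := by
    simpa using Metric.infDist_le_dist_of_mem (x := b) (X n).zero_mem
  have key : ∀ ε > 0, Metric.infDist b (X (3 * n) : Set A) ≤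
      ‖a‖ * (d + ε) ^ 2 + (2 * ‖b‖ + ε) ^ 2 * (e + ε) := by
    intro ε hε
    obtain ⟨y, hy, hby⟩ := (Metric.infDist_lt_iff hne).1 (show d < d + ε by linarith)
    obtain ⟨x, hx, hax⟩ := (Metric.infDist_lt_iff hne).1 (show e < e + ε by linarith)
    rw [dist_eq_norm] at hby hax
    have hyn : ‖y‖ ≤ 2 * ‖b‖ + ε := by
      have := norm_sub_le b (b - y)
      rw [sub_sub_cancel] at this
      linarith
    have hz : y + y - y * x * y ∈ X (3 * n) := by
      have hy3 := hmono (show n ≤ 3 * n by omega) hy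
      have h3 := hXmul _ _ _ (hXmul _ _ _ hy _ hx) _ hy
      rw [show n + n + n = 3 * n by ring] at h3
      exact (X _).sub_mem ((X _).add_mem hy3 hy3) h3
    have hid : b - (y + y - y * x * y) = (b - y) * a * (b - y) + y * (x - a) * y := by
      have h1 : (b - y) * a * (b - y) = b * a * b - b * a * y - y * (a * b) + y * a * y := by
        noncomm_ring
      rw [h1, hba, hab]
      noncomm_ring
    calc Metric.infDist b (X (3 * n) : Set A) ≤ ‖b - (y + y - y * x * y)‖ := by
          rw [← dist_eq_norm]
          exact Metric.infDist_le_dist_of_mem hz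
      _ ≤ ‖b - y‖ * ‖a‖ * ‖b - y‖ + ‖y‖ * ‖a - x‖ * ‖y‖ := by
          rw [hid, norm_sub_rev a x]
          refine (norm_add_le _ _).trans ?_
          gcongr <;> exact norm_mul₃_le
      _ ≤ (d + ε) * ‖a‖ * (d + ε) + (2 * ‖b‖ + ε) * (e + ε) * (2 * ‖b‖ + ε) := by gcongr
      _ = _ := by ring
  have hlim : Tendsto (fun ε : ℝ => ‖a‖ * (d + ε) ^ 2 + (2 * ‖b‖ + ε) ^ 2 * (e + ε)) (𝓝[>] 0)
      (𝓝 (‖a‖ * (d + 0) ^ 2 + (2 * ‖b‖ + 0) ^ 2 * (e + 0))) :=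
    (Continuous.tendsto (by fun_prop) 0).mono_left nhdsWithin_le_nhds
  simp only [add_zero] at hlim
  exact ge_of_tendsto hlim (by filter_upwards [self_mem_nhdsWithin] with ε hε using key ε hε)

/-- Once the errors of `b = a⁻¹` tend to zero, the quadratic term of the Newton step is smaller than
any prescribed multiple of the error. -/
lemma infDist_inverse_third {A : Type*} [NormedRing A] [NormedAlgebra ℂ A]
    (X : ℕ → Submodule ℂ A) (hmono : Monotone X)
    (hXmul : ∀ m n, ∀ a ∈ X m, ∀ b ∈ X n, a * b ∈ X (m + n)) {a b : A} (hab : a * b = 1)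
    (hba : b * a = 1) (hb : ∀ ε > 0, ∃ n, Metric.infDist b (X n : Set A) < ε) (q : ℝ)
    (hq : 0 < q) :
    ∃ M, ∀ m, M ≤ m → Metric.infDist b (X m : Set A) ≤
      q * Metric.infDist b (X (m / 3) : Set A) +
        (2 * ‖b‖) ^ 2 * Metric.infDist a (X (m / 3) : Set A) := by
  have hanti : ∀ {i j : ℕ}, i ≤ j →
      Metric.infDist b (X j : Set A) ≤ Metric.infDist b (X i : Set A) := fun hij =>
    Metric.infDist_le_infDist_of_subset (hmono hij) ⟨0, (X _).zero_mem⟩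
  obtain ⟨N, hN⟩ := hb (q / (‖a‖ + 1)) (by positivity)
  refine ⟨3 * N, fun m hm => ?_⟩
  have h1 := hanti (show 3 * (m / 3) ≤ m by omega)
  have h2 := infDist_inverse_step X hmono hXmul hab hba (m / 3)
  have h3 : Metric.infDist b (X (m / 3) : Set A) * (‖a‖ + 1) ≤ q := by
    rw [← le_div_iff₀ (by positivity)]
    exact (hanti (show N ≤ m / 3 by omega)).trans hN.le
  have h0 : 0 ≤ Metric.infDist b (X (m / 3) : Set A) := Metric.infDist_nonneg
  have h4 := mul_le_mul_of_nonneg_right h3 h0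
  nlinarith [mul_nonneg h0 h0]

/-! ### Inverse-closedness of the approximation spaces -/

/-- For an approximation scheme `(X_n)` on a symmetric unital Banach
*-algebra `A`, the approximation spaces `E_r^p(A)` are inverse-closed in `A`: if `a` is
invertible in `A` (with inverse `b`) and the approximation errors `E_n(a) = dist(a, X_n)`
satisfy the `E_r^p`-finiteness condition (summability for `1 ≤ p < ∞`, boundedness for
`p = ∞`), then so do those of `b = a⁻¹`. -/
theorem approximation_space_inverse_closed
    {A : Type*} [NormedRing A] [NormedAlgebra ℂ A] [CompleteSpace A] [NormOneClass A]
    [StarRing A] [StarModule ℂ A]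
    (hsym : ∀ a : A, spectrum ℂ (star a * a) ⊆ {z : ℂ | ∃ x : ℝ, 0 ≤ x ∧ z = (x : ℂ)})
    (X : ℕ → Submodule ℂ A)
    (hXclosed : ∀ n, IsClosed (X n : Set A))
    (hX0 : X 0 = ⊥)
    (hXmono : ∀ n, X n ≤ X (n + 1))
    (hXmul : ∀ m n, ∀ a ∈ X m, ∀ b ∈ X n, a * b ∈ X (m + n))
    (hXstar : ∀ n, ∀ a ∈ X n, star a ∈ X n)
    (hXone : (1 : A) ∈ X 1)
    (r : ℝ) (hr : 0 < r) :
    (∀ p : ℝ, 1 ≤ p → ∀ a b : A, a * b = 1 → b * a = 1 →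
      Summable (fun n : ℕ =>
        Metric.infDist a (X n : Set A) ^ p * ((n : ℝ) + 1) ^ (r * p - 1)) →
      Summable (fun n : ℕ =>
        Metric.infDist b (X n : Set A) ^ p * ((n : ℝ) + 1) ^ (r * p - 1))) ∧
    (∀ a b : A, a * b = 1 → b * a = 1 →
      (∃ K : ℝ, ∀ n : ℕ, Metric.infDist a (X n : Set A) * ((n : ℝ) + 1) ^ r ≤ K) →
      (∃ K : ℝ, ∀ n : ℕ, Metric.infDist b (X n : Set A) * ((n : ℝ) + 1) ^ r ≤ K)) := by
  have hmono : Monotone X := monotone_nat_of_le_succ hXmono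
  set S := schemeSubalgebra X hmono hXmul hXone with hS
  have hne : (S : Set A).Nonempty := ⟨0, S.zero_mem⟩
  have hnX : ∀ n, (X n : Set A).Nonempty := fun n => ⟨0, (X n).zero_mem⟩
  have hstep : ∀ a b : A, a * b = 1 → b * a = 1 →
      (∀ ε > 0, ∃ n, Metric.infDist a (X n : Set A) < ε) →
      ∀ q > 0, ∃ M, ∀ m, M ≤ m → Metric.infDist b (X m : Set A) ≤
        q * Metric.infDist b (X (m / 3) : Set A) +
          (2 * ‖b‖) ^ 2 * Metric.infDist a (X (m / 3) : Set A) := by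
    intro a b hab hba ha
    refine infDist_inverse_third X hmono hXmul hab hba ?_
    have hacl : a ∈ closure (S : Set A) := by
      rw [Metric.mem_closure_iff]
      intro ε hε
      obtain ⟨n, hn⟩ := ha ε hε
      obtain ⟨x, hx, hax⟩ := (Metric.infDist_lt_iff (hnX n)).1 hn
      exact ⟨x, ⟨n, hx⟩, hax⟩
    have hbcl := inverse_mem_closure hsym S (by
      rintro x ⟨n, hn⟩
      exact ⟨n, hXstar n x hn⟩) hab hba hacl
    intro ε hε
    obtain ⟨y, ⟨n, hy⟩, hby⟩ := Metric.mem_closure_iff.1 hbcl ε hε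
    exact ⟨n, (Metric.infDist_lt_iff (hnX n)).2 ⟨y, hy, hby⟩⟩
  have hnn : ∀ (c : A) (n : ℕ), 0 ≤ Metric.infDist c (X n : Set A) :=
    fun c n => Metric.infDist_nonneg
  refine ⟨fun p hp a b hab hba h => ?_, fun a b hab hba ⟨K, hK⟩ => ?_⟩
  · have hp0 : 0 < p := by linarith
    refine summable_weighted_of_step (hnn b) (hnn a) (by positivity)
      (hstep a b hab hba fun ε hε => ?_) hp _ h
    exact exists_lt_of_summable_weighted hp0 (by linarith [mul_pos hr hp0]) h hε
  · exact bounded_weighted_of_step (hnn b) (hnn a) (by positivity)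
      (hstep a b hab hba fun ε hε => exists_lt_of_bounded_weighted hr hK hε) r hK
end
end

section
/- Let s, r > 0 and let A : ℤ^d × ℤ^d → ℂ be a matrix with ‖A‖_{J_s} = sup_{k,l} |A(k,l)|(1+|k−l|)^s < ∞. For n ∈ ℕ let E_n(A) = inf{ ‖A − B‖_{J_s} : B a matrix with B(k,l) = 0 for all |k−l| ≥ n }. Then the following are equivalent: (i) sup_{n≥0} (n+1)^r E_n(A) < ∞; (ii) sup_{k,l∈ℤ^d} |A(k,l)|(1+|k−l|)^{s+r} < ∞. Moreover E_n(A) = sup_{|k−l| ≥ n} |A(k,l)|(1+|k−l|)^s. (That is, the approximation space E_r^∞(J_s) with respect to approximation by banded matrices equals J_{s+r}.) -/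
/-!
The band condition and the Jaffard norm are both entrywise, so the best approximation of `A` by a
matrix of bandwidth `< n` is its truncation to `|k-l| < n`: on the entries with `|k-l| ≥ n` every
admissible `B` vanishes, so no admissible error is smaller, and the truncation makes no error
elsewhere. This gives `E_n(A) = sup_{|k-l| ≥ n} |A(k,l)| (1+|k-l|)^s`
(`jaffardBandApproxError_eq_iSup`).

The equivalence follows from this formula and `(1+m)^(s+r) = (1+m)^r (1+m)^s`. The entry `(k,l)` is
bounded by `E_n(A)` at the single index `n = |k-l|`; conversely, on the range `|k-l| ≥ n` the factor
`(n+1)^r` is at most `(1+|k-l|)^r`. Hence the constant of (i) bounds the norm in (ii), and the norm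
in (ii) serves as the constant of (i).
-/

open scoped ENNReal

noncomputable section

/-- The (extended-real-valued) Jaffard norm `‖A‖_{J_s} = sup_{k,l} |A(k,l)| (1+|k-l|)^s`,
where `|k-l|` is the 1-norm on `ℤ^d`. -/
def jaffardNorm (d : ℕ) (s : ℝ) (A : (Fin d → ℤ) → (Fin d → ℤ) → ℂ) : ℝ≥0∞ :=
  ⨆ k : Fin d → ℤ, ⨆ l : Fin d → ℤ,
    (‖A k l‖₊ : ℝ≥0∞) * ((1 + ∑ j, (k j - l j).natAbs : ℕ) : ℝ≥0∞) ^ s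

/-- The error of best approximation of `A` in the `J_s`-norm by matrices banded with
bandwidth `< n`. -/
def jaffardBandApproxError (d : ℕ) (s : ℝ) (n : ℕ)
    (A : (Fin d → ℤ) → (Fin d → ℤ) → ℂ) : ℝ≥0∞ :=
  ⨅ (B : (Fin d → ℤ) → (Fin d → ℤ) → ℂ)
    (_ : ∀ k l : Fin d → ℤ, n ≤ ∑ j, (k j - l j).natAbs → B k l = 0),
      jaffardNorm d s (fun k l => A k l - B k l)

theorem jaffardBandApproxError_eq_iSup (d : ℕ) (s : ℝ) (n : ℕ)
    (A : (Fin d → ℤ) → (Fin d → ℤ) → ℂ) :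
    jaffardBandApproxError d s n A =
      ⨆ p : {p : (Fin d → ℤ) × (Fin d → ℤ) // n ≤ ∑ j, (p.1 j - p.2 j).natAbs},
        (‖A p.1.1 p.1.2‖₊ : ℝ≥0∞) *
          ((1 + ∑ j, (p.1.1 j - p.1.2 j).natAbs : ℕ) : ℝ≥0∞) ^ s := by
  apply le_antisymm
  · -- The witness is the truncation of `A` to the band.
    refine (iInf₂_le (fun k l => if n ≤ ∑ j, (k j - l j).natAbs then 0 else A k l)
      fun k l h => if_pos h).trans ?_
    refine iSup₂_le fun k l => ?_
    by_cases h : n ≤ ∑ j, (k j - l j).natAbs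
    · simp only [if_pos h, sub_zero]
      exact le_iSup (fun p : {p : (Fin d → ℤ) × (Fin d → ℤ) //
        n ≤ ∑ j, (p.1 j - p.2 j).natAbs} => (‖A p.1.1 p.1.2‖₊ : ℝ≥0∞) *
          ((1 + ∑ j, (p.1.1 j - p.1.2 j).natAbs : ℕ) : ℝ≥0∞) ^ s) ⟨(k, l), h⟩
    · simp [if_neg h]
  · refine le_iInf₂ fun B hB => iSup_le fun ⟨⟨k, l⟩, h⟩ => ?_
    refine le_trans (le_of_eq ?_) (le_iSup₂ (f := fun k l : Fin d → ℤ =>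
      (‖A k l - B k l‖₊ : ℝ≥0∞) * ((1 + ∑ j, (k j - l j).natAbs : ℕ) : ℝ≥0∞) ^ s) k l)
    simp only [hB k l h, sub_zero]

theorem one_add_rpow_split (m : ℕ) {s r : ℝ} (hs : 0 < s) (hr : 0 < r) :
    ((1 + m : ℕ) : ℝ≥0∞) ^ (s + r) = ((m : ℝ≥0∞) + 1) ^ r * ((1 + m : ℕ) : ℝ≥0∞) ^ s := by
  rw [ENNReal.rpow_add_of_nonneg _ _ hs.le hr.le, mul_comm]
  push_cast
  rw [add_comm (1 : ℝ≥0∞)]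

/-- For `A ∈ J_s` and `r > 0`: the approximation errors by banded matrices
in `J_s` decay like `(n+1)^{-r}` if and only if `A ∈ J_{s+r}`; moreover the `n`-th
approximation error equals `sup_{|k-l| ≥ n} |A(k,l)|(1+|k-l|)^s`. In other words,
`E_r^∞(J_s) = J_{s+r}`. -/
theorem jaffard_approximation_space_eq_jaffard
    (d : ℕ) (s r : ℝ) (hs : 0 < s) (hr : 0 < r)
    (A : (Fin d → ℤ) → (Fin d → ℤ) → ℂ)
    (hA : jaffardNorm d s A ≠ ⊤) :
    ((∃ C : ℝ≥0∞, C ≠ ⊤ ∧ ∀ n : ℕ,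
        ((n : ℝ≥0∞) + 1) ^ r * jaffardBandApproxError d s n A ≤ C) ↔
      jaffardNorm d (s + r) A ≠ ⊤) ∧
    (∀ n : ℕ, jaffardBandApproxError d s n A =
      ⨆ p : {p : (Fin d → ℤ) × (Fin d → ℤ) // n ≤ ∑ j, (p.1 j - p.2 j).natAbs},
        (‖A p.1.1 p.1.2‖₊ : ℝ≥0∞) *
          ((1 + ∑ j, (p.1.1 j - p.1.2 j).natAbs : ℕ) : ℝ≥0∞) ^ s) := by
  refine ⟨⟨?_, fun h => ⟨jaffardNorm d (s + r) A, h, fun n => ?_⟩⟩,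
    fun n => jaffardBandApproxError_eq_iSup d s n A⟩
  · rintro ⟨C, hC, h⟩
    refine ne_top_of_le_ne_top hC (iSup₂_le fun k l => ?_)
    -- The hypothesis is only needed at `n = |k-l|`.
    refine le_trans ?_ (h (∑ j, (k j - l j).natAbs))
    rw [one_add_rpow_split _ hs hr, mul_left_comm, jaffardBandApproxError_eq_iSup]
    gcongr
    exact le_iSup (fun p : {p : (Fin d → ℤ) × (Fin d → ℤ) //
      ∑ j, (k j - l j).natAbs ≤ ∑ j, (p.1 j - p.2 j).natAbs} => (‖A p.1.1 p.1.2‖₊ : ℝ≥0∞) *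
        ((1 + ∑ j, (p.1.1 j - p.1.2 j).natAbs : ℕ) : ℝ≥0∞) ^ s) ⟨(k, l), le_rfl⟩
  · rw [jaffardBandApproxError_eq_iSup, ENNReal.mul_iSup]
    refine iSup_le fun ⟨⟨k, l⟩, hkl⟩ => ?_
    refine le_trans ?_ (le_iSup₂ (f := fun k l : Fin d → ℤ =>
      (‖A k l‖₊ : ℝ≥0∞) * ((1 + ∑ j, (k j - l j).natAbs : ℕ) : ℝ≥0∞) ^ (s + r)) k l)
    rw [one_add_rpow_split _ hs hr, mul_left_comm]
    dsimp only at hkl ⊢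
    gcongr
end
end

section
/- Let A be a unital C*-algebra and (X_n)_{n≥1} an increasing sequence of closed *-subalgebras of A, each containing the unit 1, such that ⋃_{n≥1} X_n is dense in A; set X_0 = {0} and E_n(a) = inf{‖a−x‖ : x ∈ X_n}. Let w : ℕ → (0,∞) be an arbitrary weight and 1 ≤ p ≤ ∞. Then the generalized approximation space Ẽ^p_w = { a ∈ A : Σ_{n≥0} E_n(a)^p w(n)^p < ∞ } (with the sup condition sup_n E_n(a) w(n) < ∞ when p = ∞) is a dense *-subalgebra of A, and Ẽ^p_w is inverse-closed in A: if a ∈ Ẽ^p_w is invertible in A, then a⁻¹ ∈ Ẽ^p_w. Moreover E_n(ab) ≤ C(‖a‖ E_n(b) + ‖b‖ E_n(a)) for all a,b ∈ A, n ∈ ℕ, and some constant C. -/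
/-! The distance `E_n(a)` to a (non-unital) *-subalgebra `X_n` is subadditive, absolutely homogeneous
and *-invariant, and it satisfies `E_n(ab) ≤ 2 (‖a‖ E_n(b) + ‖b‖ E_n(a))`, because near-best
approximants of `b` have norm at most about `2‖b‖`. The key point is inverse-closedness: a closed
unital *-subalgebra of a C*-algebra contains the inverses of its invertible elements (spectral
permanence), so if `x ∈ X_n` is so close to the invertible element `a` that it is invertible, then
`x⁻¹ ∈ X_n` approximates `a⁻¹`, with `‖a⁻¹ - x⁻¹‖ ≤ 2 ‖a⁻¹‖² ‖a - x‖`. If no `x ∈ X_n` is that close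
to `a`, then `E_n(a⁻¹) ≤ ‖a⁻¹‖ ≤ 2 ‖a⁻¹‖² E_n(a)` holds trivially. Hence
`E_n(a⁻¹) ≤ 2 ‖a⁻¹‖² E_n(a)` for every `n`, which is why the weight may be arbitrary.

All membership claims therefore only use that the condition on the sequence `E_n(a) w(n)` is solid
and stable under sums and nonnegative multiples (`IsSequenceIdeal`), which is true of both `ℓ^p` and
`ℓ^∞`. Density holds because elements of `⋃ X_n` have eventually vanishing approximation errors. -/

open Filter Topology

noncomputable section

/-- A bound by `K * dist a x` for every `x ∈ s` passes to the infimum over `s`, which need not be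
attained. -/
lemma infDist_le_mul_infDist {A : Type*} [PseudoMetricSpace A] {s t : Set A} {a b : A} {K : ℝ}
    (hs : s.Nonempty) (hK : 0 ≤ K) (h : ∀ x ∈ s, Metric.infDist b t ≤ K * dist a x) :
    Metric.infDist b t ≤ K * Metric.infDist a s := by
  rcases hK.eq_or_lt with rfl | hK
  · obtain ⟨x, hx⟩ := hs
    simpa using h x hx
  · rw [← div_le_iff₀' hK, Metric.le_infDist hs]
    intro x hx
    rw [div_le_iff₀' hK]
    exact h x hx

section Errors

variable {A : Type*} [NormedRing A] [StarRing A] [NormedAlgebra ℂ A]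
  (T : NonUnitalStarSubalgebra ℂ A)

lemma infDist_le_norm (a : A) : Metric.infDist a (T : Set A) ≤ ‖a‖ := by
  simpa using Metric.infDist_le_dist_of_mem (x := a) (s := (T : Set A)) (zero_mem T)

lemma infDist_add_le (a b : A) : Metric.infDist (a + b) (T : Set A) ≤
    Metric.infDist a (T : Set A) + Metric.infDist b (T : Set A) := by
  have hne : (T : Set A).Nonempty := ⟨0, zero_mem T⟩
  rw [← sub_le_iff_le_add, Metric.le_infDist hne]
  intro x hx
  rw [sub_le_comm, Metric.le_infDist hne]
  intro y hy
  have h1 := Metric.infDist_le_dist_of_mem (x := a + b) (s := (T : Set A)) (T.add_mem hx hy)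
  have h2 := dist_add_add_le a b x y
  linarith

lemma infDist_smul_le (c : ℂ) (a : A) :
    Metric.infDist (c • a) (T : Set A) ≤ ‖c‖ * Metric.infDist a (T : Set A) := by
  refine infDist_le_mul_infDist ⟨0, zero_mem T⟩ (norm_nonneg c) fun x hx => ?_
  rw [← dist_smul₀]
  exact Metric.infDist_le_dist_of_mem (SMulMemClass.smul_mem (s := T) c hx)

lemma infDist_star_le [CStarRing A] (a : A) :
    Metric.infDist (star a) (T : Set A) ≤ Metric.infDist a (T : Set A) := by
  rw [Metric.le_infDist ⟨0, zero_mem T⟩]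
  intro x hx
  refine (Metric.infDist_le_dist_of_mem (star_mem (s := T) hx)).trans_eq ?_
  rw [dist_eq_norm, dist_eq_norm, ← star_sub, norm_star]

lemma infDist_mul_le (a b : A) : Metric.infDist (a * b) (T : Set A) ≤
    2 * (‖a‖ * Metric.infDist b (T : Set A) + ‖b‖ * Metric.infDist a (T : Set A)) := by
  have hne : (T : Set A).Nonempty := ⟨0, zero_mem T⟩
  have ha := Metric.infDist_nonneg (x := a) (s := (T : Set A))
  have hb := Metric.infDist_nonneg (x := b) (s := (T : Set A))
  have hbn := infDist_le_norm T b
  -- For a fixed approximant `y` of `b`, optimise over the approximants of `a`.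
  have h1 : ∀ y ∈ T, Metric.infDist (a * b) (T : Set A) ≤
      ‖a‖ * ‖b - y‖ + (‖b‖ + ‖b - y‖) * Metric.infDist a (T : Set A) := by
    intro y hy
    have hy' : ‖y‖ ≤ ‖b‖ + ‖b - y‖ := by
      simpa using norm_sub_le b (b - y)
    rw [← sub_le_iff_le_add']
    have hpos : 0 ≤ ‖b‖ + ‖b - y‖ := by positivity
    rcases hpos.eq_or_lt with h0 | hpos
    · have hb0 : ‖b‖ = 0 := by linarith [norm_nonneg b, norm_nonneg (b - y)]
      have hb0' : b = 0 := norm_eq_zero.mp hb0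
      have : Metric.infDist (a * b) (T : Set A) = 0 := by
        rw [hb0', mul_zero]; exact Metric.infDist_zero_of_mem (zero_mem T)
      rw [this, ← h0]
      have : 0 ≤ ‖a‖ * ‖b - y‖ := by positivity
      linarith
    · rw [← div_le_iff₀' hpos, Metric.le_infDist hne]
      intro x hx
      rw [div_le_iff₀' hpos, sub_le_iff_le_add', dist_eq_norm]
      calc Metric.infDist (a * b) (T : Set A) ≤ ‖a * b - x * y‖ := by
            rw [← dist_eq_norm]; exact Metric.infDist_le_dist_of_mem (T.mul_mem hx hy)
        _ = ‖a * (b - y) + (a - x) * y‖ := by congr 1; noncomm_ring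
        _ ≤ ‖a‖ * ‖b - y‖ + ‖a - x‖ * ‖y‖ :=
            (norm_add_le _ _).trans (add_le_add (norm_mul_le _ _) (norm_mul_le _ _))
        _ ≤ ‖a‖ * ‖b - y‖ + (‖b‖ + ‖b - y‖) * ‖a - x‖ := by
            rw [mul_comm (‖b‖ + _)]; gcongr
  have h2 : Metric.infDist (a * b) (T : Set A) - ‖b‖ * Metric.infDist a (T : Set A) ≤
      (‖a‖ + Metric.infDist a (T : Set A)) * Metric.infDist b (T : Set A) := by
    refine le_of_forall_pos_le_add fun ε hε => ?_
    have hc : 0 < ‖a‖ + Metric.infDist a (T : Set A) + 1 := by positivity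
    obtain ⟨y, hy, hlt⟩ := (Metric.infDist_lt_iff hne).mp
      (lt_add_of_pos_right (Metric.infDist b (T : Set A)) (div_pos hε hc))
    rw [dist_eq_norm] at hlt
    have h3 := h1 y hy
    have h4 : (‖a‖ + Metric.infDist a (T : Set A)) * ‖b - y‖ ≤
        (‖a‖ + Metric.infDist a (T : Set A)) *
          (Metric.infDist b (T : Set A) + ε / (‖a‖ + Metric.infDist a (T : Set A) + 1)) := by
      gcongr
    have h5 : (‖a‖ + Metric.infDist a (T : Set A)) *
        (ε / (‖a‖ + Metric.infDist a (T : Set A) + 1)) ≤ ε := by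
      rw [← mul_div_assoc, div_le_iff₀ hc]
      nlinarith
    linarith
  nlinarith [mul_nonneg (norm_nonneg a) hb, mul_le_mul_of_nonneg_left hbn ha]

end Errors

/-- Quantitative spectral permanence: inversion increases the distance to a closed unital
*-subalgebra at most by the factor `2 ‖a⁻¹‖²`. -/
lemma infDist_inv_le {A : Type*} [CStarAlgebra A] (T : StarSubalgebra ℂ A)
    (hT : IsClosed (T : Set A)) {a b : A} (hab : a * b = 1) (hba : b * a = 1) :
    Metric.infDist b (T : Set A) ≤ 2 * ‖b‖ ^ 2 * Metric.infDist a (T : Set A) := by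
  refine infDist_le_mul_infDist ⟨0, zero_mem T⟩ (by positivity) fun x hx => ?_
  rw [dist_eq_norm]
  by_cases hclose : ‖b‖ * ‖a - x‖ < 1 / 2
  · have hx_unit : IsUnit x := by
      rcases subsingleton_or_nontrivial A with hA | hA
      · exact isUnit_of_subsingleton x
      have hb : 0 < ‖b‖ := norm_pos_iff.mpr (right_ne_zero_of_mul_eq_one hab)
      let u : Aˣ := ⟨a, b, hab, hba⟩
      have hlt : ‖x - (u : A)‖ < ‖(↑u⁻¹ : A)‖⁻¹ := by
        change ‖x - a‖ < ‖b‖⁻¹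
        rw [norm_sub_rev, ← one_div, lt_div_iff₀' hb]
        linarith
      exact (u.ofNearby x hlt).isUnit
    -- Spectral permanence: `x` is already invertible in `T`.
    have hx_unit' : IsUnit (⟨x, hx⟩ : T) := T.coe_isUnit.mp hx_unit
    obtain ⟨⟨y, hy⟩, hyx'⟩ := hx_unit'.exists_left_inv
    have hyx : y * x = 1 := congrArg Subtype.val hyx'
    have hdiff : y - b = y * (a - x) * b := by
      rw [mul_sub, sub_mul, hyx, mul_assoc, hab, mul_one, one_mul]
    have hle : ‖y - b‖ ≤ ‖y‖ * ‖a - x‖ * ‖b‖ := by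
      rw [hdiff]
      exact (norm_mul_le _ _).trans (by gcongr; exact norm_mul_le _ _)
    have hy_le : ‖y‖ ≤ 2 * ‖b‖ := by
      have h1 : ‖y‖ ≤ ‖b‖ + ‖y - b‖ := by simpa using norm_add_le b (y - b)
      nlinarith [norm_nonneg y]
    calc Metric.infDist b (T : Set A) ≤ ‖y - b‖ := by
          rw [← dist_eq_norm, dist_comm]; exact Metric.infDist_le_dist_of_mem hy
      _ ≤ 2 * ‖b‖ * ‖a - x‖ * ‖b‖ := hle.trans (by gcongr)
      _ = 2 * ‖b‖ ^ 2 * ‖a - x‖ := by ring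
  · have h := Metric.infDist_le_dist_of_mem (x := b) (s := (T : Set A)) (zero_mem T)
    rw [dist_zero_right] at h
    nlinarith [norm_nonneg b]

/-- A condition on nonnegative sequences that passes to smaller sequences, to sums and to nonnegative
multiples, and that holds for eventually vanishing sequences. Nothing is required of sequences taking
negative values. -/
structure IsSequenceIdeal (P : (ℕ → ℝ) → Prop) : Prop where
  mono : ∀ f g : ℕ → ℝ, (∀ n, 0 ≤ f n) → (∀ n, f n ≤ g n) → P g → P f
  add : ∀ f g : ℕ → ℝ, (∀ n, 0 ≤ f n) → (∀ n, 0 ≤ g n) → P f → P g → P (fun n => f n + g n)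
  smul : ∀ (c : ℝ) (f : ℕ → ℝ), 0 ≤ c → (∀ n, 0 ≤ f n) → P f → P (fun n => c * f n)
  of_eventually_zero : ∀ (f : ℕ → ℝ) (N : ℕ), (∀ n, N ≤ n → f n = 0) → P f

lemma isSequenceIdeal_summable_rpow {p : ℝ} (hp : 1 ≤ p) :
    IsSequenceIdeal fun f => Summable fun n => f n ^ p where
  mono f g hf hfg hg := hg.of_nonneg_of_le (fun n => Real.rpow_nonneg (hf n) p)
    fun n => Real.rpow_le_rpow (hf n) (hfg n) (by linarith)
  add f g hf hg hfs hgs := Real.summable_Lp_add_of_nonneg hp hf hg hfs hgs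
  smul c f hc hf hfs := by
    simp_rw [Real.mul_rpow hc (hf _)]
    exact hfs.mul_left _
  of_eventually_zero f N h := by
    refine summable_of_ne_finset_zero (s := Finset.range N) fun n hn => ?_
    rw [h n (by simpa using hn), Real.zero_rpow (by linarith)]

lemma isSequenceIdeal_bounded :
    IsSequenceIdeal fun f => ∃ K : ℝ, ∀ n, f n ≤ K where
  mono f g _ hfg := fun ⟨K, hK⟩ => ⟨K, fun n => (hfg n).trans (hK n)⟩
  add f g _ _ := fun ⟨K, hK⟩ ⟨L, hL⟩ => ⟨K + L, fun n => add_le_add (hK n) (hL n)⟩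
  smul c f hc _ := fun ⟨K, hK⟩ => ⟨c * K, fun n => mul_le_mul_of_nonneg_left (hK n) hc⟩
  of_eventually_zero f N h := by
    obtain ⟨K, hK⟩ := ((Finset.range N).image f).bddAbove
    refine ⟨max K 0, fun n => ?_⟩
    rcases lt_or_ge n N with hn | hn
    · exact le_max_of_le_left (hK (by simpa using ⟨n, hn, rfl⟩))
    · rw [h n hn]; exact le_max_right _ _

/-- Both exponent ranges at once: the elements whose weighted approximation errors lie in a
sequence ideal form an inverse-closed dense *-subalgebra. -/
lemma approximationSpace_of_isSequenceIdeal
    {A : Type*} [NormedRing A] [StarRing A] [CStarRing A] [NormedAlgebra ℂ A]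
    {X : ℕ → Set A} (hXmono : Monotone X)
    (hX : ∀ n, ∃ T : NonUnitalStarSubalgebra ℂ A, X n = T)
    (hone : (1 : A) ∈ X 1)
    (hinv : ∀ a b : A, a * b = 1 → b * a = 1 → ∀ n,
      Metric.infDist b (X n) ≤ 2 * ‖b‖ ^ 2 * Metric.infDist a (X n))
    (hXdense : Dense (⋃ n, X n))
    {w : ℕ → ℝ} (hw : ∀ n, 0 < w n) {P : (ℕ → ℝ) → Prop} (hP : IsSequenceIdeal P)
    {S : Set A} (hS : S = {a : A | P fun n => Metric.infDist a (X n) * w n}) :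
    (1 : A) ∈ S ∧
      (∀ a ∈ S, ∀ b ∈ S, a + b ∈ S ∧ a * b ∈ S) ∧
      (∀ (c : ℂ), ∀ a ∈ S, c • a ∈ S) ∧
      (∀ a ∈ S, star a ∈ S) ∧
      Dense S ∧
      (∀ a ∈ S, ∀ b : A, a * b = 1 → b * a = 1 → b ∈ S) := by
  choose T hT using hX
  have hnn : ∀ (a : A) (n : ℕ), 0 ≤ Metric.infDist a (X n) * w n :=
    fun a n => mul_nonneg Metric.infDist_nonneg (hw n).le
  have hsub : ∀ N, X N ⊆ S := by
    intro N a ha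
    rw [hS]
    refine hP.of_eventually_zero _ N fun n hn => ?_
    rw [Metric.infDist_zero_of_mem (hXmono hn ha), zero_mul]
  have hdom : ∀ (K : ℝ) (a b : A), 0 ≤ K → a ∈ S →
      (∀ n, Metric.infDist b (X n) ≤ K * Metric.infDist a (X n)) → b ∈ S := by
    intro K a b hK ha h
    rw [hS] at ha ⊢
    refine hP.mono _ _ (hnn b) (fun n => ?_) (hP.smul K _ hK (hnn a) ha)
    rw [← mul_assoc]
    exact mul_le_mul_of_nonneg_right (h n) (hw n).le
  have hdom2 : ∀ (K L : ℝ) (a b c : A), 0 ≤ K → 0 ≤ L → a ∈ S → b ∈ S →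
      (∀ n, Metric.infDist c (X n) ≤
        K * Metric.infDist a (X n) + L * Metric.infDist b (X n)) → c ∈ S := by
    intro K L a b c hK hL ha hb h
    rw [hS] at ha hb ⊢
    refine hP.mono _ _ (hnn c) (fun n => ?_) (hP.add _ _ (fun n => mul_nonneg hK (hnn a n))
      (fun n => mul_nonneg hL (hnn b n)) (hP.smul K _ hK (hnn a) ha) (hP.smul L _ hL (hnn b) hb))
    rw [← mul_assoc, ← mul_assoc, ← add_mul]
    exact mul_le_mul_of_nonneg_right (h n) (hw n).le
  refine ⟨hsub 1 hone, fun a ha b hb => ⟨?_, ?_⟩, fun c a ha => ?_, fun a ha => ?_, ?_,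
    fun a ha b hab hba => ?_⟩
  · refine hdom2 1 1 a b _ zero_le_one zero_le_one ha hb fun n => ?_
    rw [hT, one_mul, one_mul]
    exact infDist_add_le _ a b
  · refine hdom2 (2 * ‖b‖) (2 * ‖a‖) a b _ (by positivity) (by positivity) ha hb fun n => ?_
    rw [hT]
    linarith [infDist_mul_le (T n) a b]
  · refine hdom ‖c‖ a _ (norm_nonneg c) ha fun n => ?_
    rw [hT]
    exact infDist_smul_le _ c a
  · refine hdom 1 a _ zero_le_one ha fun n => ?_
    rw [hT, one_mul]
    exact infDist_star_le _ a
  · exact hXdense.mono (Set.iUnion_subset hsub)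
  · exact hdom _ a b (by positivity) ha (hinv a b hab hba)

/-- Let `A` be a unital C*-algebra and `(X_n)_{n ≥ 1}` an increasing
sequence of closed *-subalgebras containing `1` with dense union, `X_0 = {0}`, and
`E_n(a) = dist(a, X_n)`. For any weight `w > 0` and `1 ≤ p ≤ ∞`, the generalized
approximation space `Ẽ^p_w` is a dense *-subalgebra of `A` which is inverse-closed in `A`;
moreover `E_n(ab) ≤ C (‖a‖ E_n(b) + ‖b‖ E_n(a))` for some constant `C`. -/
theorem uhf_generalized_approximation_space
    {A : Type*} [NormedRing A] [StarRing A] [CStarRing A] [NormedAlgebra ℂ A]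
    [CompleteSpace A] [StarModule ℂ A] [Nontrivial A]
    (X : ℕ → Set A)
    (hX0 : X 0 = {0})
    (hXmono : ∀ n, X n ⊆ X (n + 1))
    (hXclosed : ∀ n, 1 ≤ n → IsClosed (X n))
    (hXone : ∀ n, 1 ≤ n → (1 : A) ∈ X n)
    (hXadd : ∀ n, 1 ≤ n → ∀ a ∈ X n, ∀ b ∈ X n, a + b ∈ X n)
    (hXmul : ∀ n, 1 ≤ n → ∀ a ∈ X n, ∀ b ∈ X n, a * b ∈ X n)
    (hXsmul : ∀ n, 1 ≤ n → ∀ (c : ℂ), ∀ a ∈ X n, c • a ∈ X n)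
    (hXstar : ∀ n, 1 ≤ n → ∀ a ∈ X n, star a ∈ X n)
    (hXdense : Dense (⋃ n, X n))
    (w : ℕ → ℝ) (hw : ∀ n, 0 < w n) :
    (∃ C : ℝ, 0 < C ∧ ∀ (a b : A) (n : ℕ),
      Metric.infDist (a * b) (X n) ≤
        C * (‖a‖ * Metric.infDist b (X n) + ‖b‖ * Metric.infDist a (X n))) ∧
    (∀ p : ℝ, 1 ≤ p → ∀ S : Set A,
      S = {a : A | Summable (fun n : ℕ => (Metric.infDist a (X n) * w n) ^ p)} →
      (1 : A) ∈ S ∧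
      (∀ a ∈ S, ∀ b ∈ S, a + b ∈ S ∧ a * b ∈ S) ∧
      (∀ (c : ℂ), ∀ a ∈ S, c • a ∈ S) ∧
      (∀ a ∈ S, star a ∈ S) ∧
      Dense S ∧
      (∀ a ∈ S, ∀ b : A, a * b = 1 → b * a = 1 → b ∈ S)) ∧
    (∀ S : Set A,
      S = {a : A | ∃ K : ℝ, ∀ n : ℕ, Metric.infDist a (X n) * w n ≤ K} →
      (1 : A) ∈ S ∧
      (∀ a ∈ S, ∀ b ∈ S, a + b ∈ S ∧ a * b ∈ S) ∧
      (∀ (c : ℂ), ∀ a ∈ S, c • a ∈ S) ∧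
      (∀ a ∈ S, star a ∈ S) ∧
      Dense S ∧
      (∀ a ∈ S, ∀ b : A, a * b = 1 → b * a = 1 → b ∈ S)) := by
  have hXmono' : Monotone X := monotone_nat_of_le_succ hXmono
  have hzero : ∀ n, 1 ≤ n → (0 : A) ∈ X n := fun n hn => by
    simpa using hXsmul n hn 0 1 (hXone n hn)
  have hunital : ∀ n, 1 ≤ n → ∃ T : StarSubalgebra ℂ A, X n = T := fun n hn =>
    ⟨{ carrier := X n
       mul_mem' := fun {a b} ha hb => hXmul n hn a ha b hb
       one_mem' := hXone n hn
       add_mem' := fun {a b} ha hb => hXadd n hn a ha b hb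
       zero_mem' := hzero n hn
       algebraMap_mem' := fun c => by
         rw [Algebra.algebraMap_eq_smul_one]; exact hXsmul n hn c 1 (hXone n hn)
       star_mem' := fun {a} ha => hXstar n hn a ha }, rfl⟩
  have hX : ∀ n, ∃ T : NonUnitalStarSubalgebra ℂ A, X n = T := by
    intro n
    rcases Nat.eq_zero_or_pos n with rfl | hn
    · exact ⟨⊥, by rw [hX0, NonUnitalStarAlgebra.coe_bot]⟩
    · obtain ⟨T, hT⟩ := hunital n hn
      exact ⟨T.toNonUnitalStarSubalgebra, hT⟩
  have hinv : ∀ a b : A, a * b = 1 → b * a = 1 → ∀ n,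
      Metric.infDist b (X n) ≤ 2 * ‖b‖ ^ 2 * Metric.infDist a (X n) := by
    intro a b hab hba n
    rcases Nat.eq_zero_or_pos n with rfl | hn
    · have h1 : 1 ≤ ‖a‖ * ‖b‖ := by
        rw [← CStarRing.norm_one (E := A), ← hab]; exact norm_mul_le a b
      rw [hX0, Metric.infDist_singleton, Metric.infDist_singleton, dist_zero_right,
        dist_zero_right]
      nlinarith [norm_nonneg b]
    · obtain ⟨T, hT⟩ := hunital n hn
      have hclosed := hXclosed n hn
      rw [hT] at hclosed ⊢
      let _ : CStarAlgebra A := {}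
      exact infDist_inv_le T hclosed hab hba
  refine ⟨⟨2, two_pos, fun a b n => ?_⟩, fun p hp S hS => ?_, fun S hS => ?_⟩
  · obtain ⟨T, hT⟩ := hX n
    rw [hT]
    exact infDist_mul_le T a b
  · exact approximationSpace_of_isSequenceIdeal hXmono' hX (hXone 1 le_rfl) hinv hXdense hw
      (isSequenceIdeal_summable_rpow hp) hS
  · exact approximationSpace_of_isSequenceIdeal hXmono' hX (hXone 1 le_rfl) hinv hXdense hw
      isSequenceIdeal_bounded hS
end
end

section
/- Let r > 0 and let A : ℤ^d × ℤ^d → ℂ be a matrix in the Jaffard class J_r, i.e. with N_m(A) = (1+|m|)^r sup_{k−l = m} |A(k,l)| satisfying sup_{m∈ℤ^d} N_m(A) < ∞. Then ‖χ_t(A) − A‖_{J_r} = sup_{m∈ℤ^d} N_m(A) |e^{2πi m·t} − 1| tends to 0 as t → 0 in ℝ^d if and only if N_m(A) → 0 as |m| → ∞. (That is, A is a strongly continuous element of J_r with respect to the modulation group if and only if the J_r-norms of its side diagonals vanish at infinity.) -/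
/-!
Write `e(x) = exp (2πix)`. Membership of `A` in `J_r` means `0 ≤ N m ≤ M` for all `m`, so the
supremum over `m` is a genuine one, bounded by `2 M`.

If `N` vanishes at infinity, then all but finitely many terms `N m * |e(m·t) - 1|` are small
uniformly in `t`, since `|e(m·t) - 1| ≤ 2`, and the finitely many others are small for `t` near `0`
by continuity of `e`.

Conversely, suppose that the supremum is less than `ε` for `|t| < δ`. If `m` has a coordinate with
`1 / (2 |m j|) < δ`, then the vector `t` along the `j`-th axis with `t j = 1 / (2 m j)` satisfies
`|t| < δ` and `m·t = 1/2`, hence `e(m·t) - 1 = -2` and `2 * N m < ε`. The remaining `m` lie in a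
bounded box of `ℤ^d`, which is finite.
-/


open Filter Topology

noncomputable section

/-- The modulation phase `e^{2πi m·t}` on the `m`-th side diagonal. -/
def phase {d : ℕ} (m : Fin d → ℤ) (t : Fin d → ℝ) : ℂ :=
  Complex.exp (2 * Real.pi * Complex.I * (∑ j, (m j : ℝ) * t j : ℝ))

lemma norm_phase_sub_one_le {d : ℕ} (m : Fin d → ℤ) (t : Fin d → ℝ) :
    ‖phase m t - 1‖ ≤ 2 := by
  have h1 : ‖phase m t‖ = 1 := by
    have h := Complex.norm_exp_ofReal_mul_I (2 * Real.pi * ∑ j, (m j : ℝ) * t j)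
    rw [← h, phase]
    congr 2
    push_cast
    ring
  calc ‖phase m t - 1‖ ≤ ‖phase m t‖ + ‖(1 : ℂ)‖ := norm_sub_le _ _
    _ = 2 := by rw [h1, norm_one]; norm_num

lemma tendsto_norm_phase_sub_one {d : ℕ} (m : Fin d → ℤ) :
    Tendsto (fun t : Fin d → ℝ => ‖phase m t - 1‖) (𝓝 0) (𝓝 0) := by
  have hc : Continuous fun t : Fin d → ℝ => ‖phase m t - 1‖ := by
    unfold phase
    fun_prop
  have h := hc.tendsto 0
  simpa [phase] using h

/-- Along a coordinate axis with `m j ≠ 0` there is a point at which the phase is `-1`. -/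
lemma norm_phase_single_sub_one {d : ℕ} (m : Fin d → ℤ) (j : Fin d) (hj : m j ≠ 0) :
    ‖phase m (Pi.single j (1 / (2 * (m j : ℝ)))) - 1‖ = 2 := by
  have hj' : (m j : ℝ) ≠ 0 := by exact_mod_cast hj
  have hs : ∑ i, (m i : ℝ) * (Pi.single j (1 / (2 * (m j : ℝ))) : Fin d → ℝ) i = 1 / 2 := by
    rw [Finset.sum_eq_single j]
    · rw [Pi.single_eq_same]
      field_simp
    · intro i _ hi
      rw [Pi.single_eq_of_ne hi, mul_zero]
    · simp
  have he : phase m (Pi.single j (1 / (2 * (m j : ℝ)))) = -1 := by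
    rw [phase, hs, ← Complex.exp_pi_mul_I]
    congr 1
    push_cast
    ring
  rw [he]
  norm_num

/-- The equivalence for an arbitrary bounded nonnegative family of side-diagonal norms. -/
lemma tendsto_iSup_phase_iff {d : ℕ} (N : (Fin d → ℤ) → ℝ) (M : ℝ)
    (h0 : ∀ m, 0 ≤ N m) (hM : ∀ m, N m ≤ M) :
    Tendsto (fun t : Fin d → ℝ => ⨆ m : Fin d → ℤ, N m * ‖phase m t - 1‖) (𝓝 0) (𝓝 0) ↔
    Tendsto N cofinite (𝓝 0) := by
  have hbdd : ∀ t : Fin d → ℝ,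
      BddAbove (Set.range fun m : Fin d → ℤ => N m * ‖phase m t - 1‖) := by
    intro t
    refine ⟨M * 2, ?_⟩
    rintro _ ⟨m, rfl⟩
    exact mul_le_mul (hM m) (norm_phase_sub_one_le m t) (norm_nonneg _) ((h0 m).trans (hM m))
  have hnn : ∀ t : Fin d → ℝ, 0 ≤ ⨆ m : Fin d → ℤ, N m * ‖phase m t - 1‖ := fun t =>
    Real.iSup_nonneg fun m => mul_nonneg (h0 m) (norm_nonneg _)
  constructor
  · intro h
    rw [Metric.tendsto_nhds]
    intro ε hε
    obtain ⟨δ, hδ, hball⟩ := Metric.eventually_nhds_iff.1 (h.eventually (gt_mem_nhds hε))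
    obtain ⟨K, hK⟩ := exists_nat_gt (1 / (2 * δ))
    refine (Set.finite_Icc (fun _ : Fin d => -(K : ℤ)) (fun _ => (K : ℤ))).subset ?_
    intro m hm
    by_contra hbox
    -- Some coordinate of `m` exceeds `K` in absolute value.
    obtain ⟨j, hj⟩ : ∃ j, (K : ℤ) < |m j| := by
      by_contra! hcon
      exact hbox ⟨fun j => (abs_le.1 (hcon j)).1, fun j => (abs_le.1 (hcon j)).2⟩
    have hjR : (K : ℝ) < |(m j : ℝ)| := by exact_mod_cast hj
    have hpos : 0 < |(m j : ℝ)| := (Nat.cast_nonneg K).trans_lt hjR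
    have hj0 : m j ≠ 0 := by
      intro h'
      simp [h'] at hpos
    have hdist : dist (Pi.single j (1 / (2 * (m j : ℝ))) : Fin d → ℝ) 0 < δ := by
      rw [dist_zero_right, Pi.norm_single, Real.norm_eq_abs, abs_div, abs_mul, abs_one, abs_two,
        div_lt_iff₀ (by positivity)]
      have := hK.trans hjR
      rw [div_lt_iff₀ (by positivity)] at this
      linarith
    have hlt := (le_ciSup (hbdd _) m).trans_lt (hball hdist)
    simp only [norm_phase_single_sub_one m j hj0] at hlt
    apply hm
    change dist (N m) 0 < ε
    rw [Real.dist_0_eq_abs, abs_of_nonneg (h0 m)]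
    linarith [h0 m]
  · intro h
    rw [Metric.tendsto_nhds]
    intro ε hε
    have hfin : {m | ¬ N m < ε / 4}.Finite :=
      h.eventually (gt_mem_nhds (show (0 : ℝ) < ε / 4 by linarith))
    have hev : ∀ᶠ t : Fin d → ℝ in 𝓝 0,
        ∀ m ∈ {m | ¬ N m < ε / 4}, N m * ‖phase m t - 1‖ < ε / 2 := by
      refine (eventually_all_finite hfin).2 fun m _ => ?_
      have hm := (tendsto_norm_phase_sub_one m).const_mul (N m)
      rw [mul_zero] at hm
      exact hm.eventually (gt_mem_nhds (by linarith))
    filter_upwards [hev] with t ht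
    rw [Real.dist_0_eq_abs, abs_of_nonneg (hnn t)]
    refine (ciSup_le fun m => ?_ : _ ≤ ε / 2).trans_lt (by linarith)
    by_cases hm : N m < ε / 4
    · nlinarith [mul_le_mul_of_nonneg_left (norm_phase_sub_one_le m t) (h0 m)]
    · exact (ht m hm).le

/-- Let `A ∈ J_r` and let `N m = (1+|m|)^r sup_{k} |A(k, k-m)|` be the
`J_r`-norm of the `m`-th side diagonal. Then `‖χ_t(A) - A‖_{J_r} =
sup_m N m |e^{2πi m·t} - 1| → 0` as `t → 0` if and only if `N m → 0` as `|m| → ∞`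
(i.e. along the cofinite filter on `ℤ^d`). -/
theorem jaffard_strong_continuity_iff_vanishing_diagonals
    (d : ℕ) (r : ℝ) (hr : 0 < r)
    (A : (Fin d → ℤ) → (Fin d → ℤ) → ℂ)
    (M : ℝ)
    (hA : ∀ k l : Fin d → ℤ,
      ‖A k l‖ * (1 + ∑ j, |((k j - l j : ℤ) : ℝ)|) ^ r ≤ M)
    (N : (Fin d → ℤ) → ℝ)
    (hN : ∀ m : Fin d → ℤ,
      N m = (1 + ∑ j, |((m j : ℤ) : ℝ)|) ^ r * ⨆ k : Fin d → ℤ, ‖A k (k - m)‖) :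
    Tendsto (fun t : Fin d → ℝ =>
        ⨆ m : Fin d → ℤ,
          N m * ‖Complex.exp (2 * Real.pi * Complex.I * (∑ j, (m j : ℝ) * t j : ℝ)) - 1‖)
      (𝓝 0) (𝓝 0) ↔
    Tendsto N cofinite (𝓝 0) := by
  have hw : ∀ m : Fin d → ℤ, 0 ≤ (1 + ∑ j, |((m j : ℤ) : ℝ)|) ^ r := fun m => by positivity
  refine tendsto_iSup_phase_iff N M (fun m => ?_) (fun m => ?_)
  · rw [hN]
    exact mul_nonneg (hw m) (Real.iSup_nonneg fun k => norm_nonneg _)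
  · rw [hN, Real.mul_iSup_of_nonneg (hw m)]
    refine ciSup_le fun k => ?_
    simpa [mul_comm] using hA k (k - m)
end
end

section
/- Let A be a unital complex Banach algebra and Ψ = (ψ_t)_{t∈ℝ^d} a uniformly bounded d-parameter group of algebra automorphisms of A. Let 0 < r < 1 and C > 0, and let (b_k)_{k≥0} be a sequence in A satisfying ‖b_k‖_A ≤ C 2^{−rk} for all k and the Bernstein-type estimate ‖ψ_t(b_k) − b_k‖_A ≤ C 2^k |t| ‖b_k‖_A for all t ∈ ℝ^d and all k. Then the series a = Σ_{k≥0} b_k converges in A, and there is a constant C' > 0 such that ‖ψ_t(a) − a‖_A ≤ C' |t|^r for all t ∈ ℝ^d, t ≠ 0; i.e. a lies in the Hölder–Zygmund space Λ_r(A). -/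
/-!
Put `τ = |t|`. Each increment `ψ_t(b_k) - b_k` has norm at most `C² τ 2^k 2^{-rk}`, by the Bernstein
estimate, and at most `(M + 1) C 2^{-rk}`, by uniform boundedness. The first bound grows
geometrically in `k` (as `r < 1`) and the second decays geometrically (as `0 < r`). Splitting the
sum at the least `N` with `2^N τ ≥ 1` makes each part comparable to its term at the splitting point,
which is of order `τ^r`; this is `exists_dyadic_sum_bound`. The bound on the partial sums, uniform in
their length, passes to the limit by continuity of `ψ_t`.
-/

open Filter Topology

noncomputable section

/-- `2^{-r}`, the ratio of the geometric decay, lies in `(1/2, 1)` for `0 < r < 1`. -/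
lemma two_rpow_neg_bounds {r : ℝ} (hr0 : 0 < r) (hr1 : r < 1) :
    1 / 2 < (2 : ℝ) ^ (-r) ∧ (2 : ℝ) ^ (-r) < 1 := by
  constructor
  · have h : (2 : ℝ) ^ (-1 : ℝ) < (2 : ℝ) ^ (-r) :=
      Real.rpow_lt_rpow_of_exponent_lt (by norm_num) (by linarith)
    rw [Real.rpow_neg_one] at h
    linarith
  · exact Real.rpow_lt_one_of_one_lt_of_neg (by norm_num) (by linarith)

lemma two_rpow_neg_pow (r : ℝ) (n : ℕ) :
    ((2 : ℝ) ^ (-r)) ^ n = ((2 : ℝ) ^ n) ^ (-r) := by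
  rw [← Real.rpow_mul_natCast (by norm_num), ← Real.rpow_natCast_mul (by norm_num), mul_comm]

/-- At a scale `x` with `x τ ≥ 1`, the decaying bound is at most `τ^r`. -/
lemma rpow_neg_le_of_one_le_mul {r x τ : ℝ} (hr0 : 0 < r) (hx : 0 < x) (hτ : 0 < τ)
    (h : 1 ≤ x * τ) : x ^ (-r) ≤ τ ^ r := by
  have h1 : 1 ≤ (x * τ) ^ r := Real.one_le_rpow h hr0.le
  rw [Real.mul_rpow hx.le hτ.le] at h1
  rw [Real.rpow_neg hx.le, inv_le_iff_one_le_mul₀ (Real.rpow_pos_of_pos hx r), mul_comm]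
  exact h1

/-- At a scale `x` with `x τ ≤ 1`, the growing bound is at most `τ^r`. -/
lemma mul_rpow_neg_le_of_mul_le_one {r x τ : ℝ} (hr1 : r < 1) (hx : 0 < x) (hτ : 0 < τ)
    (h : x * τ ≤ 1) : x * τ * x ^ (-r) ≤ τ ^ r := by
  have h1 : (x * τ) ^ (1 - r) ≤ 1 := Real.rpow_le_one (by positivity) h (by linarith)
  have h2 : x * τ * x ^ (-r) = (x * τ) ^ (1 - r) * τ ^ r := by
    rw [Real.rpow_sub (by positivity), Real.rpow_one, Real.mul_rpow hx.le hτ.le,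
      Real.rpow_neg hx.le]
    have := Real.rpow_pos_of_pos hx r
    have := Real.rpow_pos_of_pos hτ r
    field_simp
  rw [h2]
  exact mul_le_of_le_one_left (by positivity) h1

/-- A nonnegative sequence dominated both by `D τ 2^k 2^{-rk}` and by `K 2^{-rk}` has partial sums of
order `τ^r`, with a constant that depends only on `r`, `D` and `K`. -/
lemma exists_dyadic_sum_bound {r D K : ℝ} (hr0 : 0 < r) (hr1 : r < 1) (hD : 0 < D) (hK : 0 < K) :
    ∃ C' : ℝ, 0 < C' ∧ ∀ (τ : ℝ) (f : ℕ → ℝ), 0 < τ → (∀ k, 0 ≤ f k) →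
      (∀ k, f k ≤ D * τ * (2 * (2 : ℝ) ^ (-r)) ^ k) → (∀ k, f k ≤ K * ((2 : ℝ) ^ (-r)) ^ k) →
      ∀ n, ∑ k ∈ Finset.range n, f k ≤ C' * τ ^ r := by
  obtain ⟨hq0, hq1⟩ := two_rpow_neg_bounds hr0 hr1
  have hpow := two_rpow_neg_pow r
  set q : ℝ := (2 : ℝ) ^ (-r) with hq
  have hp1 : 0 < 2 * q - 1 := by linarith
  have hq1' : 0 < 1 - q := by linarith
  have hq00 : 0 < q := by linarith
  refine ⟨D * (2 * q / (2 * q - 1)) + K * (1 / (1 - q)), by positivity, ?_⟩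
  intro τ f hτ hf0 hfD hfK n
  have hex : ∃ m : ℕ, 1 ≤ (2 : ℝ) ^ m * τ := by
    obtain ⟨m, hm⟩ := pow_unbounded_of_one_lt τ⁻¹ (one_lt_two (α := ℝ))
    exact ⟨m, ((inv_lt_iff_one_lt_mul₀ hτ).1 hm).le⟩
  classical
  obtain ⟨N, hN, hmin⟩ : ∃ N : ℕ, 1 ≤ (2 : ℝ) ^ N * τ ∧ ∀ m < N, (2 : ℝ) ^ m * τ < 1 :=
    ⟨Nat.find hex, Nat.find_spec hex, fun m hm => not_le.1 (Nat.find_min hex hm)⟩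
  have hhead : ∑ k ∈ Finset.range N, f k ≤ D * (2 * q / (2 * q - 1)) * τ ^ r := by
    rcases N with _ | m
    · simp only [Finset.range_zero, Finset.sum_empty]
      positivity
    · have hm : (2 : ℝ) ^ m * τ * q ^ m ≤ τ ^ r := by
        rw [hpow]
        exact mul_rpow_neg_le_of_mul_le_one hr1 (by positivity) hτ (hmin m (Nat.lt_succ_self m)).le
      calc ∑ k ∈ Finset.range (m + 1), f k
          ≤ ∑ k ∈ Finset.range (m + 1), D * τ * (2 * q) ^ k := Finset.sum_le_sum fun k _ => hfD k
        _ = D * τ * (((2 * q) ^ (m + 1) - 1) / (2 * q - 1)) := by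
            rw [← Finset.mul_sum, geom_sum_eq (by linarith)]
        _ ≤ D * τ * ((2 * q) ^ (m + 1) / (2 * q - 1)) := by
            gcongr
            linarith
        _ = D * (2 * q / (2 * q - 1)) * ((2 : ℝ) ^ m * τ * q ^ m) := by
            rw [pow_succ, mul_pow]
            ring
        _ ≤ D * (2 * q / (2 * q - 1)) * τ ^ r := by gcongr
  have htail : ∑ k ∈ Finset.range n, f (N + k) ≤ K * (1 / (1 - q)) * τ ^ r := by
    have hqN : q ^ N ≤ τ ^ r := by
      rw [hpow]
      exact rpow_neg_le_of_one_le_mul hr0 (by positivity) hτ hN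
    have hgeom : ∑ k ∈ Finset.range n, q ^ k ≤ 1 / (1 - q) := by
      rw [one_div, ← tsum_geometric_of_lt_one hq00.le hq1]
      exact (summable_geometric_of_lt_one hq00.le hq1).sum_le_tsum _ fun k _ => by positivity
    calc ∑ k ∈ Finset.range n, f (N + k)
        ≤ ∑ k ∈ Finset.range n, K * q ^ N * q ^ k := Finset.sum_le_sum fun k _ => by
          rw [mul_assoc, ← pow_add]
          exact hfK (N + k)
      _ = K * (∑ k ∈ Finset.range n, q ^ k) * q ^ N := by
          rw [← Finset.mul_sum]
          ring
      _ ≤ K * (1 / (1 - q)) * τ ^ r := by gcongr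
  calc ∑ k ∈ Finset.range n, f k
      ≤ ∑ k ∈ Finset.range (N + n), f k :=
        Finset.sum_le_sum_of_subset_of_nonneg (Finset.range_mono (Nat.le_add_left n N))
          fun k _ _ => hf0 k
    _ = ∑ k ∈ Finset.range N, f k + ∑ k ∈ Finset.range n, f (N + k) := Finset.sum_range_add f N n
    _ ≤ _ := by linarith

/-- If `(b_k)` satisfies `‖b_k‖ ≤ C 2^{-rk}` and the Bernstein-type
estimate `‖ψ_t(b_k) - b_k‖ ≤ C 2^k |t| ‖b_k‖` (with `|t|` the 1-norm), then the series
`a = Σ_k b_k` converges in `A` and `a` lies in the Hölder–Zygmund space `Λ_r(A)`: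
`‖ψ_t(a) - a‖ ≤ C' |t|^r` for all `t ≠ 0`. -/
theorem bernstein_series_in_holderZygmund
    {A : Type*} [NormedRing A] [NormedAlgebra ℂ A] [CompleteSpace A] [NormOneClass A]
    (d : ℕ) (ψ : (Fin d → ℝ) → A →L[ℂ] A)
    (hmul : ∀ t (a b : A), ψ t (a * b) = ψ t a * ψ t b)
    (hone : ∀ t, ψ t 1 = 1)
    (hgroup : ∀ s t, (ψ s).comp (ψ t) = ψ (s + t))
    (hzero : ψ 0 = ContinuousLinearMap.id ℂ A)
    (M : ℝ) (hM : ∀ t, ‖ψ t‖ ≤ M)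
    (r C : ℝ) (hr0 : 0 < r) (hr1 : r < 1) (hC : 0 < C)
    (b : ℕ → A)
    (hb : ∀ k : ℕ, ‖b k‖ ≤ C * (2 : ℝ) ^ (-(r * k)))
    (hbern : ∀ (k : ℕ) (t : Fin d → ℝ),
      ‖ψ t (b k) - b k‖ ≤ C * (2 : ℝ) ^ k * (∑ j, |t j|) * ‖b k‖) :
    ∃ a : A,
      Tendsto (fun n : ℕ => ∑ k ∈ Finset.range n, b k) atTop (𝓝 a) ∧
      ∃ C' : ℝ, 0 < C' ∧ ∀ t : Fin d → ℝ, t ≠ 0 →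
        ‖ψ t a - a‖ ≤ C' * (∑ j, |t j|) ^ r := by
  have hq := two_rpow_neg_bounds hr0 hr1
  have hb' : ∀ k, ‖b k‖ ≤ C * ((2 : ℝ) ^ (-r)) ^ k := fun k => by
    rw [← Real.rpow_mul_natCast (by norm_num), neg_mul]
    exact hb k
  have hM0 : 0 ≤ M := (norm_nonneg _).trans (hM 0)
  have hsum : Summable b := Summable.of_norm_bounded
    ((summable_geometric_of_lt_one (by linarith) hq.2).mul_left C) hb'
  refine ⟨∑' k, b k, hsum.hasSum.tendsto_sum_nat, ?_⟩
  obtain ⟨C', hC', hbound⟩ :=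
    exists_dyadic_sum_bound (D := C * C) (K := (M + 1) * C) hr0 hr1 (by positivity) (by positivity)
  refine ⟨C', hC', fun t ht => ?_⟩
  have hτ : 0 < ∑ j, |t j| := by
    obtain ⟨j, hj⟩ := Function.ne_iff.1 ht
    exact Finset.sum_pos' (fun i _ => abs_nonneg _) ⟨j, Finset.mem_univ j, abs_pos.2 hj⟩
  have hlim := hsum.hasSum.tendsto_sum_nat
  have hlim' := ((((ψ t).continuous.tendsto _).comp hlim).sub hlim).norm
  refine le_of_tendsto hlim' (Eventually.of_forall fun n => ?_)
  have hpartial := hbound (∑ j, |t j|) (fun k => ‖ψ t (b k) - b k‖) hτ (fun k => norm_nonneg _)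
    (fun k => by
      calc ‖ψ t (b k) - b k‖ ≤ C * (2 : ℝ) ^ k * (∑ j, |t j|) * ‖b k‖ := hbern k t
        _ ≤ C * (2 : ℝ) ^ k * (∑ j, |t j|) * (C * ((2 : ℝ) ^ (-r)) ^ k) := by
            gcongr
            exact hb' k
        _ = C * C * (∑ j, |t j|) * (2 * (2 : ℝ) ^ (-r)) ^ k := by
            rw [mul_pow]
            ring)
    (fun k => by
      calc ‖ψ t (b k) - b k‖ ≤ ‖ψ t (b k)‖ + ‖b k‖ := norm_sub_le _ _
        _ ≤ M * ‖b k‖ + ‖b k‖ := by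
            gcongr
            exact (ψ t).le_of_opNorm_le (hM t) _
        _ = (M + 1) * ‖b k‖ := by ring
        _ ≤ (M + 1) * (C * ((2 : ℝ) ^ (-r)) ^ k) := by
            gcongr
            exact hb' k
        _ = (M + 1) * C * ((2 : ℝ) ^ (-r)) ^ k := by ring) n
  simp only [Function.comp_apply, map_sum, ← Finset.sum_sub_distrib]
  exact (norm_sum_le _ _).trans hpartial
end
end

section
/- Let 0 < r ≤ 1 and let A : ℤ^d × ℤ^d → ℂ be a matrix; write c_l(A) = sup_{m∈ℤ^d} |A(m,m−l)| for l ∈ ℤ^d. Then the following are equivalent: (i) Σ_{l∈ℤ^d} c_l(A) < ∞ and sup_{t∈ℝ^d, t≠0} |t|^{−r} Σ_{l∈ℤ^d} 4 sin²(π l·t) c_l(A) < ∞ (A lies in the Hölder–Zygmund space Λ_r(C_0) for the modulation group); (ii) sup_{n≥0} (n+1)^r Σ_{|l| ≥ n} c_l(A) < ∞ (A lies in the approximation space E_r^∞(C_0) for approximation by banded matrices); (iii) c_0(A) < ∞ and sup_{k≥0} 2^{rk} Σ_{2^k ≤ |l| < 2^{k+1}} c_l(A) < ∞. -/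
/-!
Put `c l = sideDiagSup d A l`, let `|l|` be the 1-norm, and call `∑_{|l| ≥ n} c l` the tail at `n`.

* Dyadic blocks control tails (`tail_le_of_dyadic`): if the blocks `2^k ≤ f l < 2^(k+1)` of an
  ℕ-valued weight `f` carry mass `O(2^(-kr))`, a geometric series gives tails `O(n^(-r))`. With
  `f l = |l|` this is (iii) ⇒ (ii); the converse holds because a block is part of a tail.
* (i) ⇒ (ii): take `f l = d |l_j|` for a fixed coordinate `j`. On the block
  `2^k ≤ d |l_j| < 2^(k+1)` the point `t = (d / 2^(k+2)) e_j` satisfies `|l · t| ∈ [1/4, 1/2)`,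
  where `4 sin² (π l · t) ≥ 1`, so (i) at this single `t` bounds the block. Every `l` with
  `|l| ≥ n ≥ 1` has a coordinate with `d |l_j| ≥ n`, so the tail of `c` is bounded by the sum of
  the `d` coordinate tails.
* (ii) ⇒ (i): for `T = |t| < 1` and `n = ⌊1/T⌋`, one has
  `4 sin² (π l · t) ≤ 40 T² min(|l|, n)² ≤ 40 T² ∑_{m ≤ n, m ≤ |l|} 2 m`. Summing over `l` turns the
  right-hand side into `80 T² ∑_{m ≤ n} m · tail(m)`. Since `r ≤ 1`, each summand is
  `O((n+1)^(1-r))`, so the total is `O(T² (n+1)^(2-r)) = O(T^r)`.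

All sums are taken in `ℝ≥0∞`, so no summability question arises.
-/


open scoped ENNReal

noncomputable section

/-- `c_l(A) = sup_m |A(m, m-l)|`, the supremum (in `ℝ≥0∞`) of the absolute values on the
`l`-th side diagonal of the matrix `A`. -/
def sideDiagSup (d : ℕ) (A : (Fin d → ℤ) → (Fin d → ℤ) → ℂ) (l : Fin d → ℤ) : ℝ≥0∞ :=
  ⨆ m : Fin d → ℤ, (‖A m (m - l)‖₊ : ℝ≥0∞)

/-- Geometric summation of dyadic blocks: if the blocks `2^k ≤ f l < 2^(k+1)` have mass at most
`K 2^(-kr)`, then the tails of `c` along `f` decay like `(n+1)^(-r)`. The case `n = 0` is excluded,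
since no block sees the points with `f l = 0`. -/
lemma tail_le_of_dyadic {α : Type*} (c : α → ℝ≥0∞) (f : α → ℕ) {r : ℝ} (hr0 : 0 < r) {K : ℝ≥0∞}
    (h : ∀ k : ℕ, (2 : ℝ≥0∞) ^ ((k : ℝ) * r) *
      ∑' l : {l : α // 2 ^ k ≤ f l ∧ f l < 2 ^ (k + 1)}, c l ≤ K) (n : ℕ) (hn : 1 ≤ n) :
    ((n : ℝ≥0∞) + 1) ^ r * ∑' l : {l : α // n ≤ f l}, c l
      ≤ 2 ^ r * K * (1 - (2 : ℝ≥0∞) ^ (-r))⁻¹ := by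
  set q : ℝ≥0∞ := (2 : ℝ≥0∞) ^ (-r) with hq
  have hpow : ∀ k : ℕ, (2 : ℝ≥0∞) ^ ((k : ℝ) * r) * q ^ k = 1 := by
    intro k
    rw [hq, ← ENNReal.rpow_natCast, ← ENNReal.rpow_mul,
      ← ENNReal.rpow_add _ _ (by norm_num) (by norm_num)]
    have : (k : ℝ) * r + -r * k = 0 := by ring
    rw [this, ENNReal.rpow_zero]
  have hblock : ∀ k : ℕ,
      ∑' l : {l : α // 2 ^ k ≤ f l ∧ f l < 2 ^ (k + 1)}, c l ≤ K * q ^ k := by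
    intro k
    calc _ = ((2 : ℝ≥0∞) ^ ((k : ℝ) * r) * q ^ k) *
          ∑' l : {l : α // 2 ^ k ≤ f l ∧ f l < 2 ^ (k + 1)}, c l := by rw [hpow, one_mul]
      _ = ((2 : ℝ≥0∞) ^ ((k : ℝ) * r) *
          ∑' l : {l : α // 2 ^ k ≤ f l ∧ f l < 2 ^ (k + 1)}, c l) * q ^ k := by ring
      _ ≤ K * q ^ k := by gcongr; exact h k
  set k := Nat.log 2 n with hk
  have hk1 : 2 ^ k ≤ n := Nat.pow_log_le_self 2 (by omega)
  have hk2 : n < 2 ^ (k + 1) := Nat.lt_pow_succ_log_self (by norm_num) n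
  have htail : ∑' l : {l : α // n ≤ f l}, c l ≤ K * q ^ k * (1 - q)⁻¹ := by
    calc ∑' l : {l : α // n ≤ f l}, c l
        ≤ ∑' l : ↥(⋃ i : ℕ, {l : α | 2 ^ (k + i) ≤ f l ∧ f l < 2 ^ (k + i + 1)}), c l := by
          refine ENNReal.tsum_mono_subtype c (s := {l : α | n ≤ f l}) ?_
          intro l hl
          have hl : n ≤ f l := hl
          have h1 : k ≤ Nat.log 2 (f l) := Nat.log_mono_right hl
          refine Set.mem_iUnion.2 ⟨Nat.log 2 (f l) - k, ?_⟩
          have h2 : k + (Nat.log 2 (f l) - k) = Nat.log 2 (f l) := by omega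
          rw [Set.mem_ofPred_eq, h2]
          exact ⟨Nat.pow_log_le_self 2 (by omega), Nat.lt_pow_succ_log_self (by norm_num) _⟩
      _ ≤ ∑' i : ℕ, ∑' l : {l : α | 2 ^ (k + i) ≤ f l ∧ f l < 2 ^ (k + i + 1)}, c l :=
          ENNReal.tsum_iUnion_le_tsum c _
      _ ≤ ∑' i : ℕ, K * q ^ k * q ^ i := by
          refine ENNReal.tsum_le_tsum fun i => ?_
          rw [mul_assoc, ← pow_add]
          exact hblock (k + i)
      _ = K * q ^ k * (1 - q)⁻¹ := by rw [ENNReal.tsum_mul_left, ENNReal.tsum_geometric]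
  have hn2 : ((n : ℝ≥0∞) + 1) ^ r ≤ 2 ^ r * 2 ^ ((k : ℝ) * r) := by
    have : ((n : ℝ≥0∞) + 1) ≤ 2 * 2 ^ k := by
      rw [← pow_succ']; exact_mod_cast hk2
    calc ((n : ℝ≥0∞) + 1) ^ r ≤ (2 * 2 ^ k) ^ r := ENNReal.rpow_le_rpow this hr0.le
      _ = _ := by
        rw [ENNReal.mul_rpow_of_nonneg _ _ hr0.le, ENNReal.rpow_mul, ENNReal.rpow_natCast]
  calc _ ≤ (2 ^ r * 2 ^ ((k : ℝ) * r)) * (K * q ^ k * (1 - q)⁻¹) := by gcongr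
    _ = 2 ^ r * K * (1 - q)⁻¹ * (2 ^ ((k : ℝ) * r) * q ^ k) := by ring
    _ = _ := by rw [hpow, mul_one]

lemma tail_const_ne_top {r : ℝ} (hr0 : 0 < r) {K : ℝ≥0∞} (hK : K ≠ ⊤) :
    2 ^ r * K * (1 - (2 : ℝ≥0∞) ^ (-r))⁻¹ ≠ ⊤ := by
  refine ENNReal.mul_ne_top (ENNReal.mul_ne_top ?_ hK) ?_
  · exact ENNReal.rpow_ne_top_of_nonneg hr0.le (by norm_num)
  · rw [ENNReal.inv_ne_top]
    exact ne_of_gt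
      (tsub_pos_of_lt (ENNReal.rpow_lt_one_of_one_lt_of_neg (by norm_num) (by linarith)))

/-- The full sum is the tail at `0`. -/
lemma tsum_le_of_tail {α : Type*} (c : α → ℝ≥0∞) (f : α → ℕ) {r : ℝ} {K : ℝ≥0∞}
    (h : ∀ n : ℕ, ((n : ℝ≥0∞) + 1) ^ r * ∑' l : {l : α // n ≤ f l}, c l ≤ K) :
    ∑' l, c l ≤ K := by
  have h0 := h 0
  simp only [Nat.cast_zero, zero_add, ENNReal.one_rpow, one_mul] at h0
  refine le_trans ?_ h0
  rw [← tsum_univ c]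
  exact ENNReal.tsum_mono_subtype c (t := {l : α | 0 ≤ f l}) fun l _ => Nat.zero_le _

lemma one_le_four_sin_sq {x : ℝ} (h1 : 1 / 4 ≤ |x|) (h2 : |x| ≤ 1 / 2) :
    1 ≤ 4 * Real.sin (Real.pi * x) ^ 2 := by
  have hs : Real.sin (Real.pi * x) ^ 2 = Real.sin (Real.pi * |x|) ^ 2 := by
    rcases abs_choice x with h | h <;> rw [h]
    rw [mul_neg, Real.sin_neg, neg_sq]
  have hp := Real.pi_pos
  have h3 := Real.mul_le_sin (x := Real.pi * |x|) (by positivity) (by nlinarith)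
  have h4 : 2 / Real.pi * (Real.pi * |x|) = 2 * |x| := by field_simp
  rw [h4] at h3
  rw [hs]
  nlinarith

/-- Condition (i), tested at the single point `t = (d / 2^(k+2)) e_j`, bounds the mass of the
`k`-th dyadic block of the coordinate weight `d |l_j|`. -/
lemma coord_block_le {d : ℕ} {r : ℝ} (hr0 : 0 < r) (c : (Fin d → ℤ) → ℝ≥0∞) {K : ℝ≥0∞}
    (h : ∀ t : Fin d → ℝ, t ≠ 0 →
        (∑' l : Fin d → ℤ,
          ENNReal.ofReal (4 * Real.sin (Real.pi * ∑ j, (l j : ℝ) * t j) ^ 2) * c l) ≤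
          K * ENNReal.ofReal ((∑ j, |t j|) ^ r)) (j : Fin d) (k : ℕ) :
    (2 : ℝ≥0∞) ^ ((k : ℝ) * r) *
      ∑' l : {l : Fin d → ℤ // 2 ^ k ≤ d * (l j).natAbs ∧ d * (l j).natAbs < 2 ^ (k + 1)}, c l
      ≤ K * ENNReal.ofReal ((d : ℝ) ^ r) := by
  have hd : (0 : ℝ) < d := by exact_mod_cast j.pos
  set s : ℝ := d / 2 ^ (k + 2) with hs
  have hs0 : 0 < s := by positivity
  have hsum : ∀ l : Fin d → ℤ, ∑ i, (l i : ℝ) * (Pi.single j s : Fin d → ℝ) i = l j * s := by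
    intro l
    simp [Pi.single_apply]
  have hT : ∑ i, |(Pi.single j s : Fin d → ℝ) i| = s := by
    rw [Finset.sum_eq_single j]
    · simp [abs_of_pos hs0]
    · intro i _ hij; simp [hij]
    · simp
  have ht := h (Pi.single j s) (by simpa using hs0.ne')
  simp only [hsum, hT] at ht
  have hblock : ∑' l : {l : Fin d → ℤ // 2 ^ k ≤ d * (l j).natAbs ∧
      d * (l j).natAbs < 2 ^ (k + 1)}, c l ≤ K * ENNReal.ofReal (s ^ r) := by
    refine le_trans (le_trans ?_ (ENNReal.tsum_comp_le_tsum_of_injective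
      (f := fun l : {l : Fin d → ℤ // 2 ^ k ≤ d * (l j).natAbs ∧ d * (l j).natAbs < 2 ^ (k + 1)} =>
        l.1) Subtype.val_injective _)) ht
    refine ENNReal.tsum_le_tsum fun ⟨l, hl1, hl2⟩ => ?_
    refine le_mul_of_one_le_left (by positivity) ?_
    rw [ENNReal.one_le_ofReal]
    have habs : |(l j : ℝ) * s| = (d * (l j).natAbs : ℝ) / 2 ^ (k + 2) := by
      rw [abs_mul, abs_of_pos hs0, Nat.cast_natAbs, Int.cast_abs, hs]; ring
    have h1 : (2 : ℝ) ^ k ≤ d * (l j).natAbs := by exact_mod_cast hl1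
    have h2 : (d * (l j).natAbs : ℝ) ≤ 2 ^ (k + 1) := by exact_mod_cast hl2.le
    apply one_le_four_sin_sq
    · rw [habs, le_div_iff₀ (by positivity), pow_add]; linarith
    · rw [habs, div_le_iff₀ (by positivity)]; rw [pow_succ] at h2; rw [pow_add]; linarith
  have hreal : (2 : ℝ≥0∞) ^ ((k : ℝ) * r) * ENNReal.ofReal (s ^ r)
      ≤ ENNReal.ofReal ((d : ℝ) ^ r) := by
    have h2 : (2 : ℝ≥0∞) ^ ((k : ℝ) * r) = ENNReal.ofReal (((2 : ℝ) ^ k) ^ r) := by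
      rw [ENNReal.rpow_mul, ENNReal.rpow_natCast,
        ← ENNReal.ofReal_rpow_of_pos (by positivity), ENNReal.ofReal_pow (by norm_num)]
      norm_num
    rw [h2, ← ENNReal.ofReal_mul (by positivity), ← Real.mul_rpow (by positivity) hs0.le]
    refine ENNReal.ofReal_le_ofReal (Real.rpow_le_rpow (by positivity) ?_ hr0.le)
    have : (2 : ℝ) ^ k * s = d / 4 := by rw [hs, pow_add]; field_simp; norm_num
    rw [this]; linarith
  calc _ ≤ (2 : ℝ≥0∞) ^ ((k : ℝ) * r) * (K * ENNReal.ofReal (s ^ r)) := by gcongr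
    _ = K * ((2 : ℝ≥0∞) ^ ((k : ℝ) * r) * ENNReal.ofReal (s ^ r)) := by ring
    _ ≤ _ := by gcongr

lemma exists_coord_ge {d : ℕ} (l : Fin d → ℤ) {n : ℕ} (hn : 1 ≤ n)
    (hl : n ≤ ∑ j, (l j).natAbs) : ∃ j, n ≤ d * (l j).natAbs := by
  by_contra! hc
  rcases Nat.eq_zero_or_pos d with rfl | hd
  · simp at hl; omega
  · have : ∑ j, d * (l j).natAbs < ∑ _j : Fin d, n :=
      Finset.sum_lt_sum_of_nonempty ⟨⟨0, hd⟩, Finset.mem_univ _⟩ fun j _ => hc j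
    rw [← Finset.mul_sum, Finset.sum_const, Finset.card_univ, Fintype.card_fin, smul_eq_mul] at this
    exact absurd (Nat.mul_le_mul_left d hl) (not_le.2 this)

/-- A weaker form of `m² = ∑_{i ≤ m} (2 i - 1)`, truncated at `n`. -/
lemma min_sq_le_sum (a n : ℕ) :
    (min a n) ^ 2 ≤ ∑ m ∈ Finset.range n, if m + 1 ≤ a then 2 * (m + 1) else 0 := by
  induction n with
  | zero => simp
  | succ n ih =>
    rw [Finset.sum_range_succ]
    split_ifs with h
    · rw [min_eq_right (by omega)] at ih ⊢
      nlinarith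
    · rw [min_eq_left (by omega)] at ih ⊢
      omega

/-- The modulation weight is dominated by a sum of indicators of tails, truncated at
some `n ≥ 1 / (2 T)`. In the application `a` is the 1-norm of `l`, and `T` that of `t`. -/
lemma four_sin_sq_le {x T : ℝ} {a n : ℕ} (hT0 : 0 < T) (hx : |x| ≤ a * T)
    (hn : 1 ≤ 2 * T * n) :
    ENNReal.ofReal (4 * Real.sin (Real.pi * x) ^ 2) ≤ ENNReal.ofReal (40 * T ^ 2) *
      ∑ m ∈ Finset.range n, if m + 1 ≤ a then (2 * (m + 1) : ℝ≥0∞) else 0 := by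
  have hmin : 4 * Real.sin (Real.pi * x) ^ 2 ≤ 40 * T ^ 2 * ((min a n) ^ 2 : ℕ) := by
    rcases le_total a n with h | h
    · rw [min_eq_left h]
      have h1 : Real.sin (Real.pi * x) ^ 2 ≤ (Real.pi * x) ^ 2 :=
        sq_le_sq.2 Real.abs_sin_le_abs
      have h2 : x ^ 2 ≤ (a * T) ^ 2 := by
        rw [← sq_abs x]; gcongr
      have h3 : Real.pi ^ 2 ≤ 10 := by nlinarith [Real.pi_lt_d2, Real.pi_pos]
      have h4 : Real.pi ^ 2 * x ^ 2 ≤ 10 * (a * T) ^ 2 := by gcongr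
      push_cast
      nlinarith
    · rw [min_eq_right h]
      have h1 := Real.sin_sq_le_one (Real.pi * x)
      have h2 : 1 ≤ (2 * T * n) ^ 2 := one_le_pow₀ hn
      push_cast
      nlinarith
  refine (ENNReal.ofReal_le_ofReal hmin).trans ?_
  rw [ENNReal.ofReal_mul (by positivity), ENNReal.ofReal_natCast]
  gcongr
  have := min_sq_le_sum a n
  calc (((min a n) ^ 2 : ℕ) : ℝ≥0∞)
      ≤ ((∑ m ∈ Finset.range n, if m + 1 ≤ a then 2 * (m + 1) else 0 : ℕ) : ℝ≥0∞) := by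
        exact_mod_cast this
    _ = _ := by push_cast; rfl

/-- The implication (ii) ⇒ (i) for a single `t ≠ 0`. -/
lemma modulation_le_of_tail {d : ℕ} {r : ℝ} (hr0 : 0 < r) (hr1 : r ≤ 1)
    (c : (Fin d → ℤ) → ℝ≥0∞) {K : ℝ≥0∞}
    (h : ∀ n : ℕ, ((n : ℝ≥0∞) + 1) ^ r *
      ∑' l : {l : Fin d → ℤ // n ≤ ∑ j, (l j).natAbs}, c l ≤ K) (t : Fin d → ℝ) (ht : t ≠ 0) :
    (∑' l : Fin d → ℤ,
      ENNReal.ofReal (4 * Real.sin (Real.pi * ∑ j, (l j : ℝ) * t j) ^ 2) * c l) ≤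
      320 * K * ENNReal.ofReal ((∑ j, |t j|) ^ r) := by
  set T : ℝ := ∑ j, |t j| with hT
  have hT0 : 0 < T := by
    obtain ⟨j, hj⟩ := Function.ne_iff.1 ht
    exact Finset.sum_pos' (fun i _ => abs_nonneg _) ⟨j, Finset.mem_univ _, abs_pos.2 hj⟩
  rcases le_or_gt 1 T with hT1 | hT1
  · calc _ ≤ ∑' l : Fin d → ℤ, 4 * c l := by
          refine ENNReal.tsum_le_tsum fun l => ?_
          gcongr
          rw [ENNReal.ofReal_le_iff_le_toReal (by norm_num)]
          have := Real.sin_sq_le_one (Real.pi * ∑ j, (l j : ℝ) * t j)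
          rw [ENNReal.toReal_ofNat]
          linarith
      _ ≤ 4 * K := by
          rw [ENNReal.tsum_mul_left]; gcongr; exact tsum_le_of_tail c _ h
      _ ≤ 320 * K * 1 := by rw [mul_one]; gcongr; norm_num
      _ ≤ _ := by
          gcongr
          rw [ENNReal.one_le_ofReal]
          exact Real.one_le_rpow hT1 hr0.le
  · set n : ℕ := ⌊1 / T⌋₊ with hn
    have hinv : 1 < 1 / T := by rw [lt_div_iff₀ hT0]; linarith
    have hn1 : 1 ≤ n := Nat.le_floor (by exact_mod_cast hinv.le)
    have hn1' : (1 : ℝ) ≤ n := by exact_mod_cast hn1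
    have hnle : (n : ℝ) * T ≤ 1 := by
      rw [← le_div_iff₀ hT0]; exact Nat.floor_le (by positivity)
    have hnlt : 1 < ((n : ℝ) + 1) * T := by
      rw [← div_lt_iff₀ hT0]; exact Nat.lt_floor_add_one _
    have hx : ∀ l : Fin d → ℤ,
        |∑ j, (l j : ℝ) * t j| ≤ ((∑ j, (l j).natAbs : ℕ) : ℝ) * T := by
      intro l
      refine (Finset.abs_sum_le_sum_abs _ _).trans ?_
      rw [hT, Finset.mul_sum]
      refine Finset.sum_le_sum fun j _ => ?_
      rw [abs_mul]
      gcongr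
      have h1 : (l j).natAbs ≤ ∑ j, (l j).natAbs :=
        Finset.single_le_sum (f := fun j => (l j).natAbs) (fun _ _ => Nat.zero_le _)
          (Finset.mem_univ j)
      calc |(l j : ℝ)| = ((l j).natAbs : ℝ) := by rw [Nat.cast_natAbs, Int.cast_abs]
        _ ≤ _ := by exact_mod_cast h1
    -- Each summand `m · tail(m)` is bounded using monotonicity of `x ^ (1 - r)`, that is `r ≤ 1`.
    have hterm : ∀ m ∈ Finset.range n,
        ∑' l : Fin d → ℤ, (if m + 1 ≤ ∑ j, (l j).natAbs then (2 * (m + 1) : ℝ≥0∞) else 0) * c l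
          ≤ 2 * ENNReal.ofReal (((n : ℝ) + 1) ^ (1 - r)) * K := by
      intro m hm
      have hm : m < n := Finset.mem_range.1 hm
      have e1 : ∑' l : Fin d → ℤ,
          (if m + 1 ≤ ∑ j, (l j).natAbs then (2 * (m + 1) : ℝ≥0∞) else 0) * c l
          = 2 * (m + 1) * ∑' l : {l : Fin d → ℤ // m + 1 ≤ ∑ j, (l j).natAbs}, c l := by
        have := tsum_subtype {l : Fin d → ℤ | m + 1 ≤ ∑ j, (l j).natAbs} c
        rw [show ∑' l : {l : Fin d → ℤ // m + 1 ≤ ∑ j, (l j).natAbs}, c l = _ from this,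
          ← ENNReal.tsum_mul_left]
        refine tsum_congr fun l => ?_
        by_cases hl : m + 1 ≤ ∑ j, (l j).natAbs
        · rw [if_pos hl, Set.indicator_of_mem (Set.mem_ofPred_eq ▸ hl)]
        · rw [if_neg hl, Set.indicator_of_notMem (Set.mem_ofPred_eq ▸ hl), zero_mul, mul_zero]
      have e2 : (m + 1 : ℝ≥0∞) ≤ ENNReal.ofReal (((n : ℝ) + 1) ^ (1 - r)) *
          (((m + 1 : ℕ) : ℝ≥0∞) + 1) ^ r := by
        have e3 : ENNReal.ofReal (((n : ℝ) + 1) ^ (1 - r)) = ((n : ℝ≥0∞) + 1) ^ (1 - r) := by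
          rw [← ENNReal.ofReal_rpow_of_pos (by positivity),
            ENNReal.ofReal_add (by positivity) (by norm_num)]
          simp
        rw [e3]
        calc (m + 1 : ℝ≥0∞) = (m + 1 : ℝ≥0∞) ^ (1 - r) * (m + 1 : ℝ≥0∞) ^ r := by
              rw [← ENNReal.rpow_add _ _ (by simp) (by finiteness)]
              simp
          _ ≤ _ := by
              gcongr
              · linarith
      rw [e1]
      calc _ ≤ 2 * (ENNReal.ofReal (((n : ℝ) + 1) ^ (1 - r)) * (((m + 1 : ℕ) : ℝ≥0∞) + 1) ^ r) *
            ∑' l : {l : Fin d → ℤ // m + 1 ≤ ∑ j, (l j).natAbs}, c l := by gcongr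
        _ = 2 * ENNReal.ofReal (((n : ℝ) + 1) ^ (1 - r)) * ((((m + 1 : ℕ) : ℝ≥0∞) + 1) ^ r *
            ∑' l : {l : Fin d → ℤ // m + 1 ≤ ∑ j, (l j).natAbs}, c l) := by ring
        _ ≤ _ := by gcongr; exact h (m + 1)
    have hreal : 40 * T ^ 2 * n * (2 * ((n : ℝ) + 1) ^ (1 - r)) ≤ 320 * T ^ r := by
      have a1 : ((n : ℝ) + 1) ^ (1 - r) ≤ (2 / T) ^ (1 - r) := by
        refine Real.rpow_le_rpow (by positivity) ?_ (by linarith)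
        rw [le_div_iff₀ hT0]; nlinarith
      have a2 : (2 / T) ^ (1 - r) ≤ 2 * (T ^ r / T) := by
        rw [Real.div_rpow (by norm_num) hT0.le, Real.rpow_sub hT0, Real.rpow_one]
        have : (2 : ℝ) ^ (1 - r) ≤ 2 := by
          calc (2 : ℝ) ^ (1 - r) ≤ 2 ^ (1 : ℝ) :=
                Real.rpow_le_rpow_of_exponent_le (by norm_num) (by linarith)
            _ = 2 := Real.rpow_one 2
        calc _ ≤ 2 / (T / T ^ r) := by gcongr
          _ = _ := by rw [div_eq_mul_inv, inv_div]
      have hTr : 0 < T ^ r := Real.rpow_pos_of_pos hT0 r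
      calc 40 * T ^ 2 * n * (2 * ((n : ℝ) + 1) ^ (1 - r))
          ≤ 40 * T ^ 2 * n * (2 * (2 * (T ^ r / T))) := by gcongr; exact a1.trans a2
        _ = 160 * (n * T) * T ^ r := by field_simp; ring
        _ ≤ 160 * 1 * T ^ r := by gcongr
        _ ≤ _ := by linarith
    calc _ ≤ ∑' l : Fin d → ℤ, ENNReal.ofReal (40 * T ^ 2) * ∑ m ∈ Finset.range n,
            (if m + 1 ≤ ∑ j, (l j).natAbs then (2 * (m + 1) : ℝ≥0∞) else 0) * c l := by
          refine ENNReal.tsum_le_tsum fun l => ?_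
          rw [← Finset.sum_mul, ← mul_assoc]
          gcongr
          exact four_sin_sq_le hT0 (hx l) (by nlinarith)
      _ = ENNReal.ofReal (40 * T ^ 2) * ∑ m ∈ Finset.range n, ∑' l : Fin d → ℤ,
            (if m + 1 ≤ ∑ j, (l j).natAbs then (2 * (m + 1) : ℝ≥0∞) else 0) * c l := by
          rw [ENNReal.tsum_mul_left, Summable.tsum_finsetSum fun _ _ => ENNReal.summable]
      _ ≤ ENNReal.ofReal (40 * T ^ 2) * ∑ m ∈ Finset.range n,
            2 * ENNReal.ofReal (((n : ℝ) + 1) ^ (1 - r)) * K := by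
          gcongr with m hm
          exact hterm m hm
      _ = ENNReal.ofReal (40 * T ^ 2 * n * (2 * ((n : ℝ) + 1) ^ (1 - r))) * K := by
          rw [Finset.sum_const, Finset.card_range, nsmul_eq_mul,
            ENNReal.ofReal_mul (p := 40 * T ^ 2 * n) (by positivity),
            ENNReal.ofReal_mul (p := 40 * T ^ 2) (by positivity),
            ENNReal.ofReal_mul (p := 2) (by norm_num), ENNReal.ofReal_natCast,
            ENNReal.ofReal_ofNat]
          ring
      _ ≤ ENNReal.ofReal (320 * T ^ r) * K := by gcongr
      _ = _ := by
          rw [ENNReal.ofReal_mul (by norm_num), ENNReal.ofReal_ofNat]; ring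

/-- For `0 < r ≤ 1` and a matrix `A` with side-diagonal suprema
`c_l(A) = sup_m |A(m, m-l)|`, the following are equivalent: (i) `A ∈ Λ_r(C_0)` (the
Hölder–Zygmund space for the modulation group: `Σ_l c_l < ∞` and
`Σ_l 4 sin²(π l·t) c_l ≤ K |t|^r`); (ii) `A ∈ E_r^∞(C_0)` (the approximation space for
approximation by banded matrices: `sup_n (n+1)^r Σ_{|l| ≥ n} c_l < ∞`); (iii) the dyadic
condition `c_0 < ∞` and `sup_k 2^{kr} Σ_{2^k ≤ |l| < 2^{k+1}} c_l < ∞`. -/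
theorem holderZygmund_convolutionDominated_characterizations
    (d : ℕ) (r : ℝ) (hr0 : 0 < r) (hr1 : r ≤ 1)
    (A : (Fin d → ℤ) → (Fin d → ℤ) → ℂ) :
    (((∑' l : Fin d → ℤ, sideDiagSup d A l) ≠ ⊤ ∧
      ∃ K : ℝ≥0∞, K ≠ ⊤ ∧ ∀ t : Fin d → ℝ, t ≠ 0 →
        (∑' l : Fin d → ℤ,
          ENNReal.ofReal (4 * Real.sin (Real.pi * ∑ j, (l j : ℝ) * t j) ^ 2) *
            sideDiagSup d A l) ≤
          K * ENNReal.ofReal ((∑ j, |t j|) ^ r)) ↔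
     (∃ K : ℝ≥0∞, K ≠ ⊤ ∧ ∀ n : ℕ,
        ((n : ℝ≥0∞) + 1) ^ r *
          ∑' l : {l : Fin d → ℤ // n ≤ ∑ j, (l j).natAbs}, sideDiagSup d A l ≤ K)) ∧
    ((∃ K : ℝ≥0∞, K ≠ ⊤ ∧ ∀ n : ℕ,
        ((n : ℝ≥0∞) + 1) ^ r *
          ∑' l : {l : Fin d → ℤ // n ≤ ∑ j, (l j).natAbs}, sideDiagSup d A l ≤ K) ↔
     (sideDiagSup d A 0 ≠ ⊤ ∧
      ∃ K : ℝ≥0∞, K ≠ ⊤ ∧ ∀ k : ℕ,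
        (2 : ℝ≥0∞) ^ ((k : ℝ) * r) *
          ∑' l : {l : Fin d → ℤ // 2 ^ k ≤ ∑ j, (l j).natAbs ∧
            ∑ j, (l j).natAbs < 2 ^ (k + 1)}, sideDiagSup d A l ≤ K)) := by
  set c := sideDiagSup d A with hc
  refine ⟨⟨?_, ?_⟩, ⟨?_, ?_⟩⟩
  · rintro ⟨hsum, K, hK, h⟩
    set K₁ : ℝ≥0∞ := K * ENNReal.ofReal ((d : ℝ) ^ r)
    have hK₁ : K₁ ≠ ⊤ := ENNReal.mul_ne_top hK ENNReal.ofReal_ne_top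
    set K₂ : ℝ≥0∞ := 2 ^ r * K₁ * (1 - (2 : ℝ≥0∞) ^ (-r))⁻¹
    have hK₂ : K₂ ≠ ⊤ := tail_const_ne_top hr0 hK₁
    refine ⟨(∑' l, c l) + d * K₂, ENNReal.add_ne_top.2 ⟨hsum,
      ENNReal.mul_ne_top (ENNReal.natCast_ne_top d) hK₂⟩, fun n => ?_⟩
    rcases Nat.eq_zero_or_pos n with rfl | hn
    · simp only [Nat.cast_zero, zero_add, ENNReal.one_rpow, one_mul]
      exact le_add_right (ENNReal.tsum_comp_le_tsum_of_injective Subtype.val_injective c)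
    · refine le_add_left ?_
      calc ((n : ℝ≥0∞) + 1) ^ r * ∑' l : {l : Fin d → ℤ // n ≤ ∑ j, (l j).natAbs}, c l
          ≤ ((n : ℝ≥0∞) + 1) ^ r *
              ∑ j, ∑' l : {l : Fin d → ℤ // n ≤ d * (l j).natAbs}, c l := by
            gcongr
            refine le_trans (ENNReal.tsum_mono_subtype c
              (s := {l : Fin d → ℤ | n ≤ ∑ j, (l j).natAbs})
              (t := ⋃ j, {l : Fin d → ℤ | n ≤ d * (l j).natAbs}) ?_)
              (ENNReal.tsum_iUnion_le c _)
            intro l hl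
            exact Set.mem_iUnion.2 (exists_coord_ge l hn hl)
        _ = ∑ j, ((n : ℝ≥0∞) + 1) ^ r *
              ∑' l : {l : Fin d → ℤ // n ≤ d * (l j).natAbs}, c l := Finset.mul_sum _ _ _
        _ ≤ ∑ _j : Fin d, K₂ := Finset.sum_le_sum fun j _ =>
            tail_le_of_dyadic c (fun l => d * (l j).natAbs) hr0 (coord_block_le hr0 c h j) n hn
        _ = d * K₂ := by simp
  · rintro ⟨K, hK, h⟩
    exact ⟨ne_top_of_le_ne_top hK (tsum_le_of_tail c _ h), 320 * K,
      ENNReal.mul_ne_top (by norm_num) hK, modulation_le_of_tail hr0 hr1 c h⟩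
  · rintro ⟨K, hK, h⟩
    refine ⟨ne_top_of_le_ne_top hK ((ENNReal.le_tsum 0).trans (tsum_le_of_tail c _ h)),
      K, hK, fun k => le_trans ?_ (h (2 ^ k))⟩
    gcongr
    · rw [ENNReal.rpow_mul, ENNReal.rpow_natCast]
      refine ENNReal.rpow_le_rpow ?_ hr0.le
      push_cast
      exact le_self_add
    · exact ENNReal.tsum_mono_subtype c
        (s := {l : Fin d → ℤ | 2 ^ k ≤ ∑ j, (l j).natAbs ∧ ∑ j, (l j).natAbs < 2 ^ (k + 1)})
        (t := {l : Fin d → ℤ | 2 ^ k ≤ ∑ j, (l j).natAbs}) fun l hl => hl.1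
  · rintro ⟨h0, K, hK, h⟩
    set K₂ : ℝ≥0∞ := 2 ^ r * K * (1 - (2 : ℝ≥0∞) ^ (-r))⁻¹
    have hK₂ : K₂ ≠ ⊤ := tail_const_ne_top hr0 hK
    have htail := tail_le_of_dyadic c (fun l => ∑ j, (l j).natAbs) hr0 h
    refine ⟨c 0 + K₂, ENNReal.add_ne_top.2 ⟨h0, hK₂⟩, fun n => ?_⟩
    rcases Nat.eq_zero_or_pos n with rfl | hn
    · -- The tail at `0` is the term `c 0` together with the tail at `1`.
      simp only [Nat.cast_zero, zero_add, ENNReal.one_rpow, one_mul]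
      calc ∑' l : {l : Fin d → ℤ // 0 ≤ ∑ j, (l j).natAbs}, c l
          ≤ ∑' l : ↥({0} ∪ {l : Fin d → ℤ | 1 ≤ ∑ j, (l j).natAbs}), c l := by
            refine ENNReal.tsum_mono_subtype c
              (s := {l : Fin d → ℤ | 0 ≤ ∑ j, (l j).natAbs}) fun l _ => ?_
            by_cases hl : 1 ≤ ∑ j, (l j).natAbs
            · exact Or.inr hl
            · left
              have hz : ∑ j, (l j).natAbs = 0 := by omega
              ext j
              simpa using Finset.sum_eq_zero_iff.1 hz j (Finset.mem_univ j)
        _ ≤ ∑' l : ({0} : Set (Fin d → ℤ)), c l +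
              ∑' l : {l : Fin d → ℤ | 1 ≤ ∑ j, (l j).natAbs}, c l := ENNReal.tsum_union_le c _ _
        _ ≤ c 0 + K₂ := by
            gcongr
            · exact (tsum_singleton 0 c).le
            · refine le_trans (le_mul_of_one_le_left (by positivity) ?_) (htail 1 le_rfl)
              exact ENNReal.one_le_rpow (by simp) hr0
    · exact le_add_left (htail n hn)
end
end

section
/- Brandenburg's trick: Let A and B be unital complex Banach algebras, ι : A → B a unital algebra homomorphism, and suppose there is a constant C > 0 such that ‖ab‖_A ≤ C (‖a‖_A ‖ι(b)‖_B + ‖b‖_A ‖ι(a)‖_B) for all a,b ∈ A. Then the spectral radii agree: ρ_A(a) = ρ_B(ι(a)) for every a ∈ A. -/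
open scoped ENNReal

noncomputable section

/-!
The squaring inequality `‖c ^ (2n)‖ ≤ 2C ‖c ^ n‖ ‖ι c ^ n‖` is the hypothesis applied to
`a = b = c ^ n`. Taking `n`-th roots, Gelfand's formula turns it in the limit into
`ρ(c)² ≤ ρ(c) ρ(ι c)`, since `(2C)^(1/n) → 1`. As `ρ(c)` is finite, it can be cancelled unless it
is `0`, so `ρ(c) ≤ ρ(ι c)`. The other inequality holds because `σ(ι c) ⊆ σ(c)` for every unital
homomorphism.
-/

open Filter Topology

/-- **Brandenburg's trick.** If `ι : A → B` is a unital algebra homomorphism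
between unital complex Banach algebras and
`‖ab‖_A ≤ C (‖a‖_A ‖ι(b)‖_B + ‖b‖_A ‖ι(a)‖_B)` for all `a, b ∈ A`, then the spectral radii
agree: `ρ_A(a) = ρ_B(ι(a))` for every `a ∈ A`. -/
theorem brandenburg_trick
    {A B : Type*}
    [NormedRing A] [NormedAlgebra ℂ A] [CompleteSpace A] [NormOneClass A]
    [NormedRing B] [NormedAlgebra ℂ B] [CompleteSpace B] [NormOneClass B]
    (ι : A →ₐ[ℂ] B)
    (C : ℝ) (hC : 0 < C)
    (h : ∀ a b : A, ‖a * b‖ ≤ C * (‖a‖ * ‖ι b‖ + ‖b‖ * ‖ι a‖)) :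
    ∀ a : A, spectralRadius ℂ a = spectralRadius ℂ (ι a) := by
  intro a
  refine le_antisymm ?_ (iSup_le_iSup_of_subset (AlgHom.spectrum_apply_subset ι a))
  have hfa : spectralRadius ℂ a ≠ ⊤ :=
    ((spectrum.spectralRadius_le_nnnorm a).trans_lt ENNReal.coe_lt_top).ne
  have hfb : spectralRadius ℂ (ι a) ≠ ⊤ :=
    ((spectrum.spectralRadius_le_nnnorm (ι a)).trans_lt ENNReal.coe_lt_top).ne
  have hA := spectrum.pow_nnnorm_pow_one_div_tendsto_nhds_spectralRadius a
  have hB := spectrum.pow_nnnorm_pow_one_div_tendsto_nhds_spectralRadius (ι a)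
  have hK : Tendsto (fun n : ℕ => ENNReal.ofReal (2 * C) ^ (1 / n : ℝ)) atTop (𝓝 1) := by
    have h1 := (Real.continuous_const_rpow (a := 2 * C) (by positivity)).tendsto 0 |>.comp
      tendsto_one_div_atTop_nhds_zero_nat
    have h2 := ENNReal.tendsto_ofReal h1
    simp only [Function.comp_def, Real.rpow_zero, ENNReal.ofReal_one] at h2
    exact h2.congr fun n => (ENNReal.ofReal_rpow_of_pos (by positivity)).symm
  have hsq : ∀ n : ℕ, 0 < n →
      ((‖a ^ (2 * n)‖₊ : ℝ≥0∞) ^ (1 / (2 * n : ℕ) : ℝ)) ^ 2 ≤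
        ENNReal.ofReal (2 * C) ^ (1 / n : ℝ) *
          ((‖a ^ n‖₊ : ℝ≥0∞) ^ (1 / n : ℝ) * (‖ι a ^ n‖₊ : ℝ≥0∞) ^ (1 / n : ℝ)) := by
    intro n hn
    have hn' : (n : ℝ) ≠ 0 := by positivity
    have hnorm : ‖a ^ (2 * n)‖ ≤ 2 * C * (‖a ^ n‖ * ‖ι a ^ n‖) := by
      have := h (a ^ n) (a ^ n)
      rw [← pow_add, ← two_mul, map_pow] at this
      linarith
    have hnn : (‖a ^ (2 * n)‖₊ : ℝ≥0∞) ≤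
        ENNReal.ofReal (2 * C) * ((‖a ^ n‖₊ : ℝ≥0∞) * (‖ι a ^ n‖₊ : ℝ≥0∞)) := by
      have := ENNReal.ofReal_le_ofReal hnorm
      rwa [ENNReal.ofReal_mul (by positivity), ENNReal.ofReal_mul (norm_nonneg _),
        ofReal_norm, ofReal_norm, ofReal_norm] at this
    have hexp : (1 / (2 * n : ℕ) : ℝ) * (2 : ℕ) = 1 / n := by
      push_cast
      field_simp
    rw [← ENNReal.rpow_mul_natCast, hexp, ← ENNReal.mul_rpow_of_nonneg _ _ (by positivity),
      ← ENNReal.mul_rpow_of_nonneg _ _ (by positivity)]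
    exact ENNReal.rpow_le_rpow hnn (by positivity)
  have hlim : spectralRadius ℂ a ^ 2 ≤
      1 * (spectralRadius ℂ a * spectralRadius ℂ (ι a)) := by
    refine le_of_tendsto_of_tendsto
      (ENNReal.Tendsto.pow (hA.comp (tendsto_id.const_mul_atTop' two_pos)))
      (ENNReal.Tendsto.mul hK (Or.inl one_ne_zero)
        (ENNReal.Tendsto.mul hA (Or.inr hfb) hB (Or.inr hfa)) (Or.inr ENNReal.one_ne_top)) ?_
    filter_upwards [eventually_gt_atTop 0] with n hn using hsq n hn
  rcases eq_or_ne (spectralRadius ℂ a) 0 with h0 | h0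
  · simp [h0]
  · rw [one_mul, sq] at hlim
    exact (ENNReal.mul_le_mul_iff_right h0 hfa).mp hlim
end
end

section
/- Hulanicki's Lemma: Let B be a symmetric unital Banach *-algebra over ℂ, let A be a unital Banach *-algebra, and let ι : A → B be an injective, continuous, unital *-homomorphism (so A is a Banach *-subalgebra of B with common unit and involution). Then the following are equivalent: (1) A is inverse-closed in B, i.e. for every a ∈ A, if ι(a) is invertible in B then a is invertible in A; (2) ρ_A(a) = ρ_B(ι(a)) for every self-adjoint a = a* in A, where ρ denotes the spectral radius. -/
open scoped ENNReal

noncomputable section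

/-!
Inverse-closedness makes `σ_A(a) = σ_B(ι a)` for every `a`, so the spectral radii agree.

Conversely, let `ι a` be invertible. Symmetry of `B` puts the spectrum of the invertible element
`ι (a* a)` inside `(0, M]` with `M = ‖ι (a* a)‖`, so with `R = M + 1` the spectrum of
`ι (R - a* a)` lies in `[1, R)`. As the spectrum is compact, `ρ_B(ι (R - a* a)) < R`. Since
`R - a* a` is self-adjoint, equality of spectral radii gives `ρ_A(R - a* a) < R`, so
`a* a = R - (R - a* a)` is invertible in `A`. The same applied to `a*` makes `a a*` invertible,
hence `a` has a left and a right inverse.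
-/

/-- An invertible element with spectrum in `[0, ∞)` is, after reflection `b ↦ R - b` at a large
`R > 0`, of spectral radius less than `R`. -/
theorem exists_spectralRadius_sub_lt {B : Type*}
    [NormedRing B] [NormedAlgebra ℂ B] [CompleteSpace B] [NormOneClass B] (b : B)
    (hb : IsUnit b) (hpos : spectrum ℂ b ⊆ {z : ℂ | ∃ x : ℝ, 0 ≤ x ∧ z = (x : ℂ)}) :
    ∃ R : ℝ, spectralRadius ℂ (algebraMap ℂ B R - b) < ‖(R : ℂ)‖₊ := by
  have : Nontrivial B := NormOneClass.nontrivial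
  refine ⟨‖b‖ + 1, ?_⟩
  obtain ⟨k, hk, hkr⟩ :=
    spectrum.exists_nnnorm_eq_spectralRadius (algebraMap ℂ B ((‖b‖ + 1 : ℝ) : ℂ) - b)
  rw [← hkr]
  rw [← spectrum.singleton_sub_eq, Set.singleton_sub] at hk
  obtain ⟨z, hz, rfl⟩ := hk
  obtain ⟨x, hx, rfl⟩ := hpos hz
  have hle := spectrum.norm_le_norm_of_mem hz
  rw [Complex.norm_real, Real.norm_of_nonneg hx] at hle
  have hx0 : x ≠ 0 := by
    rintro rfl
    exact spectrum.ne_zero_of_mem_of_unit (a := hb.unit) hz (by simp)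
  have hx' : 0 < x := lt_of_le_of_ne hx hx0.symm
  rw [ENNReal.coe_lt_coe, ← NNReal.coe_lt_coe, coe_nnnorm, coe_nnnorm]
  beta_reduce
  rw [← Complex.ofReal_sub, Complex.norm_real, Complex.norm_real, Real.norm_of_nonneg (by linarith),
    Real.norm_of_nonneg (by positivity)]
  linarith

/-- **Hulanicki's Lemma.** Let `B` be a symmetric unital Banach *-algebra,
`A` a unital Banach *-algebra, and `ι : A → B` an injective continuous unital
*-homomorphism. Then `A` is inverse-closed in `B` (every `a ∈ A` with `ι(a)` invertible in
`B` is invertible in `A`) if and only if the spectral radii of self-adjoint elements agree: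
`ρ_A(a) = ρ_B(ι(a))` whenever `a = a*`. -/
theorem hulanicki_lemma
    {A B : Type*}
    [NormedRing A] [NormedAlgebra ℂ A] [CompleteSpace A] [NormOneClass A]
    [StarRing A] [StarModule ℂ A]
    [NormedRing B] [NormedAlgebra ℂ B] [CompleteSpace B] [NormOneClass B]
    [StarRing B] [StarModule ℂ B]
    (hsym : ∀ b : B, spectrum ℂ (star b * b) ⊆ {z : ℂ | ∃ x : ℝ, 0 ≤ x ∧ z = (x : ℂ)})
    (ι : A →⋆ₐ[ℂ] B)
    (hinj : Function.Injective ι)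
    (hcont : Continuous ι) :
    (∀ a : A, IsUnit (ι a) → IsUnit a) ↔
    (∀ a : A, star a = a → spectralRadius ℂ a = spectralRadius ℂ (ι a)) := by
  constructor
  · intro h a _
    have hs : spectrum ℂ a = spectrum ℂ (ι a) := by
      ext z
      rw [spectrum.mem_iff, spectrum.mem_iff, not_iff_not]
      have e : algebraMap ℂ B z - ι a = ι (algebraMap ℂ A z - a) := by
        rw [map_sub, AlgHomClass.commutes]
      rw [e]
      exact ⟨fun hu => hu.map ι, h _⟩
    simp only [spectralRadius, hs]
  · intro h
    have key : ∀ a : A, IsUnit (ι a) → IsUnit (star a * a) := by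
      intro a ha
      have hu : IsUnit (star (ι a) * ι a) := ha.star.mul ha
      obtain ⟨R, hR⟩ := exists_spectralRadius_sub_lt _ hu (hsym (ι a))
      have e : algebraMap ℂ B R - star (ι a) * ι a
          = ι (algebraMap ℂ A R - star a * a) := by
        rw [map_sub, AlgHomClass.commutes, map_mul, map_star]
      have hsa : star (algebraMap ℂ A R - star a * a) = algebraMap ℂ A R - star a * a := by
        rw [star_sub, star_mul, star_star, ← algebraMap_star_comm]
        simp
      rw [e, ← h _ hsa] at hR
      have := spectrum.mem_resolventSet_of_spectralRadius_lt hR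
      rw [spectrum.mem_resolventSet_iff, sub_sub_cancel] at this
      exact this
    intro a ha
    have h1 := key a ha
    have h2 := key (star a) (by rw [map_star]; exact ha.star)
    rw [star_star] at h2
    obtain ⟨l, hl⟩ := h1.exists_left_inv
    obtain ⟨r, hr⟩ := h2.exists_right_inv
    exact isUnit_iff_exists_and_exists.2
      ⟨⟨star a * r, by rw [← mul_assoc, hr]⟩, ⟨l * star a, by rw [mul_assoc, hl]⟩⟩
end
end
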